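/- arXiv:1803.03369 — 2 statements merged into one kernel-verified Lean document; each statement's English description precedes it below -/
import Mathlib

section
/- Let n ≥ 1 be an integer and let s > n/2. Suppose F : (0,∞) → ℂ is a bounded function admitting the representation F(λ) = ∫_ℝ h(u) λ^{iu} du for all λ > 0, where h : ℝ → ℂ is measurable with C_{h,s} = ∫_ℝ (1+|u|)^s |h(u)| du < ∞. Then for every 1 < r < ∞ there exists a constant C = C(n,r,s) such that for every Schwartz function f on ℝⁿ, ‖ sup_{t>0} | ∫_{ℝⁿ} F(t|ξ|²) f̂(ξ) e^{2πi⟨x,ξ⟩} dξ | ‖_{L^r(ℝⁿ, dx)} ≤ C · C_{h,s} · ‖f‖_{L^r(ℝⁿ)}. -/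
open MeasureTheory Complex Filter
open scoped FourierTransform RealInnerProductSpace ENNReal Topology

namespace MMax

/-- the constant in the Riesz kernel -/
noncomputable def gam (n : ℕ) (a : ℂ) : ℂ :=
  (Real.pi : ℂ) ^ (2 * a - (n : ℂ) / 2) * (Complex.Gamma ((n : ℂ) / 2 - a) * (Complex.Gamma a)⁻¹)

lemma gamma_half_bound (u : ℝ) (hu : u ≠ 0) :
    ‖Complex.Gamma (1 / 2 + I * u)‖ ≤ (1 + |u|) ^ ((1 : ℝ) / 2) * ‖Complex.Gamma (I * u)‖ := by
  have hI : (I * u : ℂ) ≠ 0 := mul_ne_zero I_ne_zero (by exact_mod_cast hu)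
  have e1 : ‖Complex.Gamma (1 / 2 + I * u)‖ ^ 2 * ‖Complex.cosh (Real.pi * u)‖ = Real.pi := by
    have h := Complex.Gamma_mul_Gamma_one_sub (1 / 2 + I * u)
    have h2 : (1 - (1 / 2 + I * u) : ℂ) = (starRingEnd ℂ) (1 / 2 + I * u) := by
      apply Complex.ext <;> simp; norm_num
    rw [h2, Complex.Gamma_conj, Complex.mul_conj] at h
    have h3 : Complex.sin (Real.pi * (1 / 2 + I * u)) = Complex.cosh (Real.pi * u) := by
      rw [show (Real.pi * (1 / 2 + I * u) : ℂ) = (Real.pi * u) * I + Real.pi / 2 by ring,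
        Complex.sin_add_pi_div_two, Complex.cos_mul_I]
    rw [h3] at h
    have hc : Complex.cosh (Real.pi * u) ≠ 0 := by
      rw [← Complex.ofReal_mul, ← Complex.ofReal_cosh]
      exact_mod_cast (Real.cosh_pos _).ne'
    rw [eq_div_iff hc] at h
    have := congrArg norm h
    rw [norm_mul, Complex.norm_real, Complex.norm_real, Complex.normSq_eq_norm_sq,
      Real.norm_of_nonneg (sq_nonneg _), Real.norm_of_nonneg Real.pi_pos.le] at this
    exact this
  have e2 : ‖Complex.Gamma (I * u)‖ ^ 2 * (|u| * ‖Complex.sinh (Real.pi * u)‖) = Real.pi := by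
    have h := Complex.Gamma_mul_Gamma_one_sub (I * u)
    have h2 : (1 - (I * u) : ℂ) = (-(I * u)) + 1 := by ring
    rw [h2, Complex.Gamma_add_one _ (neg_ne_zero.2 hI)] at h
    have h4 : (-(I * u) : ℂ) = (starRingEnd ℂ) (I * u) := by simp
    have h3 : Complex.sin (Real.pi * (I * u)) = Complex.sinh (Real.pi * u) * I := by
      rw [show (Real.pi * (I * u) : ℂ) = (Real.pi * u) * I by ring, Complex.sin_mul_I]
    rw [h3] at h
    have hc : Complex.sinh (Real.pi * u) * I ≠ 0 := by
      refine mul_ne_zero ?_ I_ne_zero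
      rw [← Complex.ofReal_mul, ← Complex.ofReal_sinh]
      have : Real.sinh (Real.pi * u) ≠ 0 := by
        rw [Ne, Real.sinh_eq_zero]; exact mul_ne_zero Real.pi_ne_zero hu
      exact_mod_cast this
    rw [eq_div_iff hc] at h
    have := congrArg norm h
    rw [h4, Complex.Gamma_conj] at this
    simp only [norm_mul, RCLike.norm_conj, Complex.norm_real, Complex.norm_I] at this
    rw [Real.norm_of_nonneg Real.pi_pos.le, Real.norm_eq_abs] at this
    refine Eq.trans ?_ this; ring
  have e3 : ‖Complex.sinh (Real.pi * u)‖ ≤ ‖Complex.cosh (Real.pi * u)‖ := by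
    rw [← Complex.ofReal_mul, ← Complex.ofReal_sinh, ← Complex.ofReal_cosh, Complex.norm_real,
      Complex.norm_real, Real.norm_eq_abs, Real.norm_eq_abs]
    apply sq_le_sq.1
    rw [Real.cosh_sq]; linarith
  have hcpos : 0 < ‖Complex.cosh (Real.pi * u)‖ := by
    rcases (norm_nonneg (Complex.cosh (Real.pi * u))).eq_or_lt with h | h
    · rw [← h, mul_zero] at e1; exact absurd e1.symm Real.pi_ne_zero
    · exact h
  have key : ‖Complex.Gamma (1 / 2 + I * u)‖ ^ 2 ≤ (1 + |u|) * ‖Complex.Gamma (I * u)‖ ^ 2 := by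
    refine le_of_mul_le_mul_right ?_ hcpos
    rw [e1]
    refine e2.symm.le.trans ?_
    have h0 : 0 ≤ ‖Complex.Gamma (I * u)‖ ^ 2 := sq_nonneg _
    have h1 : |u| * ‖Complex.sinh (Real.pi * u)‖ ≤ (1 + |u|) * ‖Complex.cosh (Real.pi * u)‖ := by
      apply mul_le_mul (by linarith) e3 (norm_nonneg _) (by positivity)
    nlinarith
  have h1 : ((1 + |u|) ^ ((1 : ℝ) / 2)) ^ 2 = 1 + |u| := by
    rw [← Real.rpow_natCast, ← Real.rpow_mul (by positivity)]; norm_num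
  refine le_of_sq_le_sq ?_ (by positivity)
  rw [mul_pow, h1]; exact key

lemma gamma_bound (n : ℕ) : ∃ C : ℝ, 0 < C ∧ ∀ u : ℝ, u ≠ 0 →
    ‖Complex.Gamma ((n : ℂ) / 2 + I * u)‖ ≤
      C * (1 + |u|) ^ ((n : ℝ) / 2) * ‖Complex.Gamma (I * u)‖ := by
  induction n using Nat.twoStepInduction with
  | zero => exact ⟨1, one_pos, fun u hu => by simp⟩
  | one => exact ⟨1, one_pos, fun u hu => by simpa using gamma_half_bound u hu⟩
  | more n ih _ =>
    obtain ⟨C, hC, h⟩ := ih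
    refine ⟨((n : ℝ) / 2 + 1) * C, by positivity, fun u hu => ?_⟩
    have hz : ((n : ℂ) / 2 + I * u) ≠ 0 := by
      intro h0
      have := congrArg Complex.im h0
      simp at this
      exact hu this
    have e : (((n + 2 : ℕ) : ℂ) / 2 + I * u) = ((n : ℂ) / 2 + I * u) + 1 := by push_cast; ring
    rw [e, Complex.Gamma_add_one _ hz, norm_mul]
    have h1 : ‖((n : ℂ) / 2 + I * u)‖ ≤ ((n : ℝ) / 2 + 1) * (1 + |u|) := by
      refine (norm_add_le _ _).trans ?_
      simp only [norm_div, Complex.norm_natCast, norm_mul, Complex.norm_I, Complex.norm_real,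
        Real.norm_eq_abs, Complex.norm_ofNat]
      nlinarith [abs_nonneg u, mul_nonneg (Nat.cast_nonneg (α := ℝ) n) (abs_nonneg u)]
    have e2 : (1 + |u|) ^ (((n + 2 : ℕ) : ℝ) / 2) = (1 + |u|) ^ ((n : ℝ) / 2) * (1 + |u|) := by
      rw [show (((n + 2 : ℕ) : ℝ) / 2) = (n : ℝ) / 2 + 1 by push_cast; ring,
        Real.rpow_add_one (by positivity)]
    rw [e2]
    calc _ ≤ ((n : ℝ) / 2 + 1) * (1 + |u|) * (C * (1 + |u|) ^ ((n : ℝ) / 2) * ‖Complex.Gamma (I * u)‖) :=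
          mul_le_mul h1 (h u hu) (norm_nonneg _) (by positivity)
      _ = _ := by ring

lemma gam_bound (n : ℕ) : ∃ C : ℝ, 0 < C ∧ ∀ u : ℝ,
    ‖gam n (-(I * u))‖ ≤ C * (1 + |u|) ^ ((n : ℝ) / 2) := by
  obtain ⟨C, hC, h⟩ := gamma_bound n
  refine ⟨Real.pi ^ (-((n : ℝ) / 2)) * C, by positivity, fun u => ?_⟩
  by_cases hu : u = 0
  · subst hu
    simp only [gam, ofReal_zero, mul_zero, neg_zero, Complex.Gamma_zero, inv_zero, norm_zero]
    positivity
  have hI : (I * u : ℂ) ≠ 0 := mul_ne_zero I_ne_zero (by exact_mod_cast hu)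
  have h4 : (-(I * u) : ℂ) = (starRingEnd ℂ) (I * u) := by simp
  have hG : Complex.Gamma (I * u) ≠ 0 := by
    apply Complex.Gamma_ne_zero
    intro m h0
    have := congrArg Complex.im h0
    simp at this; exact hu this
  unfold gam
  rw [norm_mul, norm_mul, sub_neg_eq_add, norm_inv]
  have e1 : ‖Complex.Gamma (-(I * u))‖ = ‖Complex.Gamma (I * u)‖ := by
    rw [h4, Complex.Gamma_conj, RCLike.norm_conj]
  have e2 : ‖(Real.pi : ℂ) ^ (2 * -(I * (u:ℂ)) - (n : ℂ) / 2)‖ = Real.pi ^ (-((n : ℝ) / 2)) := by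
    rw [Complex.norm_cpow_eq_rpow_re_of_pos Real.pi_pos]
    congr 1
    simp
  rw [e1, e2]
  have hGp : 0 < ‖Complex.Gamma (I * u)‖ := norm_pos_iff.2 hG
  rw [mul_assoc]
  refine mul_le_mul_of_nonneg_left ?_ (by positivity)
  rw [← div_eq_mul_inv, div_le_iff₀ hGp]
  exact h u hu

lemma gam_tendsto (n : ℕ) (hn : 1 ≤ n) (u : ℝ) :
    Tendsto (fun δ : ℝ => gam n (δ - I * u)) (𝓝[>] 0) (𝓝 (gam n (-(I * u)))) := by
  have hpi : (Real.pi : ℂ) ≠ 0 := by exact_mod_cast Real.pi_ne_zero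
  have hc : ContinuousAt (gam n) (-(I * u)) := by
    unfold gam
    refine ContinuousAt.mul ?_ (ContinuousAt.mul ?_ ?_)
    · exact ContinuousAt.const_cpow (by fun_prop) (Or.inl hpi)
    · have : ContinuousAt Complex.Gamma ((n : ℂ) / 2 - -(I * u)) := by
        apply (Complex.differentiableAt_Gamma _ _).continuousAt
        intro m h0
        have h1 := congrArg Complex.re h0
        simp at h1
        have : (1 : ℝ) ≤ n := by exact_mod_cast hn
        have : (0 : ℝ) ≤ m := Nat.cast_nonneg m
        linarith
      exact ContinuousAt.comp (f := fun a : ℂ => (n : ℂ) / 2 - a) this (by fun_prop)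
    · exact Complex.differentiable_one_div_Gamma.continuous.continuousAt
  refine (hc.tendsto.comp (f := fun δ : ℝ => ((δ : ℂ) - I * u)) ?_)
  have : Tendsto (fun δ : ℝ => ((δ : ℂ) - I * u)) (𝓝 0) (𝓝 (((0 : ℝ) : ℂ) - I * u)) :=
    Continuous.tendsto (by fun_prop) 0
  simp only [ofReal_zero, zero_sub] at this
  exact this.mono_left nhdsWithin_le_nhds

end MMax

namespace MMax

abbrev EE (n : ℕ) := EuclideanSpace ℝ (Fin n)

/-- Riesz-type kernel -/
noncomputable def ker (n : ℕ) (a : ℂ) (x : EE n) : ℂ := gam n a * ((‖x‖ : ℝ) : ℂ) ^ (2 * a - n)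

lemma measurable_ker (n : ℕ) (a : ℂ) : Measurable (ker n a) := by
  unfold ker
  fun_prop

lemma norm_cpow_le (r : ℝ) (hr : 0 ≤ r) (w : ℂ) (hw : w ≠ 0) : ‖(r : ℂ) ^ w‖ ≤ r ^ w.re := by
  rcases hr.eq_or_lt with h | h
  · subst h
    rw [ofReal_zero, Complex.zero_cpow hw, norm_zero]
    exact Real.rpow_nonneg le_rfl _
  · exact (Complex.norm_cpow_eq_rpow_re_of_pos h w).le

lemma ball_int (n : ℕ) (hn : 1 ≤ n) (s : ℝ) (hs : s < n) :
    ∫⁻ y in Metric.ball (0 : EE n) 1, ENNReal.ofReal (‖y‖ ^ (-s)) < ∞ := by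
  have hm : Measurable (fun y : EE n => ‖y‖ ^ (-s)) := by fun_prop
  have := integrableOn_ball_of_norm_le_rpow (μ := (volume : Measure (EE n))) (by simpa using hn) (f := fun y : EE n => ‖y‖ ^ (-s)) (C := 1) (α := s) (r := 1)
    (by simpa using hs) (ae_of_all _ fun x => by
      rw [one_mul, Real.norm_of_nonneg (by positivity)]) hm.aestronglyMeasurable
  have h2 := this.2
  rw [hasFiniteIntegral_iff_ofReal (ae_of_all _ fun x => by positivity)] at h2
  exact h2

/-- uniform bound for Riesz potentials of bounded integrable functions -/
lemma lint_riesz (n : ℕ) (hn : 1 ≤ n) (s : ℝ) (hs0 : 0 ≤ s) (hs : s < n) (g : EE n → ℂ)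
    (hg : AEStronglyMeasurable g volume) (M : ℝ) (hM : ∀ x, ‖g x‖ ≤ M) (x : EE n) :
    ∫⁻ y, ENNReal.ofReal (‖x - y‖ ^ (-s)) * ‖g y‖ₑ ≤
      (∫⁻ y in Metric.ball (0 : EE n) 1, ENNReal.ofReal (‖y‖ ^ (-s))) * ENNReal.ofReal M
        + ∫⁻ y, ‖g y‖ₑ := by
  have h1 : ∀ y, ENNReal.ofReal (‖x - y‖ ^ (-s)) * ‖g y‖ₑ ≤
      (Metric.ball (0 : EE n) 1).indicator (fun z => ENNReal.ofReal (‖z‖ ^ (-s))) (x - y)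
        * ENNReal.ofReal M + ‖g y‖ₑ := by
    intro y
    by_cases hy : x - y ∈ Metric.ball (0 : EE n) 1
    · rw [Set.indicator_of_mem hy]
      refine le_add_right ?_
      gcongr
      rw [← ofReal_norm]
      exact ENNReal.ofReal_le_ofReal (hM y)
    · rw [Set.indicator_of_notMem hy, zero_mul, zero_add]
      refine mul_le_of_le_one_left (by positivity) ?_
      rw [ENNReal.ofReal_le_one]
      rw [mem_ball_zero_iff, not_lt] at hy
      exact Real.rpow_le_one_of_one_le_of_nonpos hy (by linarith)
  refine (lintegral_mono h1).trans ?_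
  have hmi : Measurable ((Metric.ball (0 : EE n) 1).indicator
      (fun z : EE n => ENNReal.ofReal (‖z‖ ^ (-s)))) :=
    Measurable.indicator (by fun_prop) measurableSet_ball
  rw [lintegral_add_right' _ hg.enorm, lintegral_mul_const' _ _ ENNReal.ofReal_ne_top,
    lintegral_sub_left_eq_self (μ := (volume : Measure (EE n))) ((Metric.ball (0 : EE n) 1).indicator
      (fun z : EE n => ENNReal.ofReal (‖z‖ ^ (-s)))) x,
    lintegral_indicator measurableSet_ball]

lemma integrable_riesz (n : ℕ) (hn : 1 ≤ n) (s : ℝ) (hs0 : 0 ≤ s) (hs : s < n) (g : EE n → ℂ)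
    (hg : Integrable g) (M : ℝ) (hM : ∀ x, ‖g x‖ ≤ M) (x : EE n) :
    Integrable (fun y => ‖x - y‖ ^ (-s) * ‖g y‖) := by
  have hm : Measurable (fun y : EE n => ‖x - y‖ ^ (-s)) := by fun_prop
  refine ⟨hm.aestronglyMeasurable.mul hg.1.norm, ?_⟩
  rw [hasFiniteIntegral_iff_ofReal (ae_of_all _ fun x => by positivity)]
  have := lint_riesz n hn s hs0 hs g hg.1 M hM x
  have h2 : ∫⁻ y, ENNReal.ofReal (‖x - y‖ ^ (-s) * ‖g y‖) =
      ∫⁻ y, ENNReal.ofReal (‖x - y‖ ^ (-s)) * ‖g y‖ₑ := by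
    congr 1; ext y
    rw [ENNReal.ofReal_mul (by positivity), ofReal_norm]
  rw [h2]
  refine this.trans_lt ?_
  have hf := hg.2
  exact ENNReal.add_lt_top.2 ⟨ENNReal.mul_lt_top (ball_int n hn s hs) ENNReal.ofReal_lt_top, hf⟩

lemma fourier_flip {n : ℕ} (f g : EE n → ℂ) (hf : Integrable f) (hg : Integrable g) :
    ∫ ξ, 𝓕 f ξ * g ξ = ∫ x, f x * 𝓕 g x := by
  have := VectorFourier.integral_fourierIntegral_smul_eq_flip (L := innerₗ (EE n))
    Real.continuous_fourierChar continuous_inner hf hg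
  rwa [flip_innerₗ] at this

lemma gint (c : ℂ) (hc : 0 < c.re) (r : ℝ) (hr : 0 < r) :
    IntegrableOn (fun t : ℝ => (t : ℂ) ^ (c - 1) * cexp (-(r * t))) (Set.Ioi 0) ∧
    ∫ t in Set.Ioi (0:ℝ), ‖(t : ℂ) ^ (c - 1) * cexp (-(r * t))‖ = (1 / r) ^ c.re * Real.Gamma c.re := by
  have e : ∀ t ∈ Set.Ioi (0:ℝ), ‖(t : ℂ) ^ (c - 1) * cexp (-(r * t))‖ =
      t ^ (c.re - 1) * Real.exp (-(r * t)) := by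
    intro t ht
    rw [norm_mul, Complex.norm_cpow_eq_rpow_re_of_pos ht, Complex.norm_exp]
    simp
  have h2 : ∫ t in Set.Ioi (0:ℝ), ‖(t : ℂ) ^ (c - 1) * cexp (-(r * t))‖ = (1 / r) ^ c.re * Real.Gamma c.re := by
    rw [setIntegral_congr_fun measurableSet_Ioi e]
    exact Real.integral_rpow_mul_exp_neg_mul_Ioi hc hr
  refine ⟨?_, h2⟩
  have h3 : IntegrableOn (fun t : ℝ => ‖(t : ℂ) ^ (c - 1) * cexp (-(r * t))‖) (Set.Ioi 0) := by
    apply Integrable.of_integral_ne_zero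
    rw [h2]
    have := Real.Gamma_pos_of_pos hc
    positivity
  refine (integrable_norm_iff ?_).1 h3
  exact Measurable.aestronglyMeasurable (by fun_prop)

lemma subord {n : ℕ} (c : ℂ) (hc : 0 < c.re) (ψ : EE n → ℂ) (hψ : AEStronglyMeasurable ψ volume)
    (d : EE n → ℝ) (hd : Measurable d) (hd0 : ∀ᵐ y, 0 < d y)
    (hi : Integrable (fun y => d y ^ (-c.re) * ‖ψ y‖)) :
    ∫ t in Set.Ioi (0:ℝ), ∫ y, (t : ℂ) ^ (c - 1) * cexp (-(d y * t)) * ψ y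
      = ∫ y, (1 / (d y : ℂ)) ^ c * Complex.Gamma c * ψ y := by
  rw [integral_integral_swap]
  · refine integral_congr_ae ?_
    filter_upwards [hd0] with y hy
    rw [integral_mul_const, Complex.integral_cpow_mul_exp_neg_mul_Ioi hc hy]
  · have hm : AEStronglyMeasurable (Function.uncurry fun (t : ℝ) (y : EE n) => (t : ℂ) ^ (c - 1) * cexp (-(d y * t)) * ψ y)
        ((volume.restrict (Set.Ioi 0)).prod volume) := by
      refine AEStronglyMeasurable.mul ?_ (hψ.comp_snd)
      exact Measurable.aestronglyMeasurable (by fun_prop)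
    rw [integrable_prod_iff' hm]
    constructor
    · filter_upwards [hd0] with y hy
      exact (gint c hc (d y) hy).1.mul_const (ψ y)
    · have : (fun y => ‖Real.Gamma c.re‖ * (d y ^ (-c.re) * ‖ψ y‖)) =ᵐ[volume] (fun y => ∫ t in Set.Ioi (0:ℝ), ‖(t : ℂ) ^ (c - 1) * cexp (-(d y * t)) * ψ y‖) := by
        filter_upwards [hd0] with y hy
        simp_rw [norm_mul _ (ψ y)]
        rw [integral_mul_const, (gint c hc (d y) hy).2, one_div, Real.inv_rpow hy.le,
          Real.rpow_neg hy.le, Real.norm_of_nonneg (Real.Gamma_pos_of_pos hc).le]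
        ring
      exact (hi.const_mul _).congr this

end MMax

namespace MMax

lemma schwartz_bdd {n : ℕ} (f : SchwartzMap (EE n) ℂ) : ∃ M : ℝ, ∀ x, ‖f x‖ ≤ M := by
  obtain ⟨C, hC⟩ := f.decay 0 0
  exact ⟨C, fun x => by simpa using hC.2 x⟩

lemma ae_norm_pos (n : ℕ) (hn : 1 ≤ n) (x : EE n) : ∀ᵐ y : EE n, 0 < ‖x - y‖ := by
  have : Nontrivial (EE n) := by
    apply Module.nontrivial_of_finrank_pos (R := ℝ); simp; omega
  have : ∀ᵐ y : EE n, y ≠ x := by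
    simp [ae_iff]
  filter_upwards [this] with y hy
  rw [norm_pos_iff, sub_ne_zero]; exact hy.symm

lemma gauss_id {n : ℕ} (φ : SchwartzMap (EE n) ℂ) (x : EE n) (t : ℝ) (ht : 0 < t) :
    ∫ ξ, cexp (-(((Real.pi * ‖ξ‖ ^ 2 : ℝ) : ℂ) * t)) * (𝓕 (φ : EE n → ℂ) ξ *
        cexp (2 * Real.pi * I * (⟪x, ξ⟫ : ℝ)))
      = (t : ℂ) ^ (-((n : ℂ) / 2)) • ∫ y, cexp (-(((Real.pi * ‖x - y‖ ^ 2 : ℝ) : ℂ) * (t⁻¹ : ℝ))) * φ y := by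
  have hb : 0 < ((Real.pi * t : ℝ) : ℂ).re := by rw [ofReal_re]; positivity
  have h1 := fourier_gaussian_innerProductSpace' hb x
  have hi : Integrable (fun v : EE n ↦ cexp (-((Real.pi * t : ℝ) : ℂ) * ‖v‖ ^ 2 + 2 * Real.pi * I * (⟪x, v⟫ : ℝ))) :=
    GaussianFourier.integrable_cexp_neg_mul_sq_norm_add hb _ _
  have h2 := fourier_flip (φ : EE n → ℂ) _ φ.integrable hi
  rw [← integral_smul]
  calc _ = ∫ ξ, 𝓕 (φ : EE n → ℂ) ξ * cexp (-((Real.pi * t : ℝ) : ℂ) * ‖ξ‖ ^ 2 + 2 * Real.pi * I * (⟪x, ξ⟫ : ℝ)) := by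
        congr 1; ext ξ
        rw [Complex.exp_add]
        push_cast
        rw [show (-(↑Real.pi * (‖ξ‖:ℂ) ^ 2 * t) : ℂ) = -(↑Real.pi * ↑t) * ↑‖ξ‖ ^ 2 by ring]
        ring
    _ = _ := by
        rw [h2]
        congr 1; ext y
        rw [h1]
        have e : ((Real.pi : ℂ) / ((Real.pi * t : ℝ) : ℂ)) = ((t⁻¹ : ℝ) : ℂ) := by
          have : (Real.pi : ℂ) ≠ 0 := by exact_mod_cast Real.pi_ne_zero
          have : (t : ℂ) ≠ 0 := by exact_mod_cast ht.ne'
          push_cast; field_simp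
        rw [e]
        have e2 : ((t⁻¹ : ℝ) : ℂ) ^ ((Module.finrank ℝ (EE n) : ℂ) / 2) = (t : ℂ) ^ (-((n : ℂ) / 2)) := by
          rw [ofReal_inv, Complex.inv_cpow, Complex.cpow_neg]
          · simp
          · rw [Complex.arg_ofReal_of_nonneg ht.le]; exact Real.pi_ne_zero.symm
        rw [e2, smul_eq_mul]
        have e3 : (-(Real.pi : ℂ) ^ 2 * (‖x - y‖ : ℂ) ^ 2 / ((Real.pi * t : ℝ) : ℂ)) = (-(((Real.pi * ‖x - y‖ ^ 2 : ℝ) : ℂ) * (t⁻¹ : ℝ))) := by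
          have : (Real.pi : ℂ) ≠ 0 := by exact_mod_cast Real.pi_ne_zero
          have : (t : ℂ) ≠ 0 := by exact_mod_cast ht.ne'
          push_cast; field_simp
        rw [e3]; ring

lemma inv_sq_cpow (r : ℝ) (hr : 0 < r) (c : ℂ) :
    (1 / ((Real.pi * r ^ 2 : ℝ) : ℂ)) ^ c = (Real.pi : ℂ) ^ (-c) * (r : ℂ) ^ (-(2 * c)) := by
  have h1 : (1 / ((Real.pi * r ^ 2 : ℝ) : ℂ)) = ((Real.pi⁻¹ : ℝ) : ℂ) * ((r⁻¹ * r⁻¹ : ℝ) : ℂ) := by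
    push_cast
    have : (Real.pi : ℂ) ≠ 0 := by exact_mod_cast Real.pi_ne_zero
    have : (r : ℂ) ≠ 0 := by exact_mod_cast hr.ne'
    field_simp
  rw [h1, Complex.mul_cpow_ofReal_nonneg (by positivity) (by positivity), ofReal_mul,
    Complex.mul_cpow_ofReal_nonneg (by positivity) (by positivity), ofReal_inv, ofReal_inv,
    Complex.inv_cpow, Complex.inv_cpow, ← Complex.cpow_neg, ← Complex.cpow_neg,
    ← Complex.cpow_add _ _ (by exact_mod_cast hr.ne')]
  · congr 2; ring
  · rw [Complex.arg_ofReal_of_nonneg hr.le]; exact Real.pi_ne_zero.symm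
  · rw [Complex.arg_ofReal_of_nonneg Real.pi_pos.le]; exact Real.pi_ne_zero.symm

lemma sq_int_aux (n : ℕ) (hn : 1 ≤ n) (s : ℝ) (hs0 : 0 < s) (hs : 2 * s < n) (g : EE n → ℂ)
    (hg : Integrable g) (M : ℝ) (hM : ∀ x, ‖g x‖ ≤ M) (x : EE n) :
    Integrable (fun y => (Real.pi * ‖x - y‖ ^ 2) ^ (-s) * ‖g y‖) := by
  have := (integrable_riesz n hn (2 * s) (by linarith) hs g hg M hM x).const_mul (Real.pi ^ (-s))
  refine this.congr (ae_of_all _ fun y => ?_)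
  simp only
  rw [Real.mul_rpow Real.pi_pos.le (by positivity), ← Real.rpow_natCast, ← Real.rpow_mul (by positivity),
    show ((2 : ℕ) : ℝ) * (-s) = -(2 * s) by push_cast; ring]
  ring

lemma norm_char (r : ℝ) : ‖cexp (2 * Real.pi * I * (r : ℝ))‖ = 1 := by
  rw [show (2 * Real.pi * I * (r : ℝ) : ℂ) = ((2 * Real.pi * r : ℝ) : ℂ) * I by push_cast; ring]
  exact Complex.norm_exp_ofReal_mul_I _

lemma riesz_id (n : ℕ) (hn : 1 ≤ n) (a : ℂ) (ha : 0 < a.re) (ha2 : 2 * a.re < n)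
    (φ : SchwartzMap (EE n) ℂ) (x : EE n) :
    ∫ ξ : EE n, ((‖ξ‖ : ℝ) : ℂ) ^ (-(2 * a)) * 𝓕 (φ : EE n → ℂ) ξ * cexp (2 * Real.pi * I * (⟪x, ξ⟫ : ℝ))
      = ∫ y, ker n a (x - y) * φ y := by
  have hpi : (Real.pi : ℂ) ≠ 0 := by exact_mod_cast Real.pi_ne_zero
  set c : ℂ := (n : ℂ) / 2 - a with hcdef
  have hcre : c.re = n / 2 - a.re := by simp [hcdef]
  have hc : 0 < c.re := by rw [hcre]; linarith
  have hc2 : 2 * c.re < n := by rw [hcre]; linarith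
  set ψ : EE n → ℂ := fun ξ => 𝓕 (φ : EE n → ℂ) ξ * cexp (2 * Real.pi * I * (⟪x, ξ⟫ : ℝ)) with hψ
  have hFi : Integrable (𝓕 (φ : EE n → ℂ)) := (𝓕 φ).integrable
  have hψn : ∀ ξ, ‖ψ ξ‖ = ‖𝓕 (φ : EE n → ℂ) ξ‖ := fun ξ => by rw [hψ, norm_mul, norm_char, mul_one]
  have hψm : AEStronglyMeasurable ψ volume := by
    refine hFi.1.mul (Continuous.aestronglyMeasurable ?_)
    fun_prop
  have hψi : Integrable ψ := (integrable_norm_iff hψm).1 (hFi.norm.congr (ae_of_all _ fun ξ => (hψn ξ).symm))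
  obtain ⟨M1, hM1⟩ := schwartz_bdd (𝓕 φ)
  obtain ⟨M2, hM2⟩ := schwartz_bdd φ
  have S1 := subord a ha ψ hψm (fun ξ => Real.pi * ‖ξ‖ ^ 2) (by fun_prop)
    (by
      filter_upwards [ae_norm_pos n hn 0] with y hy
      rw [zero_sub, norm_neg] at hy; positivity)
    (by
      have := sq_int_aux n hn a.re ha ha2 ψ hψi M1 (fun ξ => (hψn ξ).trans_le (hM1 ξ)) 0
      simpa only [zero_sub, norm_neg] using this)
  have S2 := subord c hc φ φ.continuous.aestronglyMeasurable (fun y => Real.pi * ‖x - y‖ ^ 2) (by fun_prop)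
    (by
      filter_upwards [ae_norm_pos n hn x] with y hy
      positivity)
    (sq_int_aux n hn c.re hc hc2 φ φ.integrable M2 hM2 x)
  have key : ∫ t in Set.Ioi (0:ℝ), ∫ y, (t : ℂ) ^ (a - 1) * cexp (-(((Real.pi * ‖y‖ ^ 2 : ℝ) : ℂ) * t)) * ψ y
      = ∫ t in Set.Ioi (0:ℝ), ∫ y, (t : ℂ) ^ (c - 1) * cexp (-(((Real.pi * ‖x - y‖ ^ 2 : ℝ) : ℂ) * t)) * φ y := by
    set Ψ : ℝ → ℂ := fun t => ∫ y, cexp (-(((Real.pi * ‖x - y‖ ^ 2 : ℝ) : ℂ) * t)) * φ y with hΨ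
    have R : (∫ t in Set.Ioi (0:ℝ), ∫ y, (t : ℂ) ^ (c - 1) * cexp (-(((Real.pi * ‖x - y‖ ^ 2 : ℝ) : ℂ) * t)) * φ y) = mellin Ψ c := by
      unfold mellin
      congr 1; ext t
      rw [hΨ]; simp only [mul_assoc, integral_const_mul, smul_eq_mul]
    have Lh : (∫ t in Set.Ioi (0:ℝ), ∫ y, (t : ℂ) ^ (a - 1) * cexp (-(((Real.pi * ‖y‖ ^ 2 : ℝ) : ℂ) * t)) * ψ y) = mellin (fun t => (t : ℂ) ^ (-((n : ℂ) / 2)) • Ψ t⁻¹) a := by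
      unfold mellin
      refine setIntegral_congr_fun measurableSet_Ioi fun t ht => ?_
      simp only [mul_assoc, integral_const_mul, smul_eq_mul]
      congr 1
      exact gauss_id φ x t ht
    rw [R, Lh, mellin_cpow_smul, mellin_comp_inv]
    congr 1; rw [hcdef]; ring
  rw [S1, S2] at key
  have E1 : ∫ y, (1 / ((Real.pi * ‖y‖ ^ 2 : ℝ) : ℂ)) ^ a * Complex.Gamma a * ψ y =
      ((Real.pi : ℂ) ^ (-a) * Complex.Gamma a) * ∫ ξ : EE n, ((‖ξ‖ : ℝ) : ℂ) ^ (-(2 * a)) * 𝓕 (φ : EE n → ℂ) ξ * cexp (2 * Real.pi * I * (⟪x, ξ⟫ : ℝ)) := by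
    rw [← integral_const_mul]
    refine integral_congr_ae ?_
    filter_upwards [ae_norm_pos n hn 0] with y hy
    rw [zero_sub, norm_neg] at hy
    rw [inv_sq_cpow _ hy, hψ]; ring
  have E2 : ∫ y, (1 / ((Real.pi * ‖x - y‖ ^ 2 : ℝ) : ℂ)) ^ c * Complex.Gamma c * φ y =
      ((Real.pi : ℂ) ^ (-a) * Complex.Gamma a) * ∫ y, ker n a (x - y) * φ y := by
    rw [← integral_const_mul]
    refine integral_congr_ae ?_
    filter_upwards [ae_norm_pos n hn x] with y hy
    rw [inv_sq_cpow _ hy]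
    unfold ker gam
    have hG : Complex.Gamma a ≠ 0 := Complex.Gamma_ne_zero_of_re_pos ha
    have e1 : (Real.pi : ℂ) ^ (-c) = (Real.pi : ℂ) ^ (-a) * (Real.pi : ℂ) ^ (2 * a - (n : ℂ) / 2) := by
      rw [← Complex.cpow_add _ _ hpi]; congr 1; rw [hcdef]; ring
    rw [e1, show -(2 * c) = 2 * a - n by rw [hcdef]; ring, ← hcdef]
    field_simp
  rw [E1, E2] at key
  refine mul_left_cancel₀ ?_ key
  refine mul_ne_zero ?_ (Complex.Gamma_ne_zero_of_re_pos ha)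
  simp [Complex.cpow_eq_zero_iff, hpi]

end MMax

namespace MMax

lemma exists_cutoff (n : ℕ) (R : ℝ) (hR : 0 < R) :
    ∃ χ : EE n → ℂ, ContDiff ℝ (↑(⊤:ℕ∞)) χ ∧ HasCompactSupport χ ∧ (∀ x, ‖χ x‖ ≤ 1) ∧
      ∀ x ∈ Metric.closedBall (0 : EE n) R, χ x = 1 := by
  let b : ContDiffBump (0 : EE n) := ⟨R, R + 1, hR, by linarith⟩
  refine ⟨fun x => ((b x : ℝ) : ℂ), ?_, ?_, ?_, ?_⟩
  · exact Complex.ofRealCLM.contDiff.comp b.contDiff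
  · exact b.hasCompactSupport.comp_left (g := fun r : ℝ => (r : ℂ)) (by simp)
  · intro x
    rw [Complex.norm_real, Real.norm_of_nonneg b.nonneg]; exact b.le_one
  · intro x hx
    have : b x = 1 := b.one_of_mem_closedBall hx
    simp [this]

lemma schwartz_elp_mono {n : ℕ} (q : ℝ≥0∞) (φ' φ : SchwartzMap (EE n) ℂ) (h : ∀ x, ‖φ' x‖ ≤ ‖φ x‖) :
    (eLpNorm φ' q volume).toReal ≤ (eLpNorm φ q volume).toReal :=
  ENNReal.toReal_mono (φ.memLp q volume).2.ne (eLpNorm_mono h)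

lemma schwartz_of_cpt {n : ℕ} (χ : EE n → ℂ) (h1 : ContDiff ℝ (↑(⊤:ℕ∞)) χ) (h2 : HasCompactSupport χ) :
    ∃ φ : SchwartzMap (EE n) ℂ, ∀ x, φ x = χ x := ⟨h2.toSchwartzMap h1, fun _ => rfl⟩

lemma dual_ext {n : ℕ} (p q : ℝ) (hpq : p.HolderConjugate q) (G : EE n → ℂ)
    (hG : AEStronglyMeasurable G volume) (B : ℝ) (hB : ∀ x, ‖G x‖ ≤ B) (M : ℝ) (hM : 0 ≤ M)
    (h : ∀ φ : SchwartzMap (EE n) ℂ, ‖∫ x, G x * φ x‖ ≤ M * (eLpNorm φ (ENNReal.ofReal q) volume).toReal)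
    (R : ℝ) (hR : 0 < R) (ψ : EE n → ℂ) (hψ : MemLp ψ (ENNReal.ofReal q) volume)
    (hψ0 : ∀ x ∉ Metric.closedBall (0 : EE n) R, ψ x = 0) :
    ‖∫ x, G x * ψ x‖ ≤ M * (eLpNorm ψ (ENNReal.ofReal q) volume).toReal := by
  obtain ⟨χ, hχ, hχc, hχ1, hχR⟩ := exists_cutoff n R hR
  have hpq' : (ENNReal.ofReal p).HolderConjugate (ENNReal.ofReal q) := hpq.ennrealOfReal
  have : Fact (1 ≤ ENNReal.ofReal p) := ⟨by
    rw [← ENNReal.ofReal_one]; exact ENNReal.ofReal_le_ofReal hpq.lt.le⟩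
  have : Fact (1 ≤ ENNReal.ofReal q) := ⟨by
    rw [← ENNReal.ofReal_one]; exact ENNReal.ofReal_le_ofReal hpq.symm.lt.le⟩
  obtain ⟨χS, hχS⟩ := schwartz_of_cpt χ hχ hχc
  have hGχ : MemLp (fun x => G x * χ x) (ENNReal.ofReal p) volume := by
    refine MemLp.of_le_mul (c := B) (χS.memLp _) (hG.mul hχ.continuous.aestronglyMeasurable) ?_
    refine ae_of_all _ fun x => ?_
    rw [norm_mul, hχS]
    exact mul_le_mul_of_nonneg_right (hB x) (norm_nonneg _)
  obtain ⟨Λ, hΛd⟩ : ∃ Λ, Λ = (ContinuousLinearMap.mul ℂ ℂ).lpPairing volume (ENNReal.ofReal p) (ENNReal.ofReal q) hGχ.toLp := ⟨_, rfl⟩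
  have hΛ : ∀ ψ : Lp ℂ (ENNReal.ofReal q) (volume : Measure (EE n)), Λ ψ = ∫ x, G x * χ x * ψ x := by
    intro ψ
    rw [hΛd, ContinuousLinearMap.lpPairing_eq_integral]
    refine integral_congr_ae ?_
    filter_upwards [hGχ.coeFn_toLp] with x hx
    rw [hx]; rfl
  have hall : ∀ ψ : Lp ℂ (ENNReal.ofReal q) (volume : Measure (EE n)), ‖Λ ψ‖ ≤ M * ‖ψ‖ := by
    have hd := SchwartzMap.denseRange_toLpCLM (E := EE n) (F := ℂ) (μ := volume) (p := ENNReal.ofReal q) ENNReal.ofReal_ne_top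
    intro ψ
    refine hd.induction_on (p := fun ψ => ‖Λ ψ‖ ≤ M * ‖ψ‖) ψ ?_ ?_
    · exact isClosed_le (by fun_prop) (by fun_prop)
    · intro φ
      rw [hΛ, SchwartzMap.toLpCLM_apply]
      have hs : HasCompactSupport (fun x => χ x * φ x) := hχc.mul_right
      obtain ⟨φ', hφ'⟩ := schwartz_of_cpt _ (hχ.mul (φ.smooth ⊤)) hs
      have e : ∫ x, G x * χ x * (φ.toLp (ENNReal.ofReal q) volume) x = ∫ x, G x * φ' x := by
        refine integral_congr_ae ?_
        filter_upwards [φ.coeFn_toLp (ENNReal.ofReal q) volume] with x hx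
        rw [hx, mul_assoc, hφ' x]
      rw [e]
      refine (h φ').trans ?_
      rw [SchwartzMap.norm_toLp]
      refine mul_le_mul_of_nonneg_left (schwartz_elp_mono _ φ' φ fun x => ?_) hM
      rw [hφ', norm_mul]
      exact mul_le_of_le_one_left (norm_nonneg _) (hχ1 _)
  have := hall hψ.toLp
  rw [hΛ, Lp.norm_toLp] at this
  refine le_trans (le_of_eq ?_) this
  congr 1
  refine integral_congr_ae ?_
  filter_upwards [hψ.coeFn_toLp] with x hx
  rw [hx]
  by_cases hxR : x ∈ Metric.closedBall (0 : EE n) R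
  · rw [hχR x hxR, mul_one]
  · rw [hψ0 x hxR]; simp

lemma dual_lemma {n : ℕ} (p q : ℝ) (hpq : p.HolderConjugate q) (G : EE n → ℂ)
    (hG : AEStronglyMeasurable G volume) (B : ℝ) (hB : ∀ x, ‖G x‖ ≤ B) (M : ℝ) (hM : 0 ≤ M)
    (h : ∀ φ : SchwartzMap (EE n) ℂ, ‖∫ x, G x * φ x‖ ≤ M * (eLpNorm φ (ENNReal.ofReal q) volume).toReal) :
    ∫⁻ x, ‖G x‖ₑ ^ p ≤ ENNReal.ofReal (M ^ p) := by
  have hp := hpq.lt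
  have hq := hpq.symm.lt
  have hp0 : 0 < p := by linarith
  have hq0 : 0 < q := by linarith
  have hR : ∀ k : ℕ, ∫⁻ x in Metric.closedBall (0 : EE n) (k + 1), ‖G x‖ₑ ^ p ≤ ENNReal.ofReal (M ^ p) := by
    intro k
    set S := Metric.closedBall (0 : EE n) (k + 1) with hS
    have hSm : MeasurableSet S := measurableSet_closedBall
    set ψ : EE n → ℂ := S.indicator (fun x => (starRingEnd ℂ) (G x) * ((‖G x‖ ^ (p - 2) : ℝ) : ℂ)) with hψ
    have hnn : ∀ x, ‖(starRingEnd ℂ) (G x) * ((‖G x‖ ^ (p - 2) : ℝ) : ℂ)‖ = ‖G x‖ ^ (p - 1) := by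
      intro x
      rw [norm_mul, RCLike.norm_conj, Complex.norm_real, Real.norm_of_nonneg (by positivity)]
      rcases (norm_nonneg (G x)).eq_or_lt with h0 | h0
      · rw [← h0, zero_mul, Real.zero_rpow (by linarith)]
      · rw [← Real.rpow_one_add' h0.le (by linarith)]; congr 1; ring
    have hGG : ∀ x, G x * ((starRingEnd ℂ) (G x) * ((‖G x‖ ^ (p - 2) : ℝ) : ℂ)) = ((‖G x‖ ^ p : ℝ) : ℂ) := by
      intro x
      rw [← mul_assoc, Complex.mul_conj, ← ofReal_mul, Complex.normSq_eq_norm_sq]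
      congr 1
      rcases (norm_nonneg (G x)).eq_or_lt with h0 | h0
      · rw [← h0]; simp [hp0.ne']
      · rw [← Real.rpow_natCast, ← Real.rpow_add h0]; congr 1; push_cast; ring
    have hψm : AEStronglyMeasurable ψ volume := by
      refine AEStronglyMeasurable.indicator ?_ hSm
      refine AEStronglyMeasurable.mul ?_ ?_
      · exact Complex.continuous_conj.comp_aestronglyMeasurable hG
      · exact Complex.continuous_ofReal.comp_aestronglyMeasurable
          ((hG.norm.aemeasurable.pow_const _).aestronglyMeasurable)
    have hSfin : volume S < ∞ := (isCompact_closedBall _ _).measure_lt_top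
    set Il : ℝ≥0∞ := ∫⁻ x in S, ‖G x‖ₑ ^ p with hIl
    have hIfin : Il < ∞ := by
      have : Il ≤ ∫⁻ x in S, ENNReal.ofReal B ^ p := by
        refine lintegral_mono fun x => ?_
        gcongr
        rw [← ofReal_norm]; exact ENNReal.ofReal_le_ofReal (hB x)
      refine this.trans_lt ?_
      rw [lintegral_const]
      exact ENNReal.mul_lt_top (ENNReal.rpow_lt_top_of_nonneg hp0.le ENNReal.ofReal_ne_top)
        (by simpa using hSfin)
    have hψq : eLpNorm ψ (ENNReal.ofReal q) volume = Il ^ (1 / q) := by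
      rw [eLpNorm_eq_lintegral_rpow_enorm_toReal (by simpa using hq0) ENNReal.ofReal_ne_top,
        ENNReal.toReal_ofReal hq0.le]
      congr 1
      rw [hIl, ← lintegral_indicator hSm]
      congr 1; ext x
      by_cases hx : x ∈ S
      · rw [hψ, Set.indicator_of_mem hx, Set.indicator_of_mem hx, ← ofReal_norm, hnn,
          ← ENNReal.ofReal_rpow_of_nonneg (norm_nonneg _) (by linarith), ← ENNReal.rpow_mul, ofReal_norm]
        congr 1
        have := hpq.sub_one_mul_conj
        exact this
      · rw [hψ, Set.indicator_of_notMem hx, Set.indicator_of_notMem hx]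
        simp [hq0]
    have hψL : MemLp ψ (ENNReal.ofReal q) volume :=
      ⟨hψm, by rw [hψq]; exact ENNReal.rpow_lt_top_of_nonneg (by positivity) hIfin.ne⟩
    have key := dual_ext p q hpq G hG B hB M hM h (k + 1) (by positivity) ψ hψL
      (fun x hx => Set.indicator_of_notMem hx _)
    have e1 : ∫ x, G x * ψ x = ((Il.toReal : ℝ) : ℂ) := by
      have : ∀ x, G x * ψ x = ((S.indicator (fun x => ‖G x‖ ^ p) x : ℝ) : ℂ) := by
        intro x
        by_cases hx : x ∈ S
        · rw [hψ, Set.indicator_of_mem hx, Set.indicator_of_mem hx, hGG]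
        · rw [hψ, Set.indicator_of_notMem hx, Set.indicator_of_notMem hx]; simp
      simp_rw [this]
      rw [integral_complex_ofReal, integral_indicator hSm, integral_eq_lintegral_of_nonneg_ae
        (ae_of_all _ fun x => by positivity) ((hG.norm.aemeasurable.pow_const _).aestronglyMeasurable.restrict)]
      congr 3
      funext x
      rw [← ENNReal.ofReal_rpow_of_nonneg (norm_nonneg _) hp0.le, ofReal_norm]
    rw [e1, hψq, Complex.norm_real, Real.norm_of_nonneg ENNReal.toReal_nonneg, ← ENNReal.toReal_rpow] at key
    set J := Il.toReal with hJ
    have hJ0 : 0 ≤ J := ENNReal.toReal_nonneg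
    have hJM : J ≤ M ^ p := by
      rcases hJ0.eq_or_lt with h0 | h0
      · rw [← h0]; positivity
      have h1 : J = J ^ (1 / p) * J ^ (1 / q) := by
        rw [← Real.rpow_add h0]
        have := hpq.inv_add_inv_eq_one
        rw [one_div, one_div, this, Real.rpow_one]
      have h2 : J ^ (1 / p) ≤ M := by
        refine le_of_mul_le_mul_right (?_ : _ * J ^ (1 / q) ≤ _) (Real.rpow_pos_of_pos h0 _)
        rw [← h1]; exact key
      calc J = (J ^ (1 / p)) ^ p := by
            rw [← Real.rpow_mul hJ0, one_div, inv_mul_cancel₀ hp0.ne', Real.rpow_one]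
        _ ≤ M ^ p := Real.rpow_le_rpow (by positivity) h2 hp0.le
    rw [← ENNReal.ofReal_toReal hIfin.ne]
    exact ENNReal.ofReal_le_ofReal hJM
  have hU : (⋃ k : ℕ, Metric.closedBall (0 : EE n) ((k : ℝ) + 1)) = Set.univ := by
    ext x
    simp only [Set.mem_iUnion, mem_closedBall_zero_iff, Set.mem_univ, iff_true]
    obtain ⟨k, hk⟩ := exists_nat_ge ‖x‖
    exact ⟨k, by linarith⟩
  have hdir : Monotone (fun k : ℕ => Metric.closedBall (0 : EE n) ((k : ℝ) + 1)) := by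
    intro i j hij
    apply Metric.closedBall_subset_closedBall
    have : (i : ℝ) ≤ j := by exact_mod_cast hij
    linarith
  rw [← setLIntegral_univ, ← hU, setLIntegral_iUnion_of_directed _ hdir.directed_le]
  exact iSup_le hR

end MMax

namespace MMax

lemma dual2 {n : ℕ} (p q : ℝ) (hpq : p.HolderConjugate q) (G : EE n → ℂ)
    (hG : AEStronglyMeasurable G volume) (B : ℝ) (hB : ∀ x, ‖G x‖ ≤ B) (W : ℝ≥0∞)
    (h : ∀ φ : SchwartzMap (EE n) ℂ, ‖∫ x, G x * φ x‖ₑ ≤ W ^ (1 / p) * (∫⁻ x, ‖φ x‖ₑ ^ q) ^ (1 / q)) :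
    ∫⁻ x, ‖G x‖ₑ ^ p ≤ W := by
  have hp0 : 0 < p := by linarith [hpq.lt]
  have hq0 : 0 < q := by linarith [hpq.symm.lt]
  rcases eq_or_ne W ∞ with hW | hW
  · rw [hW]; exact le_top
  have hWp : W ^ (1 / p) ≠ ∞ := ENNReal.rpow_ne_top_of_nonneg (by positivity) hW
  have := dual_lemma p q hpq G hG B hB (W ^ (1 / p)).toReal ENNReal.toReal_nonneg (fun φ => by
    have h1 := h φ
    have e : (∫⁻ x, ‖φ x‖ₑ ^ q) ^ (1 / q) = eLpNorm φ (ENNReal.ofReal q) volume := by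
      rw [eLpNorm_eq_lintegral_rpow_enorm_toReal (by simpa using hq0) ENNReal.ofReal_ne_top,
        ENNReal.toReal_ofReal hq0.le]
    rw [e] at h1
    have h2 := ENNReal.toReal_mono (ENNReal.mul_ne_top hWp (φ.memLp (ENNReal.ofReal q) volume).2.ne) h1
    rwa [toReal_enorm, ENNReal.toReal_mul] at h2)
  refine this.trans (le_of_eq ?_)
  rw [← ENNReal.ofReal_rpow_of_nonneg ENNReal.toReal_nonneg hp0.le, ENNReal.ofReal_toReal hWp,
    ← ENNReal.rpow_mul, one_div, inv_mul_cancel₀ hp0.ne', ENNReal.rpow_one]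

lemma holder_enorm {n : ℕ} (p q : ℝ) (hpq : p.HolderConjugate q) (f g : EE n → ℂ)
    (hf : AEStronglyMeasurable f volume) (hg : AEStronglyMeasurable g volume) :
    ‖∫ x, f x * g x‖ₑ ≤ (∫⁻ x, ‖f x‖ₑ ^ p) ^ (1 / p) * (∫⁻ x, ‖g x‖ₑ ^ q) ^ (1 / q) := by
  refine (enorm_integral_le_lintegral_enorm _).trans ?_
  simp_rw [enorm_mul]
  exact ENNReal.lintegral_mul_le_Lp_mul_Lq volume hpq hf.enorm hg.enorm

lemma holder22 : (2 : ℝ).HolderConjugate 2 := Real.holderConjugate_iff.mpr ⟨by norm_num, by norm_num⟩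

lemma enorm_sq_eq (z : ℂ) : ‖z‖ₑ ^ (2:ℝ) = ENNReal.ofReal (‖z‖ ^ 2) := by
  rw [← ofReal_norm, ENNReal.ofReal_rpow_of_nonneg (norm_nonneg _) (by norm_num)]
  norm_num

lemma schwartz_memLp_sq {n : ℕ} (φ : SchwartzMap (EE n) ℂ) : Integrable (fun x => ‖φ x‖ ^ 2) := by
  have := (φ.memLp 2 volume).integrable_norm_pow (by norm_num)
  simpa using this

lemma plancherel_s {n : ℕ} (φ : SchwartzMap (EE n) ℂ) :
    ∫⁻ ξ, ‖𝓕 (φ : EE n → ℂ) ξ‖ₑ ^ (2:ℝ) = ∫⁻ x, ‖φ x‖ₑ ^ (2:ℝ) := by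
  have h := SchwartzMap.integral_norm_sq_fourier φ
  simp_rw [enorm_sq_eq]
  rw [← SchwartzMap.fourier_coe, ← ofReal_integral_eq_lintegral_ofReal (schwartz_memLp_sq φ) (ae_of_all _ fun x => by positivity),
    ← ofReal_integral_eq_lintegral_ofReal (schwartz_memLp_sq (𝓕 φ)) (ae_of_all _ fun x => by positivity), h]

lemma fourier_cont {n : ℕ} (g : EE n → ℂ) (hg : Integrable g) : Continuous (𝓕 g) :=
  VectorFourier.fourierIntegral_continuous Real.continuous_fourierChar continuous_inner hg

lemma fourier_bdd {n : ℕ} (g : EE n → ℂ) (ξ : EE n) : ‖𝓕 g ξ‖ ≤ ∫ x, ‖g x‖ :=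
  VectorFourier.norm_fourierIntegral_le_integral_norm _ _ _ g ξ

lemma fourier_l2 {n : ℕ} (g : EE n → ℂ) (hg : Integrable g) :
    ∫⁻ ξ, ‖𝓕 g ξ‖ₑ ^ (2:ℝ) ≤ ∫⁻ x, ‖g x‖ₑ ^ (2:ℝ) := by
  refine dual2 2 2 holder22 _ (fourier_cont g hg).aestronglyMeasurable _ (fourier_bdd g) _ fun φ => ?_
  rw [fourier_flip g φ hg φ.integrable, ← plancherel_s φ]
  exact holder_enorm 2 2 holder22 g _ hg.1 (𝓕 φ).continuous.aestronglyMeasurable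

noncomputable def conv (n : ℕ) (a : ℂ) (g : EE n → ℂ) (x : EE n) : ℂ := ∫ y, ker n a (x - y) * g y

lemma norm_ker_le (n : ℕ) (a : ℂ) (ha2 : 2 * a.re < n) (x : EE n) :
    ‖ker n a x‖ ≤ ‖gam n a‖ * ‖x‖ ^ (-((n:ℝ) - 2 * a.re)) := by
  unfold ker
  rw [norm_mul]
  refine mul_le_mul_of_nonneg_left ?_ (norm_nonneg _)
  refine (norm_cpow_le _ (norm_nonneg _) _ ?_).trans_eq ?_
  · intro h
    have := congrArg Complex.re h
    simp at this; linarith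
  · congr 1; simp

lemma ker_lint (n : ℕ) (hn : 1 ≤ n) (a : ℂ) (ha : 0 < a.re) (ha2 : 2 * a.re < n) (g : EE n → ℂ)
    (hg : Integrable g) (M : ℝ) (hM : ∀ x, ‖g x‖ ≤ M) :
    ∃ B : ℝ, 0 ≤ B ∧ ∀ x, ∫⁻ y, ‖ker n a (x - y) * g y‖ₑ ≤ ENNReal.ofReal B := by
  set s := (n:ℝ) - 2 * a.re with hs
  set K := ENNReal.ofReal ‖gam n a‖ * ((∫⁻ y in Metric.ball (0 : EE n) 1, ENNReal.ofReal (‖y‖ ^ (-s))) * ENNReal.ofReal M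
        + ∫⁻ y, ‖g y‖ₑ) with hK
  have hKf : K ≠ ∞ := by
    refine ENNReal.mul_ne_top ENNReal.ofReal_ne_top (ENNReal.add_ne_top.mpr ⟨ENNReal.mul_ne_top ?_ ENNReal.ofReal_ne_top, hg.2.ne⟩)
    exact (ball_int n hn s (by linarith)).ne
  refine ⟨K.toReal, ENNReal.toReal_nonneg, fun x => ?_⟩
  rw [ENNReal.ofReal_toReal hKf]
  calc _ ≤ ∫⁻ y, ENNReal.ofReal ‖gam n a‖ * (ENNReal.ofReal (‖x - y‖ ^ (-s)) * ‖g y‖ₑ) := by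
        refine lintegral_mono fun y => ?_
        rw [enorm_mul, ← mul_assoc, ← ENNReal.ofReal_mul (norm_nonneg _)]
        gcongr
        rw [← ofReal_norm]
        exact ENNReal.ofReal_le_ofReal (norm_ker_le n a ha2 _)
    _ = ENNReal.ofReal ‖gam n a‖ * ∫⁻ y, (ENNReal.ofReal (‖x - y‖ ^ (-s)) * ‖g y‖ₑ) :=
        lintegral_const_mul' _ _ ENNReal.ofReal_ne_top
    _ ≤ K := by
        rw [hK]; gcongr
        exact lint_riesz n hn s (by linarith) (by linarith) g hg.1 M hM x

lemma ker_integrable (n : ℕ) (hn : 1 ≤ n) (a : ℂ) (ha : 0 < a.re) (ha2 : 2 * a.re < n) (g : EE n → ℂ)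
    (hg : Integrable g) (M : ℝ) (hM : ∀ x, ‖g x‖ ≤ M) (x : EE n) :
    Integrable (fun y => ker n a (x - y) * g y) := by
  obtain ⟨B, hB0, hB⟩ := ker_lint n hn a ha ha2 g hg M hM
  refine ⟨?_, (hB x).trans_lt ENNReal.ofReal_lt_top⟩
  have : Measurable fun y => ker n a (x - y) := (measurable_ker n a).comp (by fun_prop)
  exact this.aestronglyMeasurable.mul hg.1

lemma conv_bdd (n : ℕ) (hn : 1 ≤ n) (a : ℂ) (ha : 0 < a.re) (ha2 : 2 * a.re < n) (g : EE n → ℂ)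
    (hg : Integrable g) (M : ℝ) (hM : ∀ x, ‖g x‖ ≤ M) :
    ∃ B : ℝ, ∀ x, ‖conv n a g x‖ ≤ B := by
  obtain ⟨B, hB0, hB⟩ := ker_lint n hn a ha ha2 g hg M hM
  refine ⟨B, fun x => ?_⟩
  have := (enorm_integral_le_lintegral_enorm _).trans (hB x)
  rw [← ofReal_norm, ENNReal.ofReal_le_ofReal_iff hB0] at this
  exact this

lemma ker_prod_meas (n : ℕ) (a : ℂ) (g : EE n → ℂ) (hg : AEStronglyMeasurable g volume) :
    AEStronglyMeasurable (fun z : EE n × EE n => ker n a (z.1 - z.2) * g z.2) (volume.prod volume) := by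
  have : Measurable fun z : EE n × EE n => ker n a (z.1 - z.2) := (measurable_ker n a).comp (by fun_prop)
  exact this.aestronglyMeasurable.mul hg.comp_snd

lemma conv_meas (n : ℕ) (a : ℂ) (g : EE n → ℂ) (hg : AEStronglyMeasurable g volume) :
    AEStronglyMeasurable (conv n a g) volume :=
  (ker_prod_meas n a g hg).integral_prod_right'

lemma ker_neg (n : ℕ) (a : ℂ) (x : EE n) : ker n a (-x) = ker n a x := by simp [ker]

lemma conv_flip (n : ℕ) (hn : 1 ≤ n) (a : ℂ) (ha : 0 < a.re) (ha2 : 2 * a.re < n) (g : EE n → ℂ)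
    (hg : Integrable g) (M : ℝ) (hM : ∀ x, ‖g x‖ ≤ M) (φ : EE n → ℂ) (hφ : Integrable φ) :
    ∫ x, conv n a g x * φ x = ∫ y, g y * conv n a φ y := by
  obtain ⟨B, hB0, hB⟩ := ker_lint n hn a ha ha2 g hg M hM
  have hI : Integrable (Function.uncurry fun x y => ker n a (x - y) * g y * φ x) (volume.prod volume) := by
    have hmm : AEStronglyMeasurable (Function.uncurry fun x y => ker n a (x - y) * g y * φ x)
        (volume.prod volume) := (ker_prod_meas n a g hg.1).mul hφ.1.comp_fst
    refine ⟨hmm, ?_⟩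
    rw [hasFiniteIntegral_iff_enorm, lintegral_prod _ hmm.enorm]
    calc _ ≤ ∫⁻ x, ENNReal.ofReal B * ‖φ x‖ₑ := by
          refine lintegral_mono fun x => ?_
          simp only [Function.uncurry, enorm_mul _ (φ _)]
          rw [lintegral_mul_const' _ _ enorm_ne_top]
          gcongr
          exact hB x
      _ < ∞ := by
          rw [lintegral_const_mul' _ _ ENNReal.ofReal_ne_top]
          exact ENNReal.mul_lt_top ENNReal.ofReal_lt_top hφ.2
  unfold conv
  simp_rw [← integral_mul_const]
  rw [integral_integral_swap hI]
  congr 1; ext y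
  rw [← integral_const_mul]
  congr 1; ext x
  rw [← ker_neg, neg_sub]; ring

lemma cpow_prod_int (n : ℕ) (hn : 1 ≤ n) (a : ℂ) (ha : 0 < a.re) (ha2 : 2 * a.re < n)
    (ψ : EE n → ℂ) (hψ : Integrable ψ) (M : ℝ) (hM : ∀ x, ‖ψ x‖ ≤ M) :
    Integrable (fun ξ : EE n => ((‖ξ‖ : ℝ) : ℂ) ^ (-(2 * a)) * ψ ξ) := by
  have h := integrable_riesz n hn (2 * a.re) (by linarith) ha2 ψ hψ M hM 0
  have hm : Measurable (fun ξ : EE n => ((‖ξ‖ : ℝ) : ℂ) ^ (-(2 * a))) := by fun_prop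
  refine h.mono' (hm.aestronglyMeasurable.mul hψ.1) (ae_of_all _ fun ξ => ?_)
  rw [norm_mul, zero_sub, norm_neg]
  gcongr
  refine (norm_cpow_le _ (norm_nonneg _) _ ?_).trans_eq ?_
  · intro h
    have := congrArg Complex.re h
    simp at this; linarith
  · congr 1; simp

lemma fourier_neg_eq {n : ℕ} (g : EE n → ℂ) (ξ : EE n) :
    𝓕 g (-ξ) = ∫ y, g y * cexp (2 * Real.pi * I * (⟪y, ξ⟫ : ℝ)) := by
  rw [Real.fourier_eq']
  congr 1; ext y
  rw [smul_eq_mul, mul_comm, inner_neg_right]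
  congr 2
  push_cast; ring

lemma conv_pair (n : ℕ) (hn : 1 ≤ n) (a : ℂ) (ha : 0 < a.re) (ha2 : 2 * a.re < n) (g : EE n → ℂ)
    (hg : Integrable g) (φ : SchwartzMap (EE n) ℂ) :
    ∫ y, g y * conv n a φ y =
      ∫ ξ : EE n, (((‖ξ‖ : ℝ) : ℂ) ^ (-(2 * a)) * 𝓕 g (-ξ)) * 𝓕 (φ : EE n → ℂ) ξ := by
  obtain ⟨M, hM⟩ := schwartz_bdd (𝓕 φ)
  have hI1 := cpow_prod_int n hn a ha ha2 (𝓕 φ : SchwartzMap (EE n) ℂ) (𝓕 φ).integrable M hM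
  have hI : Integrable (Function.uncurry fun (y ξ : EE n) => g y * (((‖ξ‖ : ℝ) : ℂ) ^ (-(2 * a)) * 𝓕 (φ : EE n → ℂ) ξ *
      cexp (2 * Real.pi * I * (⟪y, ξ⟫ : ℝ)))) (volume.prod volume) := by
    have := hg.mul_prod hI1
    refine this.mono ?_ (ae_of_all _ fun z => ?_)
    · refine AEStronglyMeasurable.mul hg.1.comp_fst (AEStronglyMeasurable.mul hI1.1.comp_snd ?_)
      exact Continuous.aestronglyMeasurable (by fun_prop)
    · simp only [Function.uncurry, norm_mul, norm_char, mul_one]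
      exact le_rfl
  have e : ∀ y, g y * conv n a φ y = ∫ ξ, g y * (((‖ξ‖ : ℝ) : ℂ) ^ (-(2 * a)) * 𝓕 (φ : EE n → ℂ) ξ *
      cexp (2 * Real.pi * I * (⟪y, ξ⟫ : ℝ))) := by
    intro y
    rw [integral_const_mul, riesz_id n hn a ha ha2 φ y]; rfl
  simp_rw [e]
  rw [integral_integral_swap hI]
  congr 1; ext ξ
  rw [fourier_neg_eq]
  refine Eq.trans ?_ (mul_right_comm _ _ _)
  refine Eq.trans ?_ (integral_const_mul (((‖ξ‖ : ℝ) : ℂ) ^ (-(2 * a)) * 𝓕 (φ : EE n → ℂ) ξ)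
    (fun y => g y * cexp (2 * Real.pi * I * (⟪y, ξ⟫ : ℝ))))
  refine integral_congr_ae (ae_of_all _ fun y => ?_)
  simp only; ring

lemma conv_l2 (n : ℕ) (hn : 1 ≤ n) (a : ℂ) (ha : 0 < a.re) (ha2 : 2 * a.re < n) (g : EE n → ℂ)
    (hg : Integrable g) (M : ℝ) (hM : ∀ x, ‖g x‖ ≤ M) :
    ∫⁻ x, ‖conv n a g x‖ₑ ^ (2:ℝ) ≤ ∫⁻ ξ, ENNReal.ofReal (‖ξ‖ ^ (-(4 * a.re))) * ‖𝓕 g ξ‖ₑ ^ (2:ℝ) := by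
  obtain ⟨B, hB⟩ := conv_bdd n hn a ha ha2 g hg M hM
  have hFm : Continuous (𝓕 g) := fourier_cont g hg
  have hm : Measurable (fun ξ : EE n => ((‖ξ‖ : ℝ) : ℂ) ^ (-(2 * a)) * 𝓕 g (-ξ)) := by
    have := (hFm.comp continuous_neg).measurable
    refine Measurable.mul (by fun_prop) this
  refine dual2 2 2 holder22 _ (conv_meas n a g hg.1) B hB _ fun φ => ?_
  rw [conv_flip n hn a ha ha2 g hg M hM φ φ.integrable, conv_pair n hn a ha ha2 g hg φ, ← plancherel_s φ]
  refine (holder_enorm 2 2 holder22 _ _ hm.aestronglyMeasurable (𝓕 φ).continuous.aestronglyMeasurable).trans ?_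
  refine mul_le_mul_left (ENNReal.rpow_le_rpow ?_ (by norm_num)) _
  rw [← lintegral_neg_eq_self (fun ξ : EE n => ENNReal.ofReal (‖ξ‖ ^ (-(4 * a.re))) * ‖𝓕 g ξ‖ₑ ^ (2:ℝ))]
  refine lintegral_mono fun ξ => ?_
  rw [enorm_mul, ENNReal.mul_rpow_of_nonneg _ _ (by norm_num), norm_neg]
  gcongr
  rw [enorm_sq_eq]
  refine ENNReal.ofReal_le_ofReal ?_
  refine (pow_le_pow_left₀ (norm_nonneg _) (norm_cpow_le _ (norm_nonneg _) _ ?_) 2).trans_eq ?_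
  · intro h
    have := congrArg Complex.re h
    simp at this; linarith
  · rw [← Real.rpow_natCast, ← Real.rpow_mul (norm_nonneg _)]
    congr 1; simp; ring

lemma conv_l2_tendsto (n : ℕ) (hn : 1 ≤ n) (g : EE n → ℂ) (hg : Integrable g) (M : ℝ) (hM : ∀ x, ‖g x‖ ≤ M) :
    Tendsto (fun δ : ℝ => ∫⁻ ξ, ENNReal.ofReal (‖ξ‖ ^ (-(4 * δ))) * ‖𝓕 g ξ‖ₑ ^ (2:ℝ)) (𝓝[>] 0)
      (𝓝 (∫⁻ ξ, ‖𝓕 g ξ‖ₑ ^ (2:ℝ))) := by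
  have hn' : (1:ℝ) ≤ n := by exact_mod_cast hn
  have hFm : Continuous (𝓕 g) := fourier_cont g hg
  have hg2 : ∫⁻ x, ‖g x‖ₑ ^ (2:ℝ) < ∞ := by
    calc _ ≤ ∫⁻ x, ENNReal.ofReal M * ‖g x‖ₑ := by
          refine lintegral_mono fun x => ?_
          rw [show (2:ℝ) = 1 + 1 by norm_num, ENNReal.rpow_add_of_nonneg _ _ (by norm_num) (by norm_num), ENNReal.rpow_one]
          gcongr
          rw [← ofReal_norm]; exact ENNReal.ofReal_le_ofReal (hM x)
      _ < ∞ := by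
        rw [lintegral_const_mul' _ _ ENNReal.ofReal_ne_top]
        exact ENNReal.mul_lt_top ENNReal.ofReal_lt_top hg.2
  have hF2 : ∫⁻ x, ‖𝓕 g x‖ₑ ^ (2:ℝ) < ∞ := (fourier_l2 g hg).trans_lt hg2
  have he : ∀ ξ, ‖(𝓕 g ξ)^2‖ₑ = ‖𝓕 g ξ‖ₑ ^ (2:ℝ) := by intro ξ; rw [enorm_pow, ← ENNReal.rpow_natCast]; norm_num
  refine tendsto_lintegral_filter_of_dominated_convergence
    (fun ξ => ‖𝓕 g ξ‖ₑ ^ (2:ℝ) + ENNReal.ofReal (‖(0:EE n) - ξ‖ ^ (-(1/2:ℝ))) * ‖(𝓕 g ξ)^2‖ₑ) ?_ ?_ ?_ ?_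
  · refine Eventually.of_forall fun δ => ?_
    have : Measurable (𝓕 g) := hFm.measurable
    fun_prop
  · have : Set.Ioo (0:ℝ) (1/8) ∈ 𝓝[>] (0:ℝ) := Ioo_mem_nhdsGT (by norm_num)
    filter_upwards [this] with δ hδ
    filter_upwards [ae_norm_pos n hn 0] with ξ hξ
    rw [he]
    rw [zero_sub, norm_neg] at *
    calc _ ≤ (1 + ENNReal.ofReal (‖ξ‖ ^ (-(1/2:ℝ)))) * ‖𝓕 g ξ‖ₑ ^ (2:ℝ) := by
          gcongr
          rcases le_or_gt ‖ξ‖ 1 with h1 | h1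
          · refine le_trans (ENNReal.ofReal_le_ofReal ?_) le_add_self
            exact Real.rpow_le_rpow_of_exponent_ge hξ h1 (by linarith [hδ.2])
          · refine le_trans ?_ le_self_add
            rw [← ENNReal.ofReal_one]
            exact ENNReal.ofReal_le_ofReal (Real.rpow_le_one_of_one_le_of_nonpos h1.le (by linarith [hδ.1]))
      _ = _ := by ring
  · have hm : Measurable (fun ξ => ‖𝓕 g ξ‖ₑ ^ (2:ℝ)) := by
      have : Measurable (𝓕 g) := hFm.measurable
      fun_prop
    rw [lintegral_add_left hm]
    refine ENNReal.add_ne_top.mpr ⟨hF2.ne, ?_⟩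
    have := lint_riesz n hn (1/2) (by norm_num) (by linarith) (fun ξ => (𝓕 g ξ)^2) (by fun_prop) ((∫ x, ‖g x‖)^2)
      (fun ξ => by rw [norm_pow]; exact pow_le_pow_left₀ (norm_nonneg _) (fourier_bdd g ξ) 2) 0
    refine (this.trans_lt ?_).ne
    refine ENNReal.add_lt_top.mpr ⟨ENNReal.mul_lt_top (ball_int n hn _ (by linarith)) ENNReal.ofReal_lt_top, ?_⟩
    simp_rw [he]; exact hF2
  · filter_upwards [ae_norm_pos n hn 0] with ξ hξ
    rw [zero_sub, norm_neg] at hξ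
    have h1 : Tendsto (fun δ : ℝ => ENNReal.ofReal (‖ξ‖ ^ (-(4 * δ)))) (𝓝[>] 0) (𝓝 1) := by
      have : Continuous (fun δ : ℝ => ENNReal.ofReal (‖ξ‖ ^ (-(4 * δ)))) := by
        refine ENNReal.continuous_ofReal.comp ?_
        exact Continuous.rpow continuous_const (by fun_prop) (fun _ => Or.inl hξ.ne')
      have := this.tendsto 0
      simp only [mul_zero, neg_zero, Real.rpow_zero, ENNReal.ofReal_one] at this
      exact this.mono_left nhdsWithin_le_nhds
    have h2 := ENNReal.Tendsto.mul_const (b := ‖𝓕 g ξ‖ₑ ^ (2:ℝ)) h1 (Or.inl one_ne_zero)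
    rwa [one_mul] at h2

end MMax

namespace MMax

lemma cpow_mvt (w : ℂ) (m R ρ : ℝ) (hm : 0 < m) (hR : m ≤ R) (hρ : m ≤ ρ) (hw : w.re ≤ 1) :
    ‖(R : ℂ) ^ w - (ρ : ℂ) ^ w‖ ≤ ‖w‖ * m ^ (w.re - 1) * |R - ρ| := by
  have := Convex.norm_image_sub_le_of_norm_hasDerivWithin_le (f := fun t : ℝ => (t : ℂ) ^ w)
    (f' := fun t : ℝ => w * (t : ℂ) ^ (w - 1)) (s := Set.Ici m) (C := ‖w‖ * m ^ (w.re - 1)) (x := ρ) (y := R)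
    (fun t ht => by
      have ht0 : 0 < t := hm.trans_le ht
      have h1 : HasDerivAt (fun z : ℂ => z ^ w) (w * (t : ℂ) ^ (w - 1) * 1) (t : ℂ) :=
        (hasDerivAt_id (t : ℂ)).cpow_const (by simp [ht0])
      rw [mul_one] at h1
      exact h1.comp_ofReal.hasDerivWithinAt)
    (fun t ht => by
      have ht0 : 0 < t := hm.trans_le ht
      rw [norm_mul, Complex.norm_cpow_eq_rpow_re_of_pos ht0]
      gcongr
      simp only [sub_re, one_re]
      exact Real.rpow_le_rpow_of_nonpos hm ht (by linarith))
    (convex_Ici m) hρ hR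
  simpa using this

lemma min_one_rpow (t ε : ℝ) (ht : 0 ≤ t) (h0 : 0 ≤ ε) (h1 : ε ≤ 1) : min 1 t ≤ t ^ ε := by
  rcases le_total 1 t with h | h
  · rw [min_eq_left h]; exact Real.one_le_rpow h h0
  · rw [min_eq_right h]
    rcases ht.eq_or_lt with h' | h'
    · rw [← h']; positivity
    · calc t = t ^ (1:ℝ) := (Real.rpow_one t).symm
        _ ≤ t ^ ε := Real.rpow_le_rpow_of_exponent_ge h' h h1

lemma cpow_diff (n : ℕ) (w : ℂ) (ε d R ρ : ℝ) (hε0 : 0 ≤ ε) (hε1 : ε ≤ 1) (hd : 0 < d)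
    (hw : w.re ≤ 0) (hw2 : -(n:ℝ) ≤ w.re) (hRρ : |R - ρ| ≤ d) (hρ : 2 * d ≤ ρ) :
    ‖(R : ℂ) ^ w - (ρ : ℂ) ^ w‖ ≤ 2 ^ (n + 1) * ρ ^ w.re * (‖w‖ * (d / ρ)) ^ ε := by
  have hρ0 : 0 < ρ := by linarith
  have hR : ρ / 2 ≤ R := by linarith [(abs_le.mp hRρ).1]
  have hR0 : 0 < R := by linarith
  have hhalf : (ρ / 2) ^ w.re ≤ 2 ^ n * ρ ^ w.re := by
    rw [Real.div_rpow hρ0.le (by norm_num), div_eq_mul_inv, mul_comm]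
    refine mul_le_mul_of_nonneg_right ?_ (by positivity)
    rw [← Real.rpow_neg (by norm_num), ← Real.rpow_natCast]
    exact Real.rpow_le_rpow_of_exponent_le (by norm_num) (by linarith)
  have hA : ‖(R : ℂ) ^ w - (ρ : ℂ) ^ w‖ ≤ 2 ^ (n + 1) * ρ ^ w.re := by
    refine (norm_sub_le _ _).trans ?_
    rw [Complex.norm_cpow_eq_rpow_re_of_pos hR0, Complex.norm_cpow_eq_rpow_re_of_pos hρ0]
    have h1 : R ^ w.re ≤ (ρ / 2) ^ w.re := Real.rpow_le_rpow_of_nonpos (by positivity) hR hw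
    have h2 : ρ ^ w.re ≤ (ρ / 2) ^ w.re := Real.rpow_le_rpow_of_nonpos (by positivity) (by linarith) hw
    rw [pow_succ]; linarith
  have hB : ‖(R : ℂ) ^ w - (ρ : ℂ) ^ w‖ ≤ 2 ^ (n + 1) * ρ ^ w.re * (‖w‖ * (d / ρ)) := by
    refine (cpow_mvt w (ρ / 2) R ρ (by positivity) hR (by linarith) (by linarith)).trans ?_
    have e : (ρ / 2) ^ (w.re - 1) = (ρ / 2) ^ w.re * (2 / ρ) := by
      rw [Real.rpow_sub (by positivity), Real.rpow_one]; field_simp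
    rw [e]
    calc ‖w‖ * ((ρ / 2) ^ w.re * (2 / ρ)) * |R - ρ| ≤ ‖w‖ * ((2 ^ n * ρ ^ w.re) * (2 / ρ)) * d := by gcongr
      _ = _ := by rw [pow_succ]; ring
  have hC : ‖(R : ℂ) ^ w - (ρ : ℂ) ^ w‖ ≤ 2 ^ (n + 1) * ρ ^ w.re * min 1 (‖w‖ * (d / ρ)) := by
    rw [mul_min_of_nonneg _ _ (by positivity), mul_one]
    exact le_min hA hB
  refine hC.trans ?_
  gcongr
  exact min_one_rpow _ _ (by positivity) hε0 hε1

lemma ker_diff (n : ℕ) (hn : 1 ≤ n) (ε : ℝ) (hε0 : 0 < ε) (hε1 : ε ≤ 1) (a : ℂ) (ha : 0 < a.re) (ha2 : 4 * a.re ≤ ε)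
    (d : ℝ) (hd : 0 < d) (x y : EE n) (hy : ‖y‖ ≤ d) (hx : 2 * d ≤ ‖x‖) :
    ‖ker n a (x - y) - ker n a x‖ ≤
      (2 ^ (n + 1) * (n + 2) ^ ε * 2 ^ ((n:ℝ) + ε / 2)) * ‖gam n a‖ * (1 + |a.im|) ^ ε * d ^ (2 * a.re - n) *
        (1 + ‖d⁻¹ • x‖) ^ (-((n:ℝ) + ε / 2)) := by
  have hn' : (1:ℝ) ≤ n := by exact_mod_cast hn
  have hre : (2 * a - n).re = 2 * a.re - n := by simp
  have hx0 : 0 < ‖x‖ := by linarith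
  unfold ker
  rw [← mul_sub, norm_mul]
  have h1 := cpow_diff n (2 * a - n) ε d ‖x - y‖ ‖x‖ hε0.le hε1 hd (by rw [hre]; linarith) (by rw [hre]; linarith)
    (by
      refine (abs_norm_sub_norm_le _ _).trans ?_
      simpa using hy) hx
  rw [hre] at h1
  have hwn : ‖2 * a - n‖ ≤ (n + 2) * (1 + |a.im|) := by
    have h2 : ‖a‖ ≤ |a.re| + |a.im| := Complex.norm_le_abs_re_add_abs_im a
    have h3 : ‖2 * a - n‖ ≤ 2 * ‖a‖ + n := by
      refine (norm_sub_le _ _).trans ?_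
      simp
    rw [abs_of_pos ha] at h2
    nlinarith [abs_nonneg a.im]
  set τ := ‖x‖ / d with hτ
  have hτ2 : 2 ≤ τ := by rw [hτ, le_div_iff₀ hd]; exact hx
  have hτ0 : 0 < τ := by linarith
  have hxd : ‖x‖ = d * τ := by rw [hτ]; field_simp
  have hdx : d / ‖x‖ = τ⁻¹ := by rw [hτ, inv_div]
  have hsm : ‖d⁻¹ • x‖ = τ := by
    rw [norm_smul, norm_inv, Real.norm_of_nonneg hd.le, hτ, div_eq_mul_inv, mul_comm]
  rw [hdx, hxd] at h1
  rw [hsm]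
  have h4 : (d * τ) ^ (2 * a.re - n) * (‖2 * a - n‖ * τ⁻¹) ^ ε ≤
      (n + 2) ^ ε * (1 + |a.im|) ^ ε * d ^ (2 * a.re - n) * (2 ^ ((n:ℝ) + ε / 2) * (1 + τ) ^ (-((n:ℝ) + ε / 2))) := by
    calc (d * τ) ^ (2 * a.re - n) * (‖2 * a - n‖ * τ⁻¹) ^ ε
        ≤ (d * τ) ^ (2 * a.re - n) * ((n + 2) * (1 + |a.im|) * τ⁻¹) ^ ε := by gcongr
      _ = (n + 2) ^ ε * (1 + |a.im|) ^ ε * d ^ (2 * a.re - n) * (τ ^ (2 * a.re - n - ε)) := by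
          rw [Real.mul_rpow hd.le hτ0.le, Real.mul_rpow (by positivity) (by positivity),
            Real.mul_rpow (by positivity) (by positivity), Real.rpow_sub hτ0 _ ε, Real.inv_rpow hτ0.le]
          ring
      _ ≤ (n + 2) ^ ε * (1 + |a.im|) ^ ε * d ^ (2 * a.re - n) * (τ ^ (-((n:ℝ) + ε / 2))) := by
          gcongr
          · linarith
          · linarith
      _ ≤ _ := by
          gcongr
          have : τ ^ (-((n:ℝ) + ε / 2)) = 2 ^ ((n:ℝ) + ε / 2) * (2 * τ) ^ (-((n:ℝ) + ε / 2)) := by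
            rw [Real.mul_rpow (by norm_num) hτ0.le, ← mul_assoc, ← Real.rpow_add (by norm_num)]
            simp
          rw [this]
          gcongr 2 ^ ((n:ℝ) + ε / 2) * ?_
          exact Real.rpow_le_rpow_of_nonpos (by positivity) (by linarith) (by linarith)
  calc ‖gam n a‖ * _ ≤ ‖gam n a‖ * (2 ^ (n + 1) * (d * τ) ^ (2 * a.re - ↑n) * (‖2 * a - ↑n‖ * τ⁻¹) ^ ε) := by
        rw [← hxd] at h1 ⊢
        gcongr
    _ = ‖gam n a‖ * 2 ^ (n + 1) * ((d * τ) ^ (2 * a.re - ↑n) * (‖2 * a - ↑n‖ * τ⁻¹) ^ ε) := by ring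
    _ ≤ ‖gam n a‖ * 2 ^ (n + 1) * _ := mul_le_mul_of_nonneg_left h4 (by positivity)
    _ = _ := by ring

lemma horm (n : ℕ) (hn : 1 ≤ n) (ε : ℝ) (hε0 : 0 < ε) (hε1 : ε ≤ 1) :
    ∃ C : ℝ, 0 < C ∧ ∀ a : ℂ, 0 < a.re → 4 * a.re ≤ ε → ∀ D : ℝ, ∀ d : ℝ, 0 < d → d ≤ D →
      ∀ y : EE n, ‖y‖ ≤ d → ∫⁻ x in {x : EE n | 2 * d ≤ ‖x‖}, ‖ker n a (x - y) - ker n a x‖ₑ ≤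
        ENNReal.ofReal (C * ‖gam n a‖ * (1 + |a.im|) ^ ε * D ^ (2 * a.re)) := by
  set s := (n:ℝ) + ε / 2 with hs
  have hint : Integrable (fun x : EE n => (1 + ‖x‖) ^ (-s)) := by
    apply integrable_one_add_norm; simp [hs]; linarith
  set J := ∫ x : EE n, (1 + ‖x‖) ^ (-s) with hJ
  have hJ0 : 0 ≤ J := integral_nonneg fun x => by positivity
  set C0 : ℝ := (2 ^ (n + 1) * (n + 2) ^ ε * 2 ^ s) with hC0
  refine ⟨C0 * (J + 1), by positivity, fun a ha ha2 D d hd hdD y hy => ?_⟩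
  set A := C0 * ‖gam n a‖ * (1 + |a.im|) ^ ε * d ^ (2 * a.re - n) with hA
  have hA0 : 0 ≤ A := by positivity
  have hint2 : Integrable (fun x : EE n => (1 + ‖d⁻¹ • x‖) ^ (-s)) :=
    hint.comp_smul (inv_ne_zero hd.ne')
  have hval : ∫ x : EE n, (1 + ‖d⁻¹ • x‖) ^ (-s) = d ^ n * J := by
    have := Measure.integral_comp_inv_smul_of_nonneg (volume : Measure (EE n)) (fun x : EE n => (1 + ‖x‖) ^ (-s)) hd.le
    rw [this]; simp [hJ]
  calc ∫⁻ x in {x : EE n | 2 * d ≤ ‖x‖}, ‖ker n a (x - y) - ker n a x‖ₑ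
      ≤ ∫⁻ x in {x : EE n | 2 * d ≤ ‖x‖}, ENNReal.ofReal (A * (1 + ‖d⁻¹ • x‖) ^ (-s)) := by
        refine setLIntegral_mono' (measurableSet_le measurable_const measurable_norm) fun x hx => ?_
        rw [← ofReal_norm]
        exact ENNReal.ofReal_le_ofReal (ker_diff n hn ε hε0 hε1 a ha ha2 d hd x y hy hx)
    _ ≤ ∫⁻ x : EE n, ENNReal.ofReal (A * (1 + ‖d⁻¹ • x‖) ^ (-s)) := setLIntegral_le_lintegral _ _
    _ = ENNReal.ofReal (A * (d ^ n * J)) := by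
        rw [← ofReal_integral_eq_lintegral_ofReal (hint2.const_mul A) (ae_of_all _ fun x => by positivity),
          integral_const_mul, hval]
    _ ≤ _ := by
        refine ENNReal.ofReal_le_ofReal ?_
        have e : A * (d ^ n * J) = C0 * J * ‖gam n a‖ * (1 + |a.im|) ^ ε * d ^ (2 * a.re) := by
          rw [hA, Real.rpow_sub hd, Real.rpow_natCast]; field_simp
        rw [e]
        gcongr
        linarith

end MMax

namespace MMax

/-- index of the dyadic cube of level `k` containing `x` -/
noncomputable def didx (n : ℕ) (k : ℤ) (x : EE n) (i : Fin n) : ℤ := ⌊x i * (2:ℝ) ^ k⌋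

/-- dyadic cube of side `2^{-k}` -/
def cube (n : ℕ) (k : ℤ) (m : Fin n → ℤ) : Set (EE n) := {x | didx n k x = m}

lemma didx_meas (n : ℕ) (k : ℤ) : Measurable (didx n k) := by
  refine measurable_pi_lambda _ fun i => ?_
  unfold didx
  exact Int.measurable_floor.comp (by fun_prop)

lemma cube_meas (n : ℕ) (k : ℤ) (m : Fin n → ℤ) : MeasurableSet (cube n k m) :=
  didx_meas n k (measurableSet_singleton m)

lemma cube_iff (n : ℕ) (k : ℤ) (m : Fin n → ℤ) (x : EE n) :
    x ∈ cube n k m ↔ ∀ i, (m i : ℝ) * 2 ^ (-k) ≤ x i ∧ x i < (m i + 1) * 2 ^ (-k) := by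
  have h2 : (0:ℝ) < 2 ^ k := by positivity
  unfold cube didx
  simp only [Set.mem_ofPred_eq, funext_iff, Int.floor_eq_iff]
  refine forall_congr' fun i => ?_
  rw [zpow_neg, ← div_eq_mul_inv, ← div_eq_mul_inv, div_le_iff₀ h2, lt_div_iff₀ h2]

lemma cube_vol (n : ℕ) (k : ℤ) (m : Fin n → ℤ) :
    volume (cube n k m) = ENNReal.ofReal ((2:ℝ) ^ (-k)) ^ n := by
  have h := (EuclideanSpace.volume_preserving_symm_measurableEquiv_toLp (Fin n))
  have e : cube n k m = (MeasurableEquiv.toLp 2 (Fin n → ℝ)).symm ⁻¹'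
      (Set.univ.pi fun i => Set.Ico ((m i : ℝ) * 2 ^ (-k)) ((m i + 1) * 2 ^ (-k))) := by
    ext x
    rw [cube_iff]
    simp
  rw [e, h.measure_preimage (MeasurableSet.univ_pi fun i => measurableSet_Ico).nullMeasurableSet, Real.volume_pi_Ico]
  have : ∀ i, ((m i : ℝ) + 1) * 2 ^ (-k) - m i * 2 ^ (-k) = 2 ^ (-k) := fun i => by ring
  simp only [this, Finset.prod_const, Finset.card_univ, Fintype.card_fin]

lemma cube_diam (n : ℕ) (k : ℤ) (m : Fin n → ℤ) (x y : EE n) (hx : x ∈ cube n k m) (hy : y ∈ cube n k m) :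
    dist x y ≤ √n * 2 ^ (-k) := by
  rw [cube_iff] at hx hy
  have h2 : (0:ℝ) < 2 ^ (-k) := by positivity
  rw [EuclideanSpace.dist_eq]
  calc √(∑ i, dist (x i) (y i) ^ 2) ≤ √(∑ i : Fin n, (2 ^ (-k)) ^ 2) := by
        apply Real.sqrt_le_sqrt
        refine Finset.sum_le_sum fun i _ => ?_
        refine pow_le_pow_left₀ dist_nonneg ?_ 2
        rw [Real.dist_eq, abs_le]
        have h1 := hx i; have h2 := hy i
        constructor <;> nlinarith
    _ = √n * 2 ^ (-k) := by
        rw [Finset.sum_const, Finset.card_univ, Fintype.card_fin, nsmul_eq_mul, Real.sqrt_mul (by positivity),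
          Real.sqrt_sq h2.le]

lemma didx_mono (n : ℕ) (k k' : ℤ) (hk : k' ≤ k) (x y : EE n) (h : didx n k x = didx n k y) :
    didx n k' x = didx n k' y := by
  obtain ⟨j, rfl⟩ : ∃ j : ℕ, k = k' + j := ⟨(k - k').toNat, by omega⟩
  ext i
  have := congrFun h i
  unfold didx at *
  have e : ∀ z : EE n, z i * (2:ℝ) ^ k' = z i * 2 ^ (k' + (j:ℤ)) / ((2 ^ j : ℕ) : ℝ) := by
    intro z
    rw [zpow_add₀ (by norm_num), zpow_natCast]
    push_cast; field_simp
  rw [e x, e y, Int.floor_div_natCast, Int.floor_div_natCast, this]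

def bad (n : ℕ) (f : EE n → ℂ) (l : ℝ) (k : ℤ) (m : Fin n → ℤ) : Prop :=
  ENNReal.ofReal l * volume (cube n k m) < ∫⁻ x in cube n k m, ‖f x‖ₑ

def sel (n : ℕ) (f : EE n → ℂ) (l : ℝ) (q : ℤ × (Fin n → ℤ)) : Prop :=
  bad n f l q.1 q.2 ∧ ∀ k' < q.1, ∀ x ∈ cube n q.1 q.2, ¬ bad n f l k' (didx n k' x)

lemma mem_cube_didx (n : ℕ) (k : ℤ) (x : EE n) : x ∈ cube n k (didx n k x) := rfl

lemma bad_lower (n : ℕ) (hn : 1 ≤ n) (f : EE n → ℂ) (hf : Integrable f) (l : ℝ) (hl : 0 < l) :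
    ∃ k0 : ℤ, ∀ k m, bad n f l k m → k0 ≤ k := by
  set N := ∫ x, ‖f x‖ with hN
  obtain ⟨j, hj⟩ := pow_unbounded_of_one_lt (N / l + 1) (one_lt_two : (1:ℝ) < 2)
  refine ⟨-j, fun k m hb => ?_⟩
  by_contra hlt
  push Not at hlt
  have h1 : ENNReal.ofReal l * volume (cube n k m) < ENNReal.ofReal N := by
    refine lt_of_lt_of_le hb ((setLIntegral_le_lintegral _ _).trans_eq ?_)
    rw [hN, ofReal_integral_norm_eq_lintegral_enorm hf]
  rw [cube_vol, ← ENNReal.ofReal_pow (by positivity), ← ENNReal.ofReal_mul hl.le] at h1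
  have h2 := (ENNReal.ofReal_lt_ofReal_iff_of_nonneg (by positivity)).mp h1
  have h3 : (2:ℝ) ^ j ≤ 2 ^ (-k) := by
    rw [← zpow_natCast]
    exact zpow_le_zpow_right₀ (by norm_num) (by omega)
  have h4 : (1:ℝ) ≤ 2 ^ (-k) := le_trans (one_le_pow₀ (by norm_num)) h3
  have h5 : (2:ℝ) ^ (-k) ≤ (2 ^ (-k)) ^ n := le_self_pow₀ h4 (by omega)
  have h6 : N / l < (2 ^ (-k)) ^ n := by linarith
  rw [div_lt_iff₀ hl] at h6
  linarith

lemma sel_disj (n : ℕ) (f : EE n → ℂ) (l : ℝ) (q q' : ℤ × (Fin n → ℤ)) (h : sel n f l q) (h' : sel n f l q')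
    (x : EE n) (hx : x ∈ cube n q.1 q.2) (hx' : x ∈ cube n q'.1 q'.2) : q = q' := by
  have e : didx n q.1 x = q.2 := hx
  have e' : didx n q'.1 x = q'.2 := hx'
  rcases lt_trichotomy q.1 q'.1 with h1 | h1 | h1
  · exact absurd (by rw [e]; exact h.1) (h'.2 _ h1 x hx')
  · refine Prod.ext h1 ?_
    rw [← e, ← e', h1]
  · exact absurd (by rw [e']; exact h'.1) (h.2 _ h1 x hx)

lemma sel_exists (n : ℕ) (hn : 1 ≤ n) (f : EE n → ℂ) (hf : Integrable f) (l : ℝ) (hl : 0 < l) (x : EE n) (k : ℤ)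
    (h : bad n f l k (didx n k x)) : ∃ q, sel n f l q ∧ x ∈ cube n q.1 q.2 := by
  obtain ⟨k0, hk0⟩ := bad_lower n hn f hf l hl
  obtain ⟨j, hj, hmin⟩ := Int.exists_least_of_bdd (P := fun k => bad n f l k (didx n k x))
    ⟨k0, fun k hk => hk0 _ _ hk⟩ ⟨k, h⟩
  refine ⟨(j, didx n j x), ⟨hj, fun k' hk' y hy hb => ?_⟩, rfl⟩
  have : didx n k' y = didx n k' x := didx_mono n j k' hk'.le y x hy
  rw [this] at hb
  have := hmin k' hb
  simp only at hk'
  omega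

lemma off_bound (n : ℕ) (f : EE n → ℂ) (hf : Continuous f) (l : ℝ) (hl : 0 < l) (x : EE n)
    (h : ∀ k, ¬ bad n f l k (didx n k x)) : ‖f x‖ ≤ l := by
  by_contra hlt
  push Not at hlt
  obtain ⟨l', hl1, hl2⟩ := exists_between hlt
  have ho : {y | l' < ‖f y‖} ∈ 𝓝 x := (isOpen_lt continuous_const hf.norm).mem_nhds hl2
  obtain ⟨ρ, hρ, hb⟩ := Metric.mem_nhds_iff.mp ho
  obtain ⟨j, hj⟩ := exists_pow_lt_of_lt_one (show 0 < ρ / (√n + 1) by positivity) (show (2:ℝ)⁻¹ < 1 by norm_num)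
  apply h j
  have hsub : cube n j (didx n j x) ⊆ {y | l' < ‖f y‖} := by
    refine subset_trans (fun y hy => ?_) hb
    rw [Metric.mem_ball]
    refine (cube_diam n j _ y x hy rfl).trans_lt ?_
    rw [lt_div_iff₀ (by positivity)] at hj
    have : (2:ℝ) ^ (-(j:ℤ)) = 2⁻¹ ^ j := by rw [zpow_neg, zpow_natCast, inv_pow]
    rw [this]
    have : (0:ℝ) < 2⁻¹ ^ j := by positivity
    nlinarith
  have hv : volume (cube n j (didx n j x)) ≠ 0 := by
    rw [cube_vol]; exact pow_ne_zero _ (by simp)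
  have hv2 : volume (cube n j (didx n j x)) ≠ ∞ := by
    rw [cube_vol]; exact ENNReal.pow_ne_top ENNReal.ofReal_ne_top
  unfold bad
  calc ENNReal.ofReal l * volume (cube n j (didx n j x)) < ENNReal.ofReal l' * volume (cube n j (didx n j x)) := by
        rw [ENNReal.mul_lt_mul_iff_left hv hv2]
        exact (ENNReal.ofReal_lt_ofReal_iff (by linarith)).mpr hl1
    _ = ∫⁻ y in cube n j (didx n j x), ENNReal.ofReal l' := by rw [setLIntegral_const]
    _ ≤ _ := by
        refine setLIntegral_mono' (cube_meas _ _ _) fun y hy => ?_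
        rw [← ofReal_norm]
        exact ENNReal.ofReal_le_ofReal (hsub hy).le

structure CZ (n : ℕ) (CN : ℝ) (f : EE n → ℂ) (l : ℝ) (Q : (ℤ × (Fin n → ℤ)) → Set (EE n))
    (S : Set (ℤ × (Fin n → ℤ))) (c : (ℤ × (Fin n → ℤ)) → EE n) (d : (ℤ × (Fin n → ℤ)) → ℝ) (D : ℝ) : Prop where
  meas : ∀ q, MeasurableSet (Q q)
  disj : S.PairwiseDisjoint Q
  dpos : ∀ q, 0 < d q
  dD : ∀ q ∈ S, d q ≤ D
  sub : ∀ q, ∀ x ∈ Q q, ‖x - c q‖ ≤ d q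
  ballvol : ∀ q, volume (Metric.ball (c q) (2 * d q)) ≤ ENNReal.ofReal CN * volume (Q q)
  upper : ∀ q ∈ S, ∫⁻ x in Q q, ‖f x‖ₑ ≤ ENNReal.ofReal (2 ^ n * l) * volume (Q q)
  lower : ∀ q ∈ S, volume (Q q) ≤ ENNReal.ofReal (2 / l) * ∫⁻ x in Q q, {x | l / 2 < ‖f x‖}.indicator (fun x => ‖f x‖ₑ) x
  vol0 : ∀ q, volume (Q q) ≠ 0
  volt : ∀ q, volume (Q q) ≠ ∞
  off : ∀ x, (∀ q ∈ S, x ∉ Q q) → ‖f x‖ ≤ l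

theorem cz_exists (n : ℕ) (hn : 1 ≤ n) : ∃ CN : ℝ, 0 < CN ∧ ∀ f : EE n → ℂ, Continuous f → Integrable f → ∀ l : ℝ, 0 < l →
    ∃ Q S c d D, CZ n CN f l Q S c d D := by
  have hn' : (1:ℝ) ≤ n := by exact_mod_cast hn
  have : Nontrivial (EE n) := by
    apply Module.nontrivial_of_finrank_pos (R := ℝ); simp; omega
  set V := volume (Metric.ball (0:EE n) 1) with hV
  have hVt : V ≠ ∞ := measure_ball_lt_top.ne
  refine ⟨(2 * √n) ^ n * V.toReal + 1, by positivity, fun f hf hfi l hl => ?_⟩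
  obtain ⟨k0, hk0⟩ := bad_lower n hn f hfi l hl
  have hcor : ∀ q : ℤ × (Fin n → ℤ), ∃ c, c ∈ cube n q.1 q.2 := by
    intro q
    refine ⟨WithLp.toLp 2 (fun i => (q.2 i : ℝ) * 2 ^ (-q.1)), ?_⟩
    rw [cube_iff]
    intro i
    have : (0:ℝ) < 2 ^ (-q.1) := by positivity
    constructor
    · exact le_rfl
    · change (q.2 i : ℝ) * 2 ^ (-q.1) < _
      nlinarith
  choose c hc using hcor
  have hv : ∀ q : ℤ × (Fin n → ℤ), volume (cube n q.1 q.2) ≠ 0 := by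
    intro q
    rw [cube_vol]; exact pow_ne_zero _ (by simp; positivity)
  have hv2 : ∀ q : ℤ × (Fin n → ℤ), volume (cube n q.1 q.2) ≠ ∞ := by
    intro q
    rw [cube_vol]; exact ENNReal.pow_ne_top ENNReal.ofReal_ne_top
  refine ⟨fun q => cube n q.1 q.2, {q | sel n f l q}, c, fun q => √n * 2 ^ (-q.1), √n * 2 ^ (-k0), ?_⟩
  constructor
  · exact fun q => cube_meas _ _ _
  · intro q hq q' hq' hne
    refine Set.disjoint_left.mpr fun x hx hx' => hne (sel_disj n f l q q' hq hq' x hx hx')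
  · intro q; positivity
  · intro q hq
    have := hk0 _ _ hq.1
    gcongr
    · norm_num
  · intro q x hx
    rw [← dist_eq_norm]
    exact cube_diam n q.1 q.2 x _ hx (hc q)
  · intro q
    rw [Measure.addHaar_ball _ _ (by positivity), cube_vol, ← hV]
    simp only [finrank_euclideanSpace, Fintype.card_fin]
    calc ENNReal.ofReal ((2 * (√n * 2 ^ (-q.1))) ^ n) * V
        = ENNReal.ofReal ((2 * √n) ^ n * V.toReal) * ENNReal.ofReal (2 ^ (-q.1)) ^ n := by
          rw [ENNReal.ofReal_mul (p := (2 * √n) ^ n) (by positivity), ENNReal.ofReal_toReal hVt,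
            ← ENNReal.ofReal_pow (by positivity), mul_right_comm, ← ENNReal.ofReal_mul (by positivity)]
          congr 2
          ring
      _ ≤ _ := by
          gcongr
          linarith
  · intro q hq
    have hnb := hq.2 (q.1 - 1) (by omega) (c q) (hc q)
    unfold bad at hnb
    push Not at hnb
    have hsub : cube n q.1 q.2 ⊆ cube n (q.1 - 1) (didx n (q.1 - 1) (c q)) := by
      intro y hy
      exact didx_mono n q.1 _ (by omega) y (c q) (Eq.trans hy (hc q).symm)
    refine (lintegral_mono_set hsub).trans (hnb.trans_eq ?_)
    rw [cube_vol, cube_vol, ← ENNReal.ofReal_pow (by positivity), ← ENNReal.ofReal_pow (by positivity),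
      ← ENNReal.ofReal_mul (by positivity), ← ENNReal.ofReal_mul (by positivity)]
    congr 1
    rw [show -(q.1 - 1) = -q.1 + 1 by ring, zpow_add₀ (by norm_num), zpow_one, mul_pow]
    ring
  · intro q hq
    have hb := hq.1
    unfold bad at hb
    have hfm : Measurable f := hf.measurable
    have hm : MeasurableSet {x | l / 2 < ‖f x‖} := measurableSet_lt measurable_const hfm.norm
    have h1 : ∫⁻ x in cube n q.1 q.2, ‖f x‖ₑ ≤ ENNReal.ofReal (l / 2) * volume (cube n q.1 q.2) +
        ∫⁻ x in cube n q.1 q.2, {x | l / 2 < ‖f x‖}.indicator (fun x => ‖f x‖ₑ) x := by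
      rw [← setLIntegral_const, ← lintegral_add_left measurable_const]
      refine lintegral_mono fun x => ?_
      by_cases hx : l / 2 < ‖f x‖
      · rw [Set.indicator_of_mem (by exact hx)]; exact le_add_self
      · refine le_trans ?_ le_self_add
        rw [← ofReal_norm]
        exact ENNReal.ofReal_le_ofReal (not_lt.mp hx)
    have h2 := hb.le.trans h1
    have h3 : ENNReal.ofReal l = ENNReal.ofReal (l / 2) + ENNReal.ofReal (l / 2) := by
      rw [← ENNReal.ofReal_add (by positivity) (by positivity)]; congr 1; ring
    rw [h3, add_mul] at h2
    have h4 := (ENNReal.add_le_add_iff_left (ENNReal.mul_ne_top ENNReal.ofReal_ne_top (hv2 q))).mp h2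
    have h5 : ENNReal.ofReal (2 / l) * ENNReal.ofReal (l / 2) = 1 := by
      rw [← ENNReal.ofReal_mul (by positivity), show 2 / l * (l / 2) = 1 by field_simp, ENNReal.ofReal_one]
    calc volume (cube n q.1 q.2) = ENNReal.ofReal (2 / l) * (ENNReal.ofReal (l / 2) * volume (cube n q.1 q.2)) := by
          rw [← mul_assoc, h5, one_mul]
      _ ≤ _ := by gcongr
  · exact hv
  · exact hv2
  · intro x hx
    refine off_bound n f hf l hl x fun k hb => ?_
    obtain ⟨q, hq, hxq⟩ := sel_exists n hn f hfi l hl x k hb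
    exact hx q hq hxq

end MMax

namespace MMax

/-- the union of the selected cubes -/
def Om {n : ℕ} (Q : (ℤ × (Fin n → ℤ)) → Set (EE n)) (S : Set (ℤ × (Fin n → ℤ))) : Set (EE n) :=
  ⋃ q : S, Q q

lemma pw_disj {n : ℕ} {Q : (ℤ × (Fin n → ℤ)) → Set (EE n)} {S : Set (ℤ × (Fin n → ℤ))}
    (h : S.PairwiseDisjoint Q) : Pairwise (Function.onFun Disjoint (fun q : S => Q q)) := by
  intro p q hpq
  exact h p.2 q.2 (fun e => hpq (Subtype.ext e))

lemma om_meas {n : ℕ} {Q : (ℤ × (Fin n → ℤ)) → Set (EE n)} {S : Set (ℤ × (Fin n → ℤ))}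
    (h : ∀ q, MeasurableSet (Q q)) : MeasurableSet (Om Q S) := MeasurableSet.iUnion fun q => h q

lemma om_vol {n : ℕ} {CN : ℝ} {f : EE n → ℂ} {l : ℝ} {Q S c d D} (h : CZ n CN f l Q S c d D) :
    volume (Om Q S) ≤ ENNReal.ofReal (2 / l) *
      ∫⁻ x, {x | l / 2 < ‖f x‖}.indicator (fun x => ‖f x‖ₑ) x := by
  unfold Om
  rw [measure_iUnion (pw_disj h.disj) (fun q => h.meas q)]
  calc ∑' q : S, volume (Q q) ≤ ∑' q : S, ENNReal.ofReal (2 / l) *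
        ∫⁻ x in Q q, {x | l / 2 < ‖f x‖}.indicator (fun x => ‖f x‖ₑ) x :=
        ENNReal.tsum_le_tsum fun q => h.lower q q.2
    _ = ENNReal.ofReal (2 / l) * ∫⁻ x in Om Q S, {x | l / 2 < ‖f x‖}.indicator (fun x => ‖f x‖ₑ) x := by
        rw [ENNReal.tsum_mul_left, Om, lintegral_iUnion (fun q : S => h.meas q) (pw_disj h.disj)]
    _ ≤ _ := by gcongr; exact Measure.restrict_le_self

lemma om_fin {n : ℕ} {CN : ℝ} {f : EE n → ℂ} {l : ℝ} {Q S c d D} (h : CZ n CN f l Q S c d D)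
    (hf : Integrable f) : volume (Om Q S) < ∞ := by
  refine (om_vol h).trans_lt (ENNReal.mul_lt_top ENNReal.ofReal_lt_top ?_)
  refine lt_of_le_of_lt (lintegral_mono fun x => Set.indicator_le_self _ _ x) hf.2

lemma good_bad {n : ℕ} {CN : ℝ} {f : EE n → ℂ} {l : ℝ} {Q S c d D} (h : CZ n CN f l Q S c d D)
    (hl : 0 < l) (hfc : Continuous f) (hf : Integrable f) :
    ∃ g : EE n → ℂ, Measurable g ∧ Integrable g ∧ (∀ x, ‖g x‖ ≤ 2 ^ n * l) ∧
      (∀ x, x ∉ Om Q S → g x = f x) ∧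
      (∀ q ∈ S, ∫ x in Q q, (f x - g x) = 0) ∧
      (∀ q ∈ S, ∫⁻ x in Q q, ‖f x - g x‖ₑ ≤ ENNReal.ofReal (2 * (2 ^ n * l)) * volume (Q q)) ∧
      ∫⁻ x, ‖g x‖ₑ ^ (2:ℝ) ≤ (∫⁻ x, {x | ‖f x‖ ≤ l}.indicator (fun x => ‖f x‖ₑ ^ (2:ℝ)) x) +
        ENNReal.ofReal ((2 ^ n * l) ^ 2) * volume (Om Q S) := by
  have hO : MeasurableSet (Om Q S) := om_meas h.meas
  have hA : 0 < 2 ^ n * l := by positivity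
  set av : S → ℂ := fun q => ((volume (Q q)).toReal⁻¹ : ℝ) • ∫ x in Q q, f x with hav
  obtain ⟨g, hgm, hg⟩ := exists_measurable_piecewise
    (fun o : Option S => o.elim (Om Q S)ᶜ (fun q => Q q))
    (by rintro (_ | q); exacts [hO.compl, h.meas q])
    (fun o : Option S => o.elim f (fun q _ => av q))
    (by rintro (_ | q); exacts [hfc.measurable, measurable_const])
    (by
      rintro (_ | p) (_ | q) hpq x ⟨hx1, hx2⟩
      · exact absurd rfl hpq
      · exact absurd (Set.mem_iUnion.2 ⟨q, hx2⟩) hx1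
      · exact absurd (Set.mem_iUnion.2 ⟨p, hx1⟩) hx2
      · exact absurd hx2 (Set.disjoint_left.1 (pw_disj h.disj (fun e => hpq (by rw [e]))) hx1))
  have g0 : ∀ x, x ∉ Om Q S → g x = f x := fun x hx => hg none hx
  have g1 : ∀ q : S, ∀ x ∈ Q q, g x = av q := fun q x hx => hg (some q) hx
  have vpos : ∀ q, 0 < (volume (Q q)).toReal := fun q =>
    ENNReal.toReal_pos (h.vol0 q) (h.volt q)
  have avb : ∀ q, ‖av q‖ ≤ 2 ^ n * l := by
    intro q
    rw [hav]
    simp only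
    rw [norm_smul, Real.norm_of_nonneg (inv_nonneg.2 (vpos q).le), inv_mul_le_iff₀ (vpos q)]
    have h1 : ‖∫ x in Q q, f x‖ₑ ≤ ENNReal.ofReal (2 ^ n * l) * volume (Q q) :=
      (enorm_integral_le_lintegral_enorm _).trans (h.upper q q.2)
    have h2 := ENNReal.toReal_mono (ENNReal.mul_ne_top ENNReal.ofReal_ne_top (h.volt q)) h1
    rw [ENNReal.toReal_mul, ENNReal.toReal_ofReal hA.le] at h2
    simpa [mul_comm] using h2
  have gb : ∀ x, ‖g x‖ ≤ 2 ^ n * l := by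
    intro x
    by_cases hx : x ∈ Om Q S
    · obtain ⟨q, hq⟩ := Set.mem_iUnion.1 hx
      rw [g1 q x hq]; exact avb q
    · rw [g0 x hx]
      refine (h.off x fun q hq hxq => hx (Set.mem_iUnion.2 ⟨⟨q, hq⟩, hxq⟩)).trans ?_
      exact le_mul_of_one_le_left hl.le (one_le_pow₀ (by norm_num))
  have gbe : ∀ x, ‖g x‖ₑ ≤ ENNReal.ofReal (2 ^ n * l) := fun x => by
    rw [← ofReal_norm]; exact ENNReal.ofReal_le_ofReal (gb x)
  have gi : Integrable g := by
    refine ⟨hgm.aestronglyMeasurable, ?_⟩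
    show ∫⁻ x, ‖g x‖ₑ < ∞
    rw [← lintegral_add_compl _ hO]
    refine ENNReal.add_lt_top.2 ⟨?_, ?_⟩
    · refine (lintegral_mono fun x => gbe x).trans_lt ?_
      rw [setLIntegral_const]
      exact ENNReal.mul_lt_top ENNReal.ofReal_lt_top (om_fin h hf)
    · rw [setLIntegral_congr_fun hO.compl (fun x hx => by rw [g0 x hx])]
      exact (setLIntegral_le_lintegral _ _).trans_lt hf.2
  refine ⟨g, hgm, gi, gb, g0, ?_, ?_, ?_⟩
  · intro q hq
    rw [integral_sub hf.integrableOn gi.integrableOn,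
      setIntegral_congr_fun (h.meas q) (fun x hx => g1 ⟨q, hq⟩ x hx), setIntegral_const, hav]
    simp only [Measure.real]
    rw [smul_smul, mul_inv_cancel₀ (vpos q).ne', one_smul, sub_self]
  · intro q hq
    calc ∫⁻ x in Q q, ‖f x - g x‖ₑ ≤ ∫⁻ x in Q q, (‖f x‖ₑ + ENNReal.ofReal (2 ^ n * l)) :=
          lintegral_mono fun x => (enorm_sub_le).trans (by gcongr; exact gbe x)
      _ = (∫⁻ x in Q q, ‖f x‖ₑ) + ENNReal.ofReal (2 ^ n * l) * volume (Q q) := by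
          rw [lintegral_add_right _ measurable_const, setLIntegral_const]
      _ ≤ ENNReal.ofReal (2 ^ n * l) * volume (Q q) + ENNReal.ofReal (2 ^ n * l) * volume (Q q) := by
          gcongr; exact h.upper q hq
      _ = _ := by rw [← add_mul, ← ENNReal.ofReal_add hA.le hA.le, two_mul]
  · rw [← lintegral_add_compl _ hO, add_comm]
    refine add_le_add ?_ ?_
    · rw [setLIntegral_congr_fun hO.compl (g := fun x => {x | ‖f x‖ ≤ l}.indicator (fun x => ‖f x‖ₑ ^ (2:ℝ)) x)]
      · exact (setLIntegral_le_lintegral _ _)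
      · intro x hx
        simp only
        rw [g0 x hx, Set.indicator_of_mem]
        exact h.off x fun q hq hxq => hx (Set.mem_iUnion.2 ⟨⟨q, hq⟩, hxq⟩)
    · rw [← setLIntegral_const]
      refine lintegral_mono fun x => ?_
      rw [enorm_sq_eq]
      exact ENNReal.ofReal_le_ofReal (pow_le_pow_left₀ (norm_nonneg _) (gb x) 2)

end MMax

namespace MMax

/-- the union of the dilated balls -/
def Ost {n : ℕ} (S : Set (ℤ × (Fin n → ℤ))) (c : (ℤ × (Fin n → ℤ)) → EE n)
    (d : (ℤ × (Fin n → ℤ)) → ℝ) : Set (EE n) :=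
  ⋃ q : S, Metric.ball (c q) (2 * d q)

lemma ost_meas {n : ℕ} (S : Set (ℤ × (Fin n → ℤ))) (c : (ℤ × (Fin n → ℤ)) → EE n)
    (d : (ℤ × (Fin n → ℤ)) → ℝ) : MeasurableSet (Ost S c d) :=
  MeasurableSet.iUnion fun _ => measurableSet_ball

lemma ost_vol {n : ℕ} {CN : ℝ} {f : EE n → ℂ} {l : ℝ} {Q S c d D} (h : CZ n CN f l Q S c d D) :
    volume (Ost S c d) ≤ ENNReal.ofReal CN * volume (Om Q S) := by
  unfold Om Ost
  rw [measure_iUnion (pw_disj h.disj) (fun q => h.meas q), ← ENNReal.tsum_mul_left]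
  exact (measure_iUnion_le _).trans (ENNReal.tsum_le_tsum fun q => h.ballvol q)

lemma bad_ptwise {n : ℕ} (hn : 1 ≤ n) {CN : ℝ} {f : EE n → ℂ} {l : ℝ} {Q S c d D} (h : CZ n CN f l Q S c d D)
    (a : ℂ) (ha : 0 < a.re) (ha2 : 2 * a.re < n)
    (b : EE n → ℂ) (hb : Integrable b) (M : ℝ) (hM : ∀ x, ‖b x‖ ≤ M) (b0 : ∀ x, x ∉ Om Q S → b x = 0)
    (bq : ∀ q ∈ S, ∫ x in Q q, b x = 0) (x : EE n) :
    ‖conv n a b x‖ₑ ≤ ∑' q : S, ∫⁻ y in Q q, ‖ker n a (x - y) - ker n a (x - c q)‖ₑ * ‖b y‖ₑ := by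
  have hi := ker_integrable n hn a ha ha2 b hb M hM x
  have e1 : conv n a b x = ∫ y in Om Q S, ker n a (x - y) * b y := by
    unfold conv
    rw [setIntegral_eq_integral_of_forall_compl_eq_zero]
    intro y hy
    rw [b0 y hy, mul_zero]
  rw [e1, Om, integral_iUnion (fun q : S => h.meas q) (pw_disj h.disj) hi.integrableOn]
  refine enorm_tsum_le_tsum_enorm.trans (ENNReal.tsum_le_tsum fun q => ?_)
  have e2 : ∫ y in Q q, ker n a (x - y) * b y = ∫ y in Q q, (ker n a (x - y) - ker n a (x - c q)) * b y := by
    simp_rw [sub_mul]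
    rw [integral_sub hi.integrableOn (hb.const_mul _).integrableOn, integral_const_mul, bq q q.2]
    simp
  rw [e2]
  refine (enorm_integral_le_lintegral_enorm _).trans (lintegral_mono fun y => ?_)
  rw [enorm_mul]

lemma bad_bound {n : ℕ} (hn : 1 ≤ n) {CN : ℝ} {f : EE n → ℂ} {l : ℝ} {Q S c d D} (h : CZ n CN f l Q S c d D)
    (a : ℂ) (ha : 0 < a.re) (ha2 : 2 * a.re < n)
    (b : EE n → ℂ) (hb : Integrable b) (hbm : Measurable b) (M : ℝ) (hM : ∀ x, ‖b x‖ ≤ M) (b0 : ∀ x, x ∉ Om Q S → b x = 0)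
    (bq : ∀ q ∈ S, ∫ x in Q q, b x = 0) (B : ℝ≥0∞)
    (bl : ∀ q ∈ S, ∫⁻ x in Q q, ‖b x‖ₑ ≤ B * volume (Q q)) (H : ℝ≥0∞)
    (hH : ∀ d, 0 < d → d ≤ D → ∀ y : EE n, ‖y‖ ≤ d →
      ∫⁻ x in {x | 2 * d ≤ ‖x‖}, ‖ker n a (x - y) - ker n a x‖ₑ ≤ H) :
    ∫⁻ x in (Ost S c d)ᶜ, ‖conv n a b x‖ₑ ≤ H * B * volume (Om Q S) := by
  have hk := measurable_ker n a
  have m1 : ∀ q, Measurable (fun p : EE n × EE n => ‖ker n a (p.1 - p.2) - ker n a (p.1 - c q)‖ₑ * ‖b p.2‖ₑ) := by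
    intro q
    have h1 : Measurable (fun p : EE n × EE n => ker n a (p.1 - p.2)) := hk.comp (by fun_prop)
    have h2 : Measurable (fun p : EE n × EE n => ker n a (p.1 - c q)) := hk.comp (by fun_prop)
    have h3 : Measurable (fun p : EE n × EE n => b p.2) := hbm.comp (by fun_prop)
    exact (h1.sub h2).enorm.mul h3.enorm
  have key : ∀ q ∈ S, ∀ y ∈ Q q, ∫⁻ x in (Ost S c d)ᶜ, ‖ker n a (x - y) - ker n a (x - c q)‖ₑ ≤ H := by
    intro q hq y hy
    have h1 := hH (d q) (h.dpos q) (h.dD q hq) (y - c q) (h.sub q y hy)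
    refine le_trans ?_ h1
    have hms : MeasurableSet {x : EE n | 2 * d q ≤ ‖x‖} := measurableSet_le measurable_const measurable_norm
    rw [← lintegral_indicator (ost_meas S c d).compl, ← lintegral_indicator hms]
    refine le_of_le_of_eq ?_ (lintegral_sub_right_eq_self (μ := volume) _ (c q))
    refine lintegral_mono fun x => ?_
    by_cases hx : x ∈ (Ost S c d)ᶜ
    · rw [Set.indicator_of_mem hx, Set.indicator_of_mem]
      · rw [sub_sub_sub_cancel_right]
      · simp only [Set.mem_ofPred_eq]
        by_contra hlt
        push Not at hlt
        exact hx (Set.mem_iUnion.2 ⟨⟨q, hq⟩, by simpa [dist_eq_norm] using hlt⟩)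
    · rw [Set.indicator_of_notMem hx]; exact zero_le
  calc ∫⁻ x in (Ost S c d)ᶜ, ‖conv n a b x‖ₑ
      ≤ ∫⁻ x in (Ost S c d)ᶜ, ∑' q : S, ∫⁻ y in Q q, ‖ker n a (x - y) - ker n a (x - c q)‖ₑ * ‖b y‖ₑ :=
        lintegral_mono fun x => bad_ptwise hn h a ha ha2 b hb M hM b0 bq x
    _ = ∑' q : S, ∫⁻ x in (Ost S c d)ᶜ, ∫⁻ y in Q q, ‖ker n a (x - y) - ker n a (x - c q)‖ₑ * ‖b y‖ₑ :=
        lintegral_tsum fun q => ((m1 q).lintegral_prod_right').aemeasurable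
    _ ≤ ∑' q : S, H * B * volume (Q q) := by
        refine ENNReal.tsum_le_tsum fun q => ?_
        rw [lintegral_lintegral_swap (m1 q).aemeasurable]
        calc ∫⁻ y in Q q, ∫⁻ x in (Ost S c d)ᶜ, ‖ker n a (x - y) - ker n a (x - c q)‖ₑ * ‖b y‖ₑ
            ≤ ∫⁻ y in Q q, H * ‖b y‖ₑ := by
              refine setLIntegral_mono' (h.meas q) fun y hy => ?_
              rw [lintegral_mul_const' _ _ enorm_ne_top]
              gcongr
              exact key q q.2 y hy
          _ = H * ∫⁻ y in Q q, ‖b y‖ₑ := lintegral_const_mul _ hbm.enorm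
          _ ≤ H * (B * volume (Q q)) := by gcongr; exact bl q q.2
          _ = _ := by ring
    _ = _ := by
        rw [ENNReal.tsum_mul_left, Om, measure_iUnion (pw_disj h.disj) (fun q => h.meas q)]

end MMax

namespace MMax

/-- imaginary powers of the Laplacian -/
noncomputable def Tu (n : ℕ) (u : ℝ) (f : EE n → ℂ) (x : EE n) : ℂ :=
  ∫ ξ, ((‖ξ‖ : ℝ) : ℂ) ^ (2 * (I * u)) * 𝓕 f ξ * cexp (2 * Real.pi * I * (⟪x, ξ⟫ : ℝ))

lemma ae_ne_zero (n : ℕ) (hn : 1 ≤ n) : ∀ᵐ ξ : EE n, 0 < ‖ξ‖ := by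
  have := ae_norm_pos n hn 0
  simpa using this

lemma Tu_tendsto (n : ℕ) (hn : 1 ≤ n) (u : ℝ) (f : SchwartzMap (EE n) ℂ) (x : EE n) :
    Tendsto (fun δ : ℝ => conv n (δ - I * u) f x) (𝓝[>] 0) (𝓝 (Tu n u f x)) := by
  have hn' : (1:ℝ) ≤ n := by exact_mod_cast hn
  have ev : ∀ᶠ δ : ℝ in 𝓝[>] 0, 0 < δ ∧ δ < 1 / 4 := Ioo_mem_nhdsGT (by norm_num)
  have hre : ∀ δ : ℝ, ((δ : ℂ) - I * u).re = δ := by intro δ; simp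
  have e1 : ∀ᶠ δ : ℝ in 𝓝[>] 0, ∫ ξ, ((‖ξ‖:ℝ):ℂ)^(-(2*((δ:ℂ) - I * u))) * 𝓕 f ξ * cexp (2 * Real.pi * I * (⟪x, ξ⟫ : ℝ)) =
      conv n (δ - I * u) f x := by
    filter_upwards [ev] with δ hδ
    exact riesz_id n hn _ (by rw [hre]; exact hδ.1) (by rw [hre]; linarith [hδ.2]) f x
  refine Tendsto.congr' e1 ?_
  obtain ⟨M, hM⟩ := schwartz_bdd (𝓕 f : SchwartzMap (EE n) ℂ)
  have hi : Integrable (𝓕 f : SchwartzMap (EE n) ℂ) := (𝓕 f : SchwartzMap (EE n) ℂ).integrable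
  have hi2 := cpow_prod_int n hn (((1/4:ℝ)):ℂ) (by norm_num) (by norm_num; linarith) _ hi M hM
  refine tendsto_integral_filter_of_dominated_convergence
    (fun ξ => ‖𝓕 f ξ‖ + ‖((‖ξ‖:ℝ):ℂ)^(-(2*(((1/4:ℝ)):ℂ))) * 𝓕 f ξ‖) ?_ ?_ ?_ ?_
  · refine Eventually.of_forall fun δ => ?_
    refine AEStronglyMeasurable.mul (AEStronglyMeasurable.mul ?_ hi.1) ?_
    · exact Measurable.aestronglyMeasurable (by fun_prop)
    · exact Continuous.aestronglyMeasurable (by fun_prop)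
  · filter_upwards [ev] with δ hδ
    filter_upwards [ae_ne_zero n hn] with ξ hξ
    rw [norm_mul, norm_mul, norm_char, mul_one, norm_mul, ← one_add_mul]
    gcongr
    rw [Complex.norm_cpow_eq_rpow_re_of_pos hξ, Complex.norm_cpow_eq_rpow_re_of_pos hξ]
    have r1 : (-(2*((δ:ℂ) - I * u))).re = -(2*δ) := by simp
    have r2 : (-(2*(((1/4:ℝ)):ℂ))).re = -(2*(1/4)) := by simp
    rw [r1, r2]
    rcases le_total 1 ‖ξ‖ with h1 | h1
    · have := Real.rpow_le_one_of_one_le_of_nonpos h1 (show -(2*δ) ≤ 0 by linarith [hδ.1])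
      have := Real.rpow_nonneg hξ.le (-(2*(1/4)))
      linarith
    · have := Real.rpow_le_rpow_of_exponent_ge hξ h1 (show -(2*(1/4)) ≤ -(2*δ) by linarith [hδ.2])
      linarith
  · exact hi.norm.add hi2.norm
  · filter_upwards [ae_ne_zero n hn] with ξ hξ
    refine Tendsto.mul (Tendsto.mul ?_ tendsto_const_nhds) tendsto_const_nhds
    have hne : ((‖ξ‖:ℝ):ℂ) ≠ 0 := by exact_mod_cast hξ.ne'
    have hc : Continuous (fun δ : ℝ => ((‖ξ‖:ℝ):ℂ)^(-(2*((δ:ℂ) - I * u)))) := by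
      refine Continuous.const_cpow (by fun_prop) (Or.inl hne)
    have := (hc.tendsto 0).mono_left (nhdsWithin_le_nhds (s := Set.Ioi 0))
    convert this using 3
    simp

lemma weak_a {n : ℕ} (hn : 1 ≤ n) {CN : ℝ} {f : EE n → ℂ} {l : ℝ} {Q S c d D} (h : CZ n CN f l Q S c d D)
    (a : ℂ) (ha : 0 < a.re) (ha2 : 2 * a.re < n) (hf : Integrable f) (hfc : Continuous f) (M : ℝ) (hM : ∀ x, ‖f x‖ ≤ M)
    (g : EE n → ℂ) (hg : Integrable g) (hgm : Measurable g) (M' : ℝ) (hM' : ∀ x, ‖g x‖ ≤ M')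
    (g0 : ∀ x, x ∉ Om Q S → g x = f x)
    (bq : ∀ q ∈ S, ∫ x in Q q, (f x - g x) = 0) (B : ℝ≥0∞)
    (bl : ∀ q ∈ S, ∫⁻ x in Q q, ‖f x - g x‖ₑ ≤ B * volume (Q q)) (H : ℝ≥0∞)
    (hH : ∀ d, 0 < d → d ≤ D → ∀ y : EE n, ‖y‖ ≤ d →
      ∫⁻ x in {x | 2 * d ≤ ‖x‖}, ‖ker n a (x - y) - ker n a x‖ₑ ≤ H) (L : ℝ) (hL : 0 < L) :
    volume {x | 2 * L < ‖conv n a f x‖} ≤ ENNReal.ofReal (L ^ 2)⁻¹ * (∫⁻ ξ, ENNReal.ofReal (‖ξ‖ ^ (-(4 * a.re))) * ‖𝓕 g ξ‖ₑ ^ (2:ℝ))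
      + ENNReal.ofReal CN * volume (Om Q S) + ENNReal.ofReal L⁻¹ * (H * B * volume (Om Q S)) := by
  have hb : Integrable (fun x => f x - g x) := hf.sub hg
  have hbM : ∀ x, ‖f x - g x‖ ≤ M + M' := fun x => (norm_sub_le _ _).trans (add_le_add (hM x) (hM' x))
  have lin : ∀ x, conv n a f x = conv n a g x + conv n a (fun x => f x - g x) x := by
    intro x
    unfold conv
    rw [← integral_add (ker_integrable n hn a ha ha2 g hg M' hM' x) (ker_integrable n hn a ha ha2 _ hb _ hbM x)]
    congr 1; ext y; ring
  have hbad := bad_bound hn h a ha ha2 (fun x => f x - g x) hb (hfc.measurable.sub hgm) _ hbM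
    (fun x hx => by simp [g0 x hx]) bq B bl H hH
  have hl2 := conv_l2 n hn a ha ha2 g hg M' hM'
  have sub : {x | 2 * L < ‖conv n a f x‖} ⊆ ({x | ENNReal.ofReal (L^2) ≤ ‖conv n a g x‖ₑ ^ (2:ℝ)} ∪ Ost S c d) ∪
      ({x | ENNReal.ofReal L ≤ ‖conv n a (fun x => f x - g x) x‖ₑ} ∩ (Ost S c d)ᶜ) := by
    intro x hx
    simp only [Set.mem_ofPred_eq] at hx
    by_cases hO : x ∈ Ost S c d
    · exact Or.inl (Or.inr hO)
    by_cases h1 : L ≤ ‖conv n a g x‖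
    · left; left
      simp only [Set.mem_ofPred_eq]
      rw [enorm_sq_eq]
      exact ENNReal.ofReal_le_ofReal (pow_le_pow_left₀ hL.le h1 2)
    · right
      refine ⟨?_, hO⟩
      simp only [Set.mem_ofPred_eq]
      rw [← ofReal_norm]
      refine ENNReal.ofReal_le_ofReal ?_
      rw [lin] at hx
      have := norm_add_le (conv n a g x) (conv n a (fun x => f x - g x) x)
      linarith
  have hcg := conv_meas n a g hg.1
  have hcb := conv_meas n a _ hb.1
  refine (measure_mono sub).trans ((measure_union_le _ _).trans (add_le_add ((measure_union_le _ _).trans (add_le_add ?_ (ost_vol h))) ?_))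
  · refine (meas_ge_le_lintegral_div (hcg.enorm.pow_const _) (by simp [hL.ne']) ENNReal.ofReal_ne_top).trans ?_
    rw [ENNReal.div_eq_inv_mul, ← ENNReal.ofReal_inv_of_pos (by positivity)]
    gcongr
  · rw [← Measure.restrict_apply' (ost_meas S c d).compl]
    refine (meas_ge_le_lintegral_div hcb.enorm.restrict (by simp [hL]) ENNReal.ofReal_ne_top).trans ?_
    rw [ENNReal.div_eq_inv_mul, ← ENNReal.ofReal_inv_of_pos (by positivity)]
    gcongr

lemma meas_liminf_le {α : Type*} [MeasurableSpace α] (μ : Measure α) (E : ℕ → Set α) (F : Set α)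
    (hF : ∀ x ∈ F, ∀ᶠ k in atTop, x ∈ E k) (R : ℕ → ℝ≥0∞) (R0 : ℝ≥0∞) (hR : Tendsto R atTop (𝓝 R0))
    (hE : ∀ᶠ k in atTop, μ (E k) ≤ R k) : μ F ≤ R0 := by
  have hsub : F ⊆ ⋃ K : ℕ, ⋂ k ≥ K, E k := by
    intro x hx
    obtain ⟨K, hK⟩ := eventually_atTop.1 (hF x hx)
    exact Set.mem_iUnion.2 ⟨K, by simpa using hK⟩
  refine (measure_mono hsub).trans ?_
  have hm : Monotone (fun K : ℕ => ⋂ k ≥ K, E k) := by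
    intro K K' hKK x hx
    simp only [ge_iff_le, Set.mem_iInter] at hx ⊢
    exact fun k hk => hx k (hKK.trans hk)
  rw [hm.measure_iUnion]
  refine iSup_le fun K => ge_of_tendsto hR ?_
  filter_upwards [hE, eventually_ge_atTop K] with k hk hKk
  exact (measure_mono (Set.iInter₂_subset k hKk)).trans hk

end MMax

namespace MMax

lemma weak_arith (IN IG I2 I1 V : ℝ≥0∞) (CN CG l A P : ℝ) (hCN : 0 < CN) (hCG : 0 < CG) (hl : 0 < l) (hA : 1 ≤ A) (hP : 0 < P)
    (h1 : IN ≤ IG) (h2 : IG ≤ I2 + ENNReal.ofReal ((P * l) ^ 2) * V) (hV : V ≤ ENNReal.ofReal (2 / l) * I1) :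
    ENNReal.ofReal ((A * l) ^ 2)⁻¹ * IN + ENNReal.ofReal CN * V
      + ENNReal.ofReal (A * l)⁻¹ * (ENNReal.ofReal (CG * A) * ENNReal.ofReal (2 * (P * l)) * V)
      ≤ ENNReal.ofReal (1 + 2 * (P ^ 2 + CN + 2 * CG * P)) *
        (ENNReal.ofReal (l ^ 2)⁻¹ * I2 + ENNReal.ofReal l⁻¹ * I1) := by
  have hA0 : 0 < A := by linarith
  calc ENNReal.ofReal ((A * l) ^ 2)⁻¹ * IN + ENNReal.ofReal CN * V
      + ENNReal.ofReal (A * l)⁻¹ * (ENNReal.ofReal (CG * A) * ENNReal.ofReal (2 * (P * l)) * V)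
      ≤ ENNReal.ofReal (l ^ 2)⁻¹ * (I2 + ENNReal.ofReal ((P * l) ^ 2) * V) + ENNReal.ofReal CN * V
      + ENNReal.ofReal (A * l)⁻¹ * (ENNReal.ofReal (CG * A) * ENNReal.ofReal (2 * (P * l)) * V) := by
        gcongr
        · exact le_mul_of_one_le_left hl.le hA
        · exact h1.trans h2
    _ = ENNReal.ofReal (l ^ 2)⁻¹ * I2 + ENNReal.ofReal (P ^ 2 + CN + 2 * CG * P) * V := by
        have e1 : ENNReal.ofReal (l ^ 2)⁻¹ * ENNReal.ofReal ((P * l) ^ 2) = ENNReal.ofReal (P ^ 2) := by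
          rw [← ENNReal.ofReal_mul (by positivity)]; congr 1; field_simp
        have e2 : ENNReal.ofReal (A * l)⁻¹ * (ENNReal.ofReal (CG * A) * ENNReal.ofReal (2 * (P * l))) =
            ENNReal.ofReal (2 * CG * P) := by
          rw [← ENNReal.ofReal_mul (by positivity), ← ENNReal.ofReal_mul (by positivity)]; congr 1; field_simp
        rw [ENNReal.ofReal_add (by positivity) (by positivity), ENNReal.ofReal_add (by positivity) (by positivity),
          ← e1, ← e2]
        ring
    _ ≤ ENNReal.ofReal (l ^ 2)⁻¹ * I2 + ENNReal.ofReal (P ^ 2 + CN + 2 * CG * P) * (ENNReal.ofReal (2 / l) * I1) := by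
        gcongr
    _ = 1 * (ENNReal.ofReal (l ^ 2)⁻¹ * I2) + ENNReal.ofReal (2 * (P ^ 2 + CN + 2 * CG * P)) * (ENNReal.ofReal l⁻¹ * I1) := by
        have e1 : ENNReal.ofReal (P ^ 2 + CN + 2 * CG * P) * ENNReal.ofReal (2 / l) =
            ENNReal.ofReal (2 * (P ^ 2 + CN + 2 * CG * P)) * ENNReal.ofReal l⁻¹ := by
          rw [← ENNReal.ofReal_mul (by positivity), ← ENNReal.ofReal_mul (by positivity)]; congr 1; field_simp
        rw [one_mul, ← mul_assoc, e1, mul_assoc]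
    _ ≤ _ := by
        refine le_of_le_of_eq ?_ (mul_add _ _ _).symm
        refine add_le_add (mul_le_mul' ?_ le_rfl) (mul_le_mul' (ENNReal.ofReal_le_ofReal ?_) le_rfl)
        · rw [← ENNReal.ofReal_one]
          apply ENNReal.ofReal_le_ofReal
          have : 0 ≤ 2 * (P ^ 2 + CN + 2 * CG * P) := by positivity
          linarith
        · linarith

theorem weak (n : ℕ) (hn : 1 ≤ n) (s : ℝ) (hs : (n:ℝ) / 2 < s) : ∃ K : ℝ, 0 < K ∧
    ∀ (u : ℝ) (f : SchwartzMap (EE n) ℂ) (l : ℝ), 0 < l →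
      volume {x | 2 * ((1 + |u|) ^ s * l) < ‖Tu n u f x‖} ≤ ENNReal.ofReal K *
        (ENNReal.ofReal (l ^ 2)⁻¹ * (∫⁻ x, {x | ‖f x‖ ≤ l}.indicator (fun x => ‖f x‖ₑ ^ (2:ℝ)) x) +
          ENNReal.ofReal l⁻¹ * ∫⁻ x, {x | l / 2 < ‖f x‖}.indicator (fun x => ‖f x‖ₑ) x) := by
  have hn' : (1:ℝ) ≤ n := by exact_mod_cast hn
  obtain ⟨CN, hCN, hcz⟩ := cz_exists n hn
  set ε := min 1 (s - n / 2) with hε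
  have hε0 : 0 < ε := lt_min one_pos (by linarith)
  obtain ⟨CH, hCH, hh⟩ := horm n hn ε hε0 (min_le_left _ _)
  obtain ⟨CG, hCG, hgam⟩ := gam_bound n
  refine ⟨1 + 2 * ((2 ^ n) ^ 2 + CN + 2 * (CH * CG) * 2 ^ n), by positivity, fun u f l hl => ?_⟩
  have hfi : Integrable f := f.integrable
  obtain ⟨M, hM⟩ := schwartz_bdd f
  obtain ⟨Q, S, c, d, D, h⟩ := hcz f f.continuous hfi l hl
  obtain ⟨g, hgm, hgi, hgb, g0, bq, bl, hg2⟩ := good_bad h hl f.continuous hfi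
  have hA : 1 ≤ (1 + |u|) ^ s := Real.one_le_rpow (by linarith [abs_nonneg u]) (by linarith)
  set A := (1 + |u|) ^ s with hAdef
  have hAl : 0 < A * l := by positivity
  set D' := max D 1 with hD'
  have hD0 : 0 < D' := lt_of_lt_of_le one_pos (le_max_right _ _)
  have hre : ∀ δ : ℝ, ((δ : ℂ) - I * u).re = δ := by intro δ; simp
  have him : ∀ δ : ℝ, |((δ : ℂ) - I * u).im| = |u| := by intro δ; simp
  -- the bound at regularity `δ`
  set R : ℝ → ℝ≥0∞ := fun δ => ENNReal.ofReal ((A * l) ^ 2)⁻¹ * (∫⁻ ξ, ENNReal.ofReal (‖ξ‖ ^ (-(4 * δ))) * ‖𝓕 g ξ‖ₑ ^ (2:ℝ))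
      + ENNReal.ofReal CN * volume (Om Q S) + ENNReal.ofReal (A * l)⁻¹ *
      (ENNReal.ofReal (CH * ‖gam n (δ - I * u)‖ * (1 + |u|) ^ ε * D' ^ (2 * δ)) * ENNReal.ofReal (2 * (2 ^ n * l)) * volume (Om Q S)) with hR
  have hb : ∀ δ : ℝ, 0 < δ → 4 * δ ≤ ε → volume {x | 2 * (A * l) < ‖conv n (δ - I * u) f x‖} ≤ R δ := by
    intro δ h1 h2
    have hε1 : ε ≤ 1 := min_le_left _ _
    have := weak_a hn h (δ - I * u) (by rwa [hre]) (by rw [hre]; linarith) hfi f.continuous M hM g hgi hgm _ hgb g0 bq _ bl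
      (ENNReal.ofReal (CH * ‖gam n (δ - I * u)‖ * (1 + |u|) ^ ε * D' ^ (2 * δ)))
      (fun d hd hdD y hy => by
        have := hh (δ - I * u) (by rwa [hre]) (by rwa [hre]) D' d hd (hdD.trans (le_max_left _ _)) y hy
        rwa [hre, him] at this) (A * l) hAl
    rwa [hre] at this
  set G := ENNReal.ofReal (CH * ‖gam n (-(I * u))‖ * (1 + |u|) ^ ε * 1) with hG
  have hV := om_fin h hfi
  have hRt : Tendsto R (𝓝[>] 0) (𝓝 (ENNReal.ofReal ((A * l) ^ 2)⁻¹ * (∫⁻ ξ, ‖𝓕 g ξ‖ₑ ^ (2:ℝ))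
      + ENNReal.ofReal CN * volume (Om Q S) + ENNReal.ofReal (A * l)⁻¹ *
      (G * ENNReal.ofReal (2 * (2 ^ n * l)) * volume (Om Q S)))) := by
    refine Tendsto.add (Tendsto.add ?_ tendsto_const_nhds) ?_
    · exact ENNReal.Tendsto.const_mul (conv_l2_tendsto n hn g hgi _ hgb) (Or.inr ENNReal.ofReal_ne_top)
    · refine ENNReal.Tendsto.const_mul ?_ (Or.inr ENNReal.ofReal_ne_top)
      refine ENNReal.Tendsto.mul_const ?_ (Or.inr hV.ne)
      refine ENNReal.Tendsto.mul_const ?_ (Or.inr ENNReal.ofReal_ne_top)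
      refine ENNReal.tendsto_ofReal ?_
      refine Tendsto.mul (Tendsto.mul (Tendsto.mul tendsto_const_nhds (gam_tendsto n hn u).norm) tendsto_const_nhds) ?_
      have hc : Continuous (fun δ : ℝ => D' ^ (2 * δ)) :=
        Continuous.rpow continuous_const (by fun_prop) (fun _ => Or.inl hD0.ne')
      have := (hc.tendsto 0).mono_left (nhdsWithin_le_nhds (s := Set.Ioi 0))
      simpa using this
  -- a sequence going to zero
  have hseq : Tendsto (fun k : ℕ => 1 / ((k:ℝ) + 1)) atTop (𝓝[>] 0) := by
    refine tendsto_nhdsWithin_iff.2 ⟨tendsto_one_div_add_atTop_nhds_zero_nat, Eventually.of_forall fun k => ?_⟩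
    simp only [Set.mem_Ioi]; positivity
  have hfin := meas_liminf_le volume (fun k : ℕ => {x | 2 * (A * l) < ‖conv n ((1 / ((k:ℝ) + 1) : ℝ) - I * u) f x‖})
    {x | 2 * (A * l) < ‖Tu n u f x‖}
    (fun x hx => ((Tu_tendsto n hn u f x).norm.comp hseq).eventually_const_lt hx)
    _ _ (hRt.comp hseq) (by
      have : ∀ᶠ δ : ℝ in 𝓝[>] 0, 0 < δ ∧ δ < ε / 4 := Ioo_mem_nhdsGT (by positivity)
      filter_upwards [hseq.eventually this] with k hk
      exact hb _ hk.1 (by linarith [hk.2]))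
  refine hfin.trans ?_
  have hGA : G ≤ ENNReal.ofReal (CH * CG * A) := by
    apply ENNReal.ofReal_le_ofReal
    have h1 := hgam u
    have hpos : 0 < 1 + |u| := by positivity
    calc CH * ‖gam n (-(I * u))‖ * (1 + |u|) ^ ε * 1 ≤ CH * (CG * (1 + |u|) ^ ((n:ℝ) / 2)) * (1 + |u|) ^ ε * 1 := by gcongr
      _ = CH * CG * (1 + |u|) ^ ((n:ℝ) / 2 + ε) := by rw [Real.rpow_add hpos]; ring
      _ ≤ CH * CG * A := by
        refine mul_le_mul_of_nonneg_left (Real.rpow_le_rpow_of_exponent_le ?_ ?_) (by positivity)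
        · linarith [abs_nonneg u]
        · have := min_le_right 1 (s - n / 2); linarith
  refine le_trans ?_ (weak_arith _ _ _ _ _ CN (CH * CG) l A (2 ^ n) hCN (by positivity) hl hA (by positivity)
    (fourier_l2 g hgi) hg2 (om_vol h))
  gcongr

end MMax

namespace MMax

lemma tail1 (r : ℝ) (hr2 : r < 2) (y : ℝ) (hy : 0 ≤ y) :
    ∫⁻ l in Set.Ioi (0:ℝ), ENNReal.ofReal (l ^ (r - 3)) * (if y ≤ l then ENNReal.ofReal (y ^ 2) else 0)
      ≤ ENNReal.ofReal (1 / (2 - r)) * ENNReal.ofReal (y ^ r) := by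
  rcases hy.eq_or_lt with rfl | hy
  · simp
  have e : ∀ l : ℝ, ENNReal.ofReal (l ^ (r - 3)) * (if y ≤ l then ENNReal.ofReal (y ^ 2) else 0) =
      (Set.Ici y).indicator (fun l => ENNReal.ofReal (l ^ (r - 3)) * ENNReal.ofReal (y ^ 2)) l := by
    intro l
    by_cases h : y ≤ l <;> simp [h]
  simp_rw [e]
  refine (setLIntegral_le_lintegral _ _).trans ?_
  rw [lintegral_indicator measurableSet_Ici, ← Measure.restrict_congr_set Ioi_ae_eq_Ici,
    lintegral_mul_const' _ _ ENNReal.ofReal_ne_top,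
    ← ofReal_integral_eq_lintegral_ofReal (integrableOn_Ioi_rpow_of_lt (by linarith) hy),
    integral_Ioi_rpow_of_lt (by linarith) hy, ← ENNReal.ofReal_mul' (by positivity),
    ← ENNReal.ofReal_mul' (by positivity)]
  · apply ENNReal.ofReal_le_ofReal
    have e2 : y ^ r = y ^ (r - 3 + 1) * y ^ 2 := by
      rw [← Real.rpow_two, ← Real.rpow_add hy]; congr 1; ring
    rw [e2]
    have : 2 - r ≠ 0 := by linarith
    have : r - 3 + 1 ≠ 0 := by linarith
    apply le_of_eq
    rw [show 2 - r = -(r - 3 + 1) by ring]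
    field_simp
  · filter_upwards [ae_restrict_mem measurableSet_Ioi] with l hl
    exact Real.rpow_nonneg (hy.le.trans (le_of_lt hl)) _

lemma tail2 (r : ℝ) (hr : 1 < r) (y : ℝ) (hy : 0 ≤ y) :
    ∫⁻ l in Set.Ioi (0:ℝ), ENNReal.ofReal (l ^ (r - 2)) * (if l / 2 < y then ENNReal.ofReal y else 0)
      ≤ ENNReal.ofReal (2 ^ (r - 1) / (r - 1)) * ENNReal.ofReal (y ^ r) := by
  rcases hy.eq_or_lt with rfl | hy
  · simp
  have e : ∀ l : ℝ, ENNReal.ofReal (l ^ (r - 2)) * (if l / 2 < y then ENNReal.ofReal y else 0) =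
      (Set.Iio (2 * y)).indicator (fun l => ENNReal.ofReal (l ^ (r - 2)) * ENNReal.ofReal y) l := by
    intro l
    by_cases h : l / 2 < y
    · rw [if_pos h, Set.indicator_of_mem (by simp only [Set.mem_Iio]; linarith)]
    · rw [if_neg h, Set.indicator_of_notMem (by simp only [Set.mem_Iio]; linarith), mul_zero]
  simp_rw [e]
  have h2y : 0 < 2 * y := by linarith
  have hii : IntegrableOn (fun l : ℝ => l ^ (r - 2)) (Set.Ioc 0 (2 * y)) :=
    (intervalIntegrable_iff_integrableOn_Ioc_of_le h2y.le).1 (intervalIntegral.intervalIntegrable_rpow' (by linarith))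
  rw [lintegral_indicator measurableSet_Iio, Measure.restrict_restrict measurableSet_Iio]
  have hs : Set.Iio (2 * y) ∩ Set.Ioi 0 ⊆ Set.Ioc 0 (2 * y) := fun l hl => ⟨hl.2, le_of_lt hl.1⟩
  refine (lintegral_mono_set hs).trans ?_
  rw [lintegral_mul_const' _ _ ENNReal.ofReal_ne_top,
    ← ofReal_integral_eq_lintegral_ofReal hii, ← intervalIntegral.integral_of_le h2y.le,
    integral_rpow (Or.inl (by linarith)), ← ENNReal.ofReal_mul' (by positivity),
    ← ENNReal.ofReal_mul' (by positivity)]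
  · apply ENNReal.ofReal_le_ofReal
    have e2 : y ^ r = y ^ (r - 1) * y := by
      rw [← Real.rpow_add_one hy.ne']; congr 1; ring
    rw [e2, show r - 2 + 1 = r - 1 by ring, Real.zero_rpow (by linarith), Real.mul_rpow (by norm_num) hy.le]
    apply le_of_eq
    ring
  · filter_upwards [ae_restrict_mem measurableSet_Ioc] with l hl
    exact Real.rpow_nonneg hl.1.le _

lemma Tu_meas2 (n : ℕ) (f : SchwartzMap (EE n) ℂ) :
    StronglyMeasurable (fun p : ℝ × EE n => Tu n p.1 f p.2) := by
  have h : StronglyMeasurable (fun q : (ℝ × EE n) × EE n => ((‖q.2‖ : ℝ) : ℂ) ^ (2 * (I * (q.1.1:ℂ))) *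
      (𝓕 f : SchwartzMap (EE n) ℂ) q.2 * cexp (2 * Real.pi * I * (⟪q.1.2, q.2⟫ : ℝ))) := by
    apply Measurable.stronglyMeasurable
    have h1 : Measurable (fun q : (ℝ × EE n) × EE n => (𝓕 f : SchwartzMap (EE n) ℂ) q.2) :=
      (𝓕 f : SchwartzMap (EE n) ℂ).continuous.measurable.comp measurable_snd
    have h2 : Measurable (fun q : (ℝ × EE n) × EE n => cexp (2 * Real.pi * I * (⟪q.1.2, q.2⟫ : ℝ))) :=
      Continuous.measurable (by fun_prop)
    have h3 : Measurable (fun q : (ℝ × EE n) × EE n => ((‖q.2‖ : ℝ) : ℂ) ^ (2 * (I * (q.1.1:ℂ)))) := by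
      fun_prop
    exact (h3.mul h1).mul h2
  exact h.integral_prod_right'

lemma Tu_meas (n : ℕ) (u : ℝ) (f : SchwartzMap (EE n) ℂ) : StronglyMeasurable (fun x => Tu n u f x) := by
  have h1 : Measurable fun x : EE n => (u, x) := measurable_const.prodMk measurable_id
  have h2 := (Tu_meas2 n f).comp_measurable h1
  simpa only [Function.comp_def] using h2

lemma norm_m (n : ℕ) (u : ℝ) (ξ : EE n) : ‖((‖ξ‖ : ℝ) : ℂ) ^ (2 * (I * (u:ℂ)))‖ ≤ 1 := by
  rcases (norm_nonneg ξ).eq_or_lt with h | h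
  · rw [← h]
    by_cases hu : u = 0
    · simp [hu]
    · rw [ofReal_zero, Complex.zero_cpow (by simp [hu])]; simp
  · rw [Complex.norm_cpow_eq_rpow_re_of_pos h]; simp

lemma Tu_bdd (n : ℕ) (u : ℝ) (f : SchwartzMap (EE n) ℂ) (x : EE n) : ‖Tu n u f x‖ ≤ ∫ ξ, ‖𝓕 f ξ‖ := by
  refine (norm_integral_le_integral_norm _).trans ?_
  have hi : Integrable (𝓕 f : SchwartzMap (EE n) ℂ) := (𝓕 f : SchwartzMap (EE n) ℂ).integrable
  refine integral_mono_of_nonneg (ae_of_all _ fun ξ => norm_nonneg _) hi.norm (ae_of_all _ fun ξ => ?_)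
  simp only
  rw [norm_mul, norm_mul, norm_char, mul_one]
  exact mul_le_of_le_one_left (norm_nonneg _) (norm_m n u ξ)

theorem strong_lt2 (n : ℕ) (hn : 1 ≤ n) (s : ℝ) (hs : (n:ℝ) / 2 < s) (r : ℝ) (hr : 1 < r) (hr2 : r < 2) :
    ∃ K : ℝ, 0 < K ∧ ∀ (u : ℝ) (f : SchwartzMap (EE n) ℂ),
      ∫⁻ x, ‖Tu n u f x‖ₑ ^ r ≤ ENNReal.ofReal (K * (1 + |u|) ^ s) ^ r * ∫⁻ x, ‖f x‖ₑ ^ r := by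
  obtain ⟨K, hK, hw⟩ := weak n hn s hs
  have h2r : 0 < 2 - r := by linarith
  have hr1 : 0 < r - 1 := by linarith
  set K1 := r * K * (1 / (2 - r) + 2 ^ (r - 1) / (r - 1)) with hK1
  have hK10 : 0 < K1 := by positivity
  refine ⟨K1 ^ (1 / r) * 2, by positivity, fun u f => ?_⟩
  set A := (1 + |u|) ^ s with hA
  have hA0 : 0 < A := by positivity
  have e0 : ∀ x, ‖Tu n u f x‖ₑ ^ r = ENNReal.ofReal (2 * A) ^ r * ENNReal.ofReal ((‖Tu n u f x‖ / (2 * A)) ^ r) := by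
    intro x
    rw [← ofReal_norm, ENNReal.ofReal_rpow_of_nonneg (norm_nonneg _) (by linarith),
      ENNReal.ofReal_rpow_of_nonneg (by positivity) (by linarith), ← ENNReal.ofReal_mul (by positivity),
      ← Real.mul_rpow (by positivity) (by positivity)]
    congr 2
    field_simp
  simp_rw [e0]
  have hmT : Measurable (fun x => ‖Tu n u f x‖ / (2 * A)) := ((Tu_meas n u f).measurable.norm).div_const _
  have hfm : Measurable (f : EE n → ℂ) := f.continuous.measurable
  rw [lintegral_const_mul _ (hmT.pow_const r).ennreal_ofReal,
    lintegral_rpow_eq_lintegral_meas_lt_mul volume (ae_of_all _ fun x => by positivity) hmT.aemeasurable (by linarith)]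
  have hset : ∀ l : ℝ, {x | l < ‖Tu n u f x‖ / (2 * A)} = {x | 2 * (A * l) < ‖Tu n u f x‖} := by
    intro l; ext x
    simp only [Set.mem_ofPred_eq]
    rw [lt_div_iff₀ (by positivity)]
    constructor <;> intro h <;> linarith
  simp_rw [hset]
  have main : ∫⁻ l in Set.Ioi (0:ℝ), volume {x | 2 * (A * l) < ‖Tu n u f x‖} * ENNReal.ofReal (l ^ (r - 1)) ≤
      ENNReal.ofReal (K * (1 / (2 - r) + 2 ^ (r - 1) / (r - 1))) * ∫⁻ x, ‖f x‖ₑ ^ r := by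
    have m1 : Measurable (fun p : ℝ × EE n => ENNReal.ofReal (p.1 ^ (r - 3)) * (if ‖f p.2‖ ≤ p.1 then ENNReal.ofReal (‖f p.2‖ ^ 2) else 0)) := by
      have hf2 : Measurable (fun p : ℝ × EE n => ‖f p.2‖) := (hfm.comp measurable_snd).norm
      refine Measurable.mul (by fun_prop) (Measurable.ite (measurableSet_le hf2 measurable_fst) ?_ measurable_const)
      exact (hf2.pow_const 2).ennreal_ofReal
    have m2 : Measurable (fun p : ℝ × EE n => ENNReal.ofReal (p.1 ^ (r - 2)) * (if p.1 / 2 < ‖f p.2‖ then ENNReal.ofReal ‖f p.2‖ else 0)) := by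
      have hf2 : Measurable (fun p : ℝ × EE n => ‖f p.2‖) := (hfm.comp measurable_snd).norm
      refine Measurable.mul (by fun_prop) (Measurable.ite (measurableSet_lt (measurable_fst.div_const 2) hf2) ?_ measurable_const)
      exact hf2.ennreal_ofReal
    have efr : ∀ x, ‖f x‖ₑ ^ r = ENNReal.ofReal (‖f x‖ ^ r) := fun x => by
      rw [← ofReal_norm, ENNReal.ofReal_rpow_of_nonneg (norm_nonneg _) (by linarith)]
    calc ∫⁻ l in Set.Ioi (0:ℝ), volume {x | 2 * (A * l) < ‖Tu n u f x‖} * ENNReal.ofReal (l ^ (r - 1))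
        ≤ ∫⁻ l in Set.Ioi (0:ℝ), ENNReal.ofReal K * ((∫⁻ x, ENNReal.ofReal (l ^ (r - 3)) * (if ‖f x‖ ≤ l then ENNReal.ofReal (‖f x‖ ^ 2) else 0)) +
            ∫⁻ x, ENNReal.ofReal (l ^ (r - 2)) * (if l / 2 < ‖f x‖ then ENNReal.ofReal ‖f x‖ else 0)) := by
          refine setLIntegral_mono' measurableSet_Ioi fun l hl => ?_
          have hl : 0 < l := hl
          refine (mul_le_mul' (hw u f l hl) le_rfl).trans (le_of_eq ?_)
          rw [lintegral_const_mul' _ _ ENNReal.ofReal_ne_top, lintegral_const_mul' _ _ ENNReal.ofReal_ne_top]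
          have a1 : ENNReal.ofReal (l ^ (r - 3)) = ENNReal.ofReal (l ^ 2)⁻¹ * ENNReal.ofReal (l ^ (r - 1)) := by
            rw [← ENNReal.ofReal_mul (by positivity), ← Real.rpow_two, ← Real.rpow_neg hl.le, ← Real.rpow_add hl]
            congr 2; ring
          have a2 : ENNReal.ofReal (l ^ (r - 2)) = ENNReal.ofReal l⁻¹ * ENNReal.ofReal (l ^ (r - 1)) := by
            rw [← ENNReal.ofReal_mul (by positivity), ← Real.rpow_neg_one, ← Real.rpow_add hl]
            congr 2; ring
          have b1 : ∀ x, {x | ‖f x‖ ≤ l}.indicator (fun x => ‖f x‖ₑ ^ (2:ℝ)) x = (if ‖f x‖ ≤ l then ENNReal.ofReal (‖f x‖ ^ 2) else 0) := by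
            intro x; rw [← enorm_sq_eq]; rfl
          have b2 : ∀ x, {x | l / 2 < ‖f x‖}.indicator (fun x => ‖f x‖ₑ) x = (if l / 2 < ‖f x‖ then ENNReal.ofReal ‖f x‖ else 0) := by
            intro x; rw [ofReal_norm]; rfl
          simp_rw [b1, b2]
          rw [a1, a2]
          ring
      _ = ENNReal.ofReal K * ((∫⁻ x, ∫⁻ l in Set.Ioi (0:ℝ), ENNReal.ofReal (l ^ (r - 3)) * (if ‖f x‖ ≤ l then ENNReal.ofReal (‖f x‖ ^ 2) else 0)) +
            ∫⁻ x, ∫⁻ l in Set.Ioi (0:ℝ), ENNReal.ofReal (l ^ (r - 2)) * (if l / 2 < ‖f x‖ then ENNReal.ofReal ‖f x‖ else 0)) := by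
          have m3 : Measurable (fun l : ℝ => ∫⁻ x, ENNReal.ofReal (l ^ (r - 3)) * (if ‖f x‖ ≤ l then ENNReal.ofReal (‖f x‖ ^ 2) else 0)) :=
            m1.lintegral_prod_right'
          rw [lintegral_const_mul' _ _ ENNReal.ofReal_ne_top, lintegral_add_left m3]
          congr 2
          · exact lintegral_lintegral_swap m1.aemeasurable
          · exact lintegral_lintegral_swap m2.aemeasurable
      _ ≤ ENNReal.ofReal K * ((∫⁻ x, ENNReal.ofReal (1 / (2 - r)) * ‖f x‖ₑ ^ r) +
            ∫⁻ x, ENNReal.ofReal (2 ^ (r - 1) / (r - 1)) * ‖f x‖ₑ ^ r) := by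
          simp_rw [efr]
          gcongr with x x
          · exact tail1 r hr2 _ (norm_nonneg _)
          · exact tail2 r hr _ (norm_nonneg _)
      _ = _ := by
          rw [lintegral_const_mul' _ _ ENNReal.ofReal_ne_top, lintegral_const_mul' _ _ ENNReal.ofReal_ne_top,
            ENNReal.ofReal_mul hK.le, ENNReal.ofReal_add (by positivity) (by positivity)]
          ring
  refine (mul_le_mul' le_rfl (mul_le_mul' le_rfl main)).trans (le_of_eq ?_)
  have eK : ENNReal.ofReal (K1 ^ (1 / r) * 2 * A) ^ r = ENNReal.ofReal r *
      ENNReal.ofReal (K * (1 / (2 - r) + 2 ^ (r - 1) / (r - 1))) * ENNReal.ofReal (2 * A) ^ r := by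
    rw [← ENNReal.ofReal_mul (by linarith), ENNReal.ofReal_rpow_of_nonneg (by positivity) (by linarith),
      ENNReal.ofReal_rpow_of_nonneg (by positivity) (by linarith), ← ENNReal.ofReal_mul (by positivity)]
    congr 1
    rw [mul_assoc, Real.mul_rpow (by positivity) (by positivity), ← Real.rpow_mul hK10.le,
      one_div_mul_cancel (by linarith), Real.rpow_one, hK1, mul_assoc r]
  rw [eK]
  ring

end MMax

namespace MMax

lemma m_meas (n : ℕ) (u : ℝ) : Measurable (fun ξ : EE n => ((‖ξ‖ : ℝ) : ℂ) ^ (2 * (I * (u:ℂ)))) := by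
  fun_prop

lemma Tu_pair (n : ℕ) (u : ℝ) (f φ : SchwartzMap (EE n) ℂ) :
    ∫ x, Tu n u f x * φ x = ∫ ξ : EE n, ((‖ξ‖ : ℝ) : ℂ) ^ (2 * (I * (u:ℂ))) * 𝓕 (f : EE n → ℂ) ξ * 𝓕 (φ : EE n → ℂ) (-ξ) := by
  have hfi : Integrable (𝓕 (f : EE n → ℂ)) := (𝓕 f : SchwartzMap (EE n) ℂ).integrable
  have hI1 : Integrable (fun ξ : EE n => ((‖ξ‖ : ℝ) : ℂ) ^ (2 * (I * (u:ℂ))) * 𝓕 (f : EE n → ℂ) ξ) := by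
    refine hfi.mono ((m_meas n u).aestronglyMeasurable.mul hfi.1) (ae_of_all _ fun ξ => ?_)
    rw [norm_mul]
    exact mul_le_of_le_one_left (norm_nonneg _) (norm_m n u ξ)
  have hI : Integrable (Function.uncurry fun (y ξ : EE n) => φ y * (((‖ξ‖ : ℝ) : ℂ) ^ (2 * (I * (u:ℂ))) * 𝓕 (f : EE n → ℂ) ξ *
      cexp (2 * Real.pi * I * (⟪y, ξ⟫ : ℝ)))) (volume.prod volume) := by
    have := (φ.integrable (μ := volume)).mul_prod hI1
    refine this.mono ?_ (ae_of_all _ fun z => ?_)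
    · refine AEStronglyMeasurable.mul φ.integrable.1.comp_fst (AEStronglyMeasurable.mul hI1.1.comp_snd ?_)
      exact Continuous.aestronglyMeasurable (by fun_prop)
    · simp only [Function.uncurry, norm_mul, norm_char, mul_one]
      exact le_rfl
  have e : ∀ y, Tu n u f y * φ y = ∫ ξ, φ y * (((‖ξ‖ : ℝ) : ℂ) ^ (2 * (I * (u:ℂ))) * 𝓕 (f : EE n → ℂ) ξ *
      cexp (2 * Real.pi * I * (⟪y, ξ⟫ : ℝ))) := by
    intro y
    rw [integral_const_mul, mul_comm]; rfl
  simp_rw [e]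
  rw [integral_integral_swap hI]
  congr 1; ext ξ
  rw [fourier_neg_eq]
  refine Eq.trans ?_ (integral_const_mul (((‖ξ‖ : ℝ) : ℂ) ^ (2 * (I * (u:ℂ))) * 𝓕 (f : EE n → ℂ) ξ)
    (fun y => φ y * cexp (2 * Real.pi * I * (⟪y, ξ⟫ : ℝ))))
  refine integral_congr_ae (ae_of_all _ fun y => ?_)
  simp only; ring

lemma Tu_sym (n : ℕ) (u : ℝ) (f φ : SchwartzMap (EE n) ℂ) :
    ∫ x, Tu n u f x * φ x = ∫ x, Tu n u φ x * f x := by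
  rw [Tu_pair, Tu_pair]
  refine Eq.trans ?_ (integral_neg_eq_self _ volume)
  congr 1; ext ξ
  rw [norm_neg, neg_neg]; ring

lemma strong_two (n : ℕ) (u : ℝ) (f : SchwartzMap (EE n) ℂ) :
    ∫⁻ x, ‖Tu n u f x‖ₑ ^ (2:ℝ) ≤ ∫⁻ x, ‖f x‖ₑ ^ (2:ℝ) := by
  refine dual2 2 2 holder22 _ (Tu_meas n u f).aestronglyMeasurable _ (Tu_bdd n u f) _ fun φ => ?_
  rw [Tu_pair]
  have hfi : Integrable (𝓕 (f : EE n → ℂ)) := (𝓕 f : SchwartzMap (EE n) ℂ).integrable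
  have hφi : Integrable (𝓕 (φ : EE n → ℂ)) := (𝓕 φ : SchwartzMap (EE n) ℂ).integrable
  refine (holder_enorm 2 2 holder22 _ _ ((m_meas n u).aestronglyMeasurable.mul hfi.1) hφi.comp_neg.1).trans ?_
  refine mul_le_mul' (ENNReal.rpow_le_rpow ?_ (by norm_num)) (ENNReal.rpow_le_rpow ?_ (by norm_num))
  · rw [← plancherel_s f]
    refine lintegral_mono fun ξ => ENNReal.rpow_le_rpow ?_ (by norm_num)
    rw [Pi.mul_apply, enorm_mul]
    refine mul_le_of_le_one_left zero_le ?_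
    rw [← ofReal_norm, ← ENNReal.ofReal_one]
    exact ENNReal.ofReal_le_ofReal (norm_m n u ξ)
  · rw [← plancherel_s φ]
    exact (lintegral_neg_eq_self (μ := volume) (fun ξ => ‖𝓕 (φ : EE n → ℂ) ξ‖ₑ ^ (2:ℝ))).le

theorem strong (n : ℕ) (hn : 1 ≤ n) (s : ℝ) (hs : (n:ℝ) / 2 < s) (r : ℝ) (hr : 1 < r) :
    ∃ K : ℝ, 0 < K ∧ ∀ (u : ℝ) (f : SchwartzMap (EE n) ℂ),
      ∫⁻ x, ‖Tu n u f x‖ₑ ^ r ≤ ENNReal.ofReal (K * (1 + |u|) ^ s) ^ r * ∫⁻ x, ‖f x‖ₑ ^ r := by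
  rcases lt_trichotomy r 2 with h2 | rfl | h2
  · exact strong_lt2 n hn s hs r hr h2
  · refine ⟨1, one_pos, fun u f => (strong_two n u f).trans ?_⟩
    have hn' : (1:ℝ) ≤ n := by exact_mod_cast hn
    refine le_mul_of_one_le_left zero_le ?_
    refine ENNReal.one_le_rpow ?_ (by norm_num)
    rw [← ENNReal.ofReal_one, one_mul]
    exact ENNReal.ofReal_le_ofReal (Real.one_le_rpow (by linarith [abs_nonneg u]) (by linarith))
  · have hpq : r.HolderConjugate (r / (r - 1)) := Real.HolderConjugate.conjExponent hr
    set q := r / (r - 1) with hq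
    have hr1 : 0 < r - 1 := by linarith
    have hr0 : 0 < r := by linarith
    have hq1 : 1 < q := hpq.symm.lt
    have hq2 : q < 2 := by rw [hq, div_lt_iff₀ hr1]; linarith
    have hq0 : 0 < q := by linarith
    obtain ⟨K, hK, hb⟩ := strong_lt2 n hn s hs q hq1 hq2
    refine ⟨K, hK, fun u f => ?_⟩
    refine dual2 r q hpq _ (Tu_meas n u f).aestronglyMeasurable _ (Tu_bdd n u f) _ fun φ => ?_
    rw [Tu_sym]
    refine (holder_enorm q r hpq.symm _ _ (Tu_meas n u φ).aestronglyMeasurable f.continuous.aestronglyMeasurable).trans ?_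
    rw [ENNReal.mul_rpow_of_nonneg _ _ (by positivity), ← ENNReal.rpow_mul, mul_one_div_cancel hr0.ne', ENNReal.rpow_one]
    calc _ ≤ (ENNReal.ofReal (K * (1 + |u|) ^ s) ^ q * ∫⁻ x, ‖φ x‖ₑ ^ q) ^ (1 / q) * (∫⁻ x, ‖f x‖ₑ ^ r) ^ (1 / r) := by
          gcongr
          exact hb u φ
      _ = _ := by
          rw [ENNReal.mul_rpow_of_nonneg _ _ (by positivity), ← ENNReal.rpow_mul, mul_one_div_cancel hq0.ne', ENNReal.rpow_one]
          ring

end MMax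

namespace MMax

lemma ptwise (n : ℕ) (hn : 1 ≤ n) (F h : ℝ → ℂ) (hh : Integrable h)
    (hF : ∀ l : ℝ, 0 < l → F l = ∫ u : ℝ, h u * (l : ℂ) ^ (I * (u : ℂ))) (hm : Measurable h)
    (f : SchwartzMap (EE n) ℂ) (x : EE n) (t : ℝ) (ht : 0 < t) :
    ‖∫ ξ : EE n, F (t * ‖ξ‖ ^ 2) * 𝓕 (⇑f) ξ * cexp (2 * Real.pi * I * (⟪x, ξ⟫ : ℝ))‖ₑ ≤
      ∫⁻ u, ‖h u‖ₑ * ‖Tu n u f x‖ₑ := by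
  have hfi : Integrable (𝓕 (f : EE n → ℂ)) := (𝓕 f : SchwartzMap (EE n) ℂ).integrable
  have ht' : (t : ℂ) ≠ 0 := by exact_mod_cast ht.ne'
  have nt : ∀ u : ℝ, ‖(t:ℂ) ^ (I * (u:ℂ))‖ = 1 := by
    intro u; rw [Complex.norm_cpow_eq_rpow_re_of_pos ht]; simp
  set k : EE n → ℝ → ℂ := fun ξ u => (h u * (t:ℂ) ^ (I * (u:ℂ))) *
    (((‖ξ‖ : ℝ) : ℂ) ^ (2 * (I * (u:ℂ))) * 𝓕 (f : EE n → ℂ) ξ * cexp (2 * Real.pi * I * (⟪x, ξ⟫ : ℝ))) with hk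
  have e1 : ∫ ξ : EE n, F (t * ‖ξ‖ ^ 2) * 𝓕 (⇑f) ξ * cexp (2 * Real.pi * I * (⟪x, ξ⟫ : ℝ)) = ∫ ξ, ∫ u, k ξ u := by
    refine integral_congr_ae ?_
    filter_upwards [ae_ne_zero n hn] with ξ hξ
    rw [hF _ (by positivity), mul_assoc]
    refine (integral_mul_const _ _).symm.trans ?_
    refine integral_congr_ae (ae_of_all _ fun u => ?_)
    simp only [hk]
    have hne : ((‖ξ‖ : ℝ) : ℂ) ≠ 0 := by exact_mod_cast hξ.ne'
    have : ((t * ‖ξ‖ ^ 2 : ℝ) : ℂ) ^ (I * (u:ℂ)) = (t:ℂ) ^ (I * (u:ℂ)) * ((‖ξ‖ : ℝ) : ℂ) ^ (2 * (I * (u:ℂ))) := by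
      rw [ofReal_mul, Complex.mul_cpow_ofReal_nonneg ht.le (by positivity), Complex.ofReal_pow, pow_two,
        Complex.mul_cpow_ofReal_nonneg hξ.le hξ.le, ← Complex.cpow_add _ _ hne, two_mul]
    rw [this]; ring
  have hI : Integrable (Function.uncurry k) (volume.prod volume) := by
    have := hfi.mul_prod hh
    refine this.mono ?_ (ae_of_all _ fun z => ?_)
    · have h1 : AEStronglyMeasurable (fun z : EE n × ℝ => h z.2 * (t:ℂ) ^ (I * (z.2:ℂ))) (volume.prod volume) :=
        Measurable.aestronglyMeasurable ((hm.comp measurable_snd).mul (by fun_prop))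
      have h2 : AEStronglyMeasurable (fun z : EE n × ℝ => ((‖z.1‖ : ℝ) : ℂ) ^ (2 * (I * (z.2:ℂ)))) (volume.prod volume) :=
        Measurable.aestronglyMeasurable (by fun_prop)
      have h3 : AEStronglyMeasurable (fun z : EE n × ℝ => cexp (2 * Real.pi * I * (⟪x, z.1⟫ : ℝ))) (volume.prod volume) :=
        Continuous.aestronglyMeasurable (by fun_prop)
      exact h1.mul ((h2.mul hfi.1.comp_fst).mul h3)
    · simp only [Function.uncurry, hk, norm_mul, norm_char, mul_one, nt]
      rw [mul_comm ‖𝓕 (f : EE n → ℂ) z.1‖]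
      refine mul_le_mul_of_nonneg_left ?_ (norm_nonneg _)
      exact mul_le_of_le_one_left (norm_nonneg _) (norm_m n z.2 z.1)
  rw [e1, integral_integral_swap hI]
  refine (enorm_integral_le_lintegral_enorm _).trans (lintegral_mono fun u => le_of_eq ?_)
  have : ∫ ξ, k ξ u = (h u * (t:ℂ) ^ (I * (u:ℂ))) * Tu n u f x := integral_const_mul _ _
  rw [this, enorm_mul, enorm_mul]
  congr 1
  have : ‖(t:ℂ) ^ (I * (u:ℂ))‖ₑ = 1 := by rw [← ofReal_norm, nt, ENNReal.ofReal_one]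
  rw [this, mul_one]

/-- weighted Jensen inequality -/
lemma jensen (r : ℝ) (hr : 1 < r) (w v : ℝ → ℝ≥0∞) (hw : Measurable w) (hv : Measurable v) :
    (∫⁻ u, w u * v u) ^ r ≤ (∫⁻ u, w u) ^ (r - 1) * ∫⁻ u, w u * v u ^ r := by
  have hpq : r.HolderConjugate (r / (r - 1)) := Real.HolderConjugate.conjExponent hr
  set q := r / (r - 1) with hq
  have hr1 : 0 < r - 1 := by linarith
  have hr0 : 0 < r := by linarith
  have hq0 : 0 < q := by positivity
  have hrq : 1 / q + 1 / r = 1 := by rw [hq]; field_simp; ring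
  have e1 : ∀ u, w u * v u = (w u ^ (1 / q)) * (w u ^ (1 / r) * v u) := by
    intro u
    rw [← mul_assoc, ← ENNReal.rpow_add_of_nonneg _ _ (by positivity) (by positivity), hrq, ENNReal.rpow_one]
  have e2 : ∀ u, (w u ^ (1 / q)) ^ q = w u := by
    intro u; rw [← ENNReal.rpow_mul, one_div_mul_cancel hq0.ne', ENNReal.rpow_one]
  have e3 : ∀ u, (w u ^ (1 / r) * v u) ^ r = w u * v u ^ r := by
    intro u
    rw [ENNReal.mul_rpow_of_nonneg _ _ hr0.le, ← ENNReal.rpow_mul, one_div_mul_cancel hr0.ne', ENNReal.rpow_one]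
  have H := ENNReal.lintegral_mul_le_Lp_mul_Lq volume hpq.symm (f := fun u => w u ^ (1 / q))
    (g := fun u => w u ^ (1 / r) * v u) (hw.pow_const _).aemeasurable ((hw.pow_const _).mul hv).aemeasurable
  simp only [Pi.mul_apply, e2, e3] at H
  simp_rw [← e1] at H
  refine (ENNReal.rpow_le_rpow H hr0.le).trans (le_of_eq ?_)
  rw [ENNReal.mul_rpow_of_nonneg _ _ hr0.le, ← ENNReal.rpow_mul, ← ENNReal.rpow_mul, one_div_mul_cancel hr0.ne', ENNReal.rpow_one]
  congr 2
  rw [hq]; field_simp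

lemma final_bound (n : ℕ) (s r : ℝ) (hr : 1 < r) (K : ℝ) (hK : 0 < K)
    (hb : ∀ (u : ℝ) (f : SchwartzMap (EE n) ℂ),
      ∫⁻ x, ‖Tu n u f x‖ₑ ^ r ≤ ENNReal.ofReal (K * (1 + |u|) ^ s) ^ r * ∫⁻ x, ‖f x‖ₑ ^ r)
    (h : ℝ → ℂ) (hm : Measurable h) (f : SchwartzMap (EE n) ℂ) :
    ∫⁻ x, (∫⁻ u, ‖h u‖ₑ * ‖Tu n u f x‖ₑ) ^ r ≤
      (ENNReal.ofReal K * ∫⁻ u, ENNReal.ofReal ((1 + |u|) ^ s) * ‖h u‖ₑ) ^ r * ∫⁻ x, ‖f x‖ₑ ^ r := by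
  have hr0 : 0 < r := by linarith
  have hA : ∀ u : ℝ, 0 < (1 + |u|) ^ s := fun u => by positivity
  set w : ℝ → ℝ≥0∞ := fun u => ENNReal.ofReal ((1 + |u|) ^ s) * ‖h u‖ₑ with hw
  have hwm : Measurable w := by
    refine Measurable.mul ?_ hm.enorm
    fun_prop
  have hTm : Measurable (fun p : ℝ × EE n => ENNReal.ofReal ((1 + |p.1|) ^ s)⁻¹ * ‖Tu n p.1 f p.2‖ₑ) := by
    refine Measurable.mul ?_ (Tu_meas2 n f).measurable.enorm
    fun_prop
  have hvm : ∀ x, Measurable (fun u : ℝ => ENNReal.ofReal ((1 + |u|) ^ s)⁻¹ * ‖Tu n u f x‖ₑ) := by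
    intro x
    have h1 : Measurable fun u : ℝ => (u, x) := measurable_id.prodMk measurable_const
    have h2 := hTm.comp h1
    simpa only [Function.comp_def] using h2
  have e1 : ∀ x u, ‖h u‖ₑ * ‖Tu n u f x‖ₑ = w u * (ENNReal.ofReal ((1 + |u|) ^ s)⁻¹ * ‖Tu n u f x‖ₑ) := by
    intro x u
    have : ENNReal.ofReal ((1 + |u|) ^ s) * ENNReal.ofReal ((1 + |u|) ^ s)⁻¹ = 1 := by
      rw [← ENNReal.ofReal_mul (hA u).le, mul_inv_cancel₀ (hA u).ne', ENNReal.ofReal_one]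
    calc ‖h u‖ₑ * ‖Tu n u f x‖ₑ = 1 * (‖h u‖ₑ * ‖Tu n u f x‖ₑ) := (one_mul _).symm
      _ = _ := by rw [← this, hw]; ring
  simp_rw [e1]
  calc ∫⁻ x, (∫⁻ u, w u * (ENNReal.ofReal ((1 + |u|) ^ s)⁻¹ * ‖Tu n u f x‖ₑ)) ^ r
      ≤ ∫⁻ x, (∫⁻ u, w u) ^ (r - 1) * ∫⁻ u, w u * (ENNReal.ofReal ((1 + |u|) ^ s)⁻¹ * ‖Tu n u f x‖ₑ) ^ r :=
        lintegral_mono fun x => jensen r hr w _ hwm (hvm x)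
    _ = (∫⁻ u, w u) ^ (r - 1) * ∫⁻ u, ∫⁻ x, w u * (ENNReal.ofReal ((1 + |u|) ^ s)⁻¹ * ‖Tu n u f x‖ₑ) ^ r := by
        have m1 : Measurable (fun p : ℝ × EE n => w p.1 * (ENNReal.ofReal ((1 + |p.1|) ^ s)⁻¹ * ‖Tu n p.1 f p.2‖ₑ) ^ r) :=
          (hwm.comp measurable_fst).mul (hTm.pow_const r)
        have m2 : Measurable (fun x : EE n => ∫⁻ u, w u * (ENNReal.ofReal ((1 + |u|) ^ s)⁻¹ * ‖Tu n u f x‖ₑ) ^ r) :=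
          m1.lintegral_prod_left'
        rw [lintegral_const_mul _ m2]
        congr 1
        exact (lintegral_lintegral_swap m1.aemeasurable).symm
    _ ≤ (∫⁻ u, w u) ^ (r - 1) * ∫⁻ u, w u * (ENNReal.ofReal K ^ r * ∫⁻ x, ‖f x‖ₑ ^ r) := by
        refine mul_le_mul' le_rfl (lintegral_mono fun u => ?_)
        have hTu : Measurable (fun x => (ENNReal.ofReal ((1 + |u|) ^ s)⁻¹ * ‖Tu n u f x‖ₑ) ^ r) :=
          (measurable_const.mul (Tu_meas n u f).measurable.enorm).pow_const r
        rw [lintegral_const_mul _ hTu]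
        refine mul_le_mul' le_rfl ?_
        simp_rw [ENNReal.mul_rpow_of_nonneg _ _ hr0.le]
        rw [lintegral_const_mul' _ _ (ENNReal.rpow_ne_top_of_nonneg hr0.le ENNReal.ofReal_ne_top)]
        refine (mul_le_mul' le_rfl (hb u f)).trans (le_of_eq ?_)
        rw [← mul_assoc, ← ENNReal.mul_rpow_of_nonneg _ _ hr0.le, ← ENNReal.ofReal_mul (inv_nonneg.2 (hA u).le)]
        congr 3
        have := (hA u).ne'
        field_simp
    _ = (∫⁻ u, w u) ^ (r - 1) * (∫⁻ u, w u) ^ (1:ℝ) * (ENNReal.ofReal K ^ r * ∫⁻ x, ‖f x‖ₑ ^ r) := by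
        rw [lintegral_mul_const _ hwm, ENNReal.rpow_one, mul_assoc]
    _ = _ := by
        rw [← ENNReal.rpow_add_of_nonneg _ _ (by linarith) (by norm_num), sub_add_cancel,
          ENNReal.mul_rpow_of_nonneg _ _ hr0.le]
        ring

end MMax

theorem mellin_maximal_Lr_bound (n : ℕ) (hn : 1 ≤ n) (s r : ℝ)
    (hs : (n : ℝ) / 2 < s) (hr : 1 < r) :
    ∃ C : ℝ, 0 < C ∧ ∀ (F : ℝ → ℂ) (h : ℝ → ℂ), Measurable h →
      Integrable (fun u : ℝ => (1 + |u|) ^ s * ‖h u‖) →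
      (∃ M : ℝ, ∀ l : ℝ, 0 < l → ‖F l‖ ≤ M) →
      (∀ l : ℝ, 0 < l → F l = ∫ u : ℝ, h u * (l : ℂ) ^ (Complex.I * (u : ℂ))) →
      ∀ f : SchwartzMap (EuclideanSpace ℝ (Fin n)) ℂ,
        (∫⁻ x, (⨆ (t : ℝ) (_ : 0 < t),
            (‖∫ ξ : EuclideanSpace ℝ (Fin n), F (t * ‖ξ‖ ^ 2) * 𝓕 (⇑f) ξ *
                Complex.exp (2 * Real.pi * Complex.I * (⟪x, ξ⟫ : ℝ))‖₊ : ℝ≥0∞)) ^ r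
            ∂volume) ^ (1 / r)
          ≤ ENNReal.ofReal (C * ∫ u : ℝ, (1 + |u|) ^ s * ‖h u‖) *
              eLpNorm f (ENNReal.ofReal r) volume := by
  obtain ⟨K, hK, hb⟩ := MMax.strong n hn s hs r hr
  refine ⟨K, hK, fun F h hm hint _ hF f => ?_⟩
  have hr0 : 0 < r := by linarith
  have hn' : (1:ℝ) ≤ n := by exact_mod_cast hn
  have hh : Integrable h := by
    refine hint.mono hm.aestronglyMeasurable (ae_of_all _ fun u => ?_)
    rw [norm_mul, norm_norm]
    refine le_mul_of_one_le_left (norm_nonneg _) ?_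
    exact (Real.one_le_rpow (by linarith [abs_nonneg u]) (by linarith)).trans (Real.le_norm_self _)
  have h1 : ∫⁻ x, (⨆ (t : ℝ) (_ : 0 < t),
            (‖∫ ξ : EuclideanSpace ℝ (Fin n), F (t * ‖ξ‖ ^ 2) * 𝓕 (⇑f) ξ *
                Complex.exp (2 * Real.pi * Complex.I * (⟪x, ξ⟫ : ℝ))‖₊ : ℝ≥0∞)) ^ r
      ≤ ∫⁻ x, (∫⁻ u, ‖h u‖ₑ * ‖MMax.Tu n u f x‖ₑ) ^ r :=
    lintegral_mono fun x => ENNReal.rpow_le_rpow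
      (iSup₂_le fun t ht => MMax.ptwise n hn F h hh hF hm f x t ht) hr0.le
  have h2 := h1.trans (MMax.final_bound n s r hr K hK hb h hm f)
  have h3 : ∫⁻ u, ENNReal.ofReal ((1 + |u|) ^ s) * ‖h u‖ₑ = ENNReal.ofReal (∫ u : ℝ, (1 + |u|) ^ s * ‖h u‖) := by
    rw [ofReal_integral_eq_lintegral_ofReal hint (ae_of_all _ fun u => by positivity)]
    refine lintegral_congr fun u => ?_
    rw [ENNReal.ofReal_mul (by positivity), ofReal_norm]
  rw [h3, ← ENNReal.ofReal_mul hK.le] at h2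
  refine (ENNReal.rpow_le_rpow h2 (by positivity)).trans (le_of_eq ?_)
  rw [ENNReal.mul_rpow_of_nonneg _ _ (by positivity), ← ENNReal.rpow_mul, mul_one_div_cancel hr0.ne', ENNReal.rpow_one,
    eLpNorm_eq_lintegral_rpow_enorm_toReal (by simpa using hr0) ENNReal.ofReal_ne_top, ENNReal.toReal_ofReal hr0.le]
end

section
/- Let n ≥ 1 be an integer and r > 0. Suppose F : ℝ → ℂ has the form F(λ) = ∫_{−r}^{r} G(t) cos(λ t) dt for some integrable function G on [−r, r] (so F is even, bounded and continuous). Then for every x₀ ∈ ℝⁿ, every s > 0 and every Schwartz function f on ℝⁿ with f(y) = 0 whenever |y − x₀| > s, the function x ↦ ∫_{ℝⁿ} F(2π|ξ|) f̂(ξ) e^{2πi⟨x,ξ⟩} dξ vanishes at every x with |x − x₀| > s + r. -/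
open MeasureTheory Complex Filter
open scoped FourierTransform RealInnerProductSpace ENNReal Topology

/-- If `N v_N → a` and `f` is differentiable at `0` with `f 0 = 0`, then `N f (v_N) → f' a`. -/
lemma fsp_lim {f : ℝ → ℝ} {f' : ℝ} (hf : HasDerivAt f f' 0) (h0 : f 0 = 0) {v : ℕ → ℝ} {a : ℝ}
    (hv : Tendsto (fun N : ℕ => (N : ℝ) * v N) atTop (𝓝 a)) :
    Tendsto (fun N : ℕ => (N : ℝ) * f (v N)) atTop (𝓝 (a * f')) := by
  have hv0 : Tendsto v atTop (𝓝 0) := by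
    have h1 : Tendsto (fun N : ℕ => ((N : ℝ))⁻¹ * ((N : ℝ) * v N)) atTop (𝓝 (0 * a)) :=
      tendsto_inv_atTop_nhds_zero_nat.mul hv
    rw [zero_mul] at h1
    refine h1.congr' ?_
    filter_upwards [eventually_gt_atTop 0] with N hN
    have : (N : ℝ) ≠ 0 := by positivity
    field_simp
  have := (hasFDerivWithinAt_univ.2 hf.hasFDerivAt).lim (c := fun N : ℕ => (N : ℝ)) hv0
    (Eventually.of_forall fun _ => Set.mem_univ _) hv
  simpa [h0] using this

/-- `N² (1 - cos (a / N)) → a² / 2`. -/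
lemma fsp_cos (a : ℝ) :
    Tendsto (fun N : ℕ => (N : ℝ) ^ 2 * (1 - Real.cos (a / N))) atTop (𝓝 (a ^ 2 / 2)) := by
  have h1 : Tendsto (fun N : ℕ => (N : ℝ) * (a / 2 / N)) atTop (𝓝 (a / 2)) := by
    refine tendsto_nhds_of_eventually_eq ?_
    filter_upwards [eventually_gt_atTop 0] with N hN
    have : (N : ℝ) ≠ 0 := by positivity
    field_simp
  have h2 := fsp_lim (Real.hasDerivAt_sin 0) Real.sin_zero h1
  have h3 := (h2.pow 2).const_mul 2
  have e : 2 * (a / 2 * Real.cos 0) ^ 2 = a ^ 2 / 2 := by rw [Real.cos_zero]; ring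
  rw [e] at h3
  refine h3.congr fun N => ?_
  have : Real.cos (a / N) = 1 - 2 * Real.sin (a / 2 / N) ^ 2 := by
    have : a / N = 2 * (a / 2 / N) := by ring
    rw [this, Real.cos_two_mul, Real.cos_sq']; ring
  rw [this]; ring

lemma fsp_prod {ι : Type*} (u : Finset ι) (a : ι → ℝ) :
    Tendsto (fun N : ℕ => (N : ℝ) ^ 2 * (1 - ∏ i ∈ u, Real.cos (a i / N))) atTop
      (𝓝 ((∑ i ∈ u, a i ^ 2) / 2)) := by
  classical
  induction u using Finset.induction_on with
  | empty => simp
  | insert i u hi ih =>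
    have h1 : Tendsto (fun N : ℕ => Real.cos (a i / N)) atTop (𝓝 1) := by
      have : Tendsto (fun N : ℕ => a i / (N : ℝ)) atTop (𝓝 0) := tendsto_const_div_atTop_nhds_zero_nat _
      have h := (Real.continuous_cos.tendsto 0).comp this
      rw [Real.cos_zero] at h
      exact h
    have h2 := (fsp_cos (a i)).add (h1.mul ih)
    rw [Finset.sum_insert hi]
    have e : a i ^ 2 / 2 + 1 * ((∑ i ∈ u, a i ^ 2) / 2) = (a i ^ 2 + ∑ i ∈ u, a i ^ 2) / 2 := by ring
    rw [e] at h2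
    refine h2.congr fun N => ?_
    rw [Finset.prod_insert hi]; ring

lemma fsp_arccos {c : ℕ → ℝ} (hc : ∀ N, |c N| ≤ 1) {L : ℝ} (hL : 0 ≤ L)
    (h : Tendsto (fun N : ℕ => (N : ℝ) ^ 2 * (1 - c N)) atTop (𝓝 (L ^ 2 / 2))) :
    Tendsto (fun N : ℕ => (N : ℝ) * Real.arccos (c N)) atTop (𝓝 L) := by
  have h1 : Tendsto (fun N : ℕ => (N : ℝ) * Real.sin (Real.arccos (c N) / 2)) atTop (𝓝 (L / 2)) := by
    have h2 := (h.div_const 2).sqrt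
    have e : √(L ^ 2 / 2 / 2) = L / 2 := by
      rw [show L ^ 2 / 2 / 2 = (L / 2) ^ 2 by ring, Real.sqrt_sq (by positivity)]
    rw [e] at h2
    refine h2.congr fun N => ?_
    have hs : 0 ≤ Real.sin (Real.arccos (c N) / 2) :=
      Real.sin_nonneg_of_nonneg_of_le_pi (by have := Real.arccos_nonneg (c N); positivity)
        (by have := Real.arccos_le_pi (c N); have := Real.arccos_nonneg (c N); linarith)
    have hcN : c N = 1 - 2 * Real.sin (Real.arccos (c N) / 2) ^ 2 := by
      have h3 := Real.cos_arccos (abs_le.1 (hc N)).1 (abs_le.1 (hc N)).2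
      have h4 := Real.cos_two_mul (Real.arccos (c N) / 2)
      rw [Real.cos_sq', mul_div_cancel₀ _ (two_ne_zero), h3] at h4
      linarith
    have e2 : (N : ℝ) ^ 2 * (1 - c N) / 2 = ((N : ℝ) * Real.sin (Real.arccos (c N) / 2)) ^ 2 := by
      rw [mul_pow]
      linear_combination (-(N : ℝ) ^ 2 / 2) * hcN
    rw [e2, Real.sqrt_sq (by positivity)]
  have h2 := fsp_lim ((Real.hasStrictDerivAt_arcsin (x := 0) (by norm_num) (by norm_num)).hasDerivAt)
    Real.arcsin_zero h1
  have h3 := h2.const_mul 2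
  have e : 2 * (L / 2 * (1 / √(1 - (0 : ℝ) ^ 2))) = L := by simp; ring
  rw [e] at h3
  refine h3.congr fun N => ?_
  rw [Real.arcsin_sin]
  · ring
  · have := Real.arccos_nonneg (c N); have := Real.pi_pos; linarith
  · have := Real.arccos_le_pi (c N); linarith

section trig
variable {E : Type*} [NormedAddCommGroup E] [InnerProductSpace ℝ E]

/-- Plane waves `ξ ↦ e^{2πi⟨τ,ξ⟩}` with `|⟨τ, ω⟩| ≤ R`. -/
def fspWaves (ω : E) (R : ℝ) : Set (E → ℂ) :=
  {g | ∃ τ : E, |⟪τ, ω⟫| ≤ R ∧ g = fun ξ => Complex.exp (2 * Real.pi * Complex.I * (⟪τ, ξ⟫ : ℝ))}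

/-- Trigonometric polynomials with frequencies in a slab. -/
def fspTrig (ω : E) (R : ℝ) : Submodule ℂ (E → ℂ) := Submodule.span ℂ (fspWaves ω R)

lemma fspTrig_mono {ω : E} {R R' : ℝ} (h : R ≤ R') {g : E → ℂ} (hg : g ∈ fspTrig ω R) :
    g ∈ fspTrig ω R' := by
  refine Submodule.span_mono ?_ hg
  rintro _ ⟨τ, h1, rfl⟩
  exact ⟨τ, h1.trans h, rfl⟩

lemma fspTrig_mul {ω : E} {R R' : ℝ} {g g' : E → ℂ} (hg : g ∈ fspTrig ω R)
    (hg' : g' ∈ fspTrig ω R') : g * g' ∈ fspTrig ω (R + R') := by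
  have h := Submodule.mul_mem_mul hg hg'
  rw [fspTrig, fspTrig, Submodule.span_mul_span] at h
  refine Submodule.span_mono ?_ h
  rintro _ ⟨_, ⟨τ, h1, rfl⟩, _, ⟨σ, h2, rfl⟩, rfl⟩
  refine ⟨τ + σ, ?_, ?_⟩
  · rw [inner_add_left]
    exact (abs_add_le _ _).trans (add_le_add h1 h2)
  · funext ξ
    simp only [Pi.mul_apply]
    rw [← Complex.exp_add, inner_add_left]
    push_cast; ring_nf

lemma fspTrig_one (ω : E) {R : ℝ} (hR : 0 ≤ R) : (fun _ => 1 : E → ℂ) ∈ fspTrig ω R := by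
  refine Submodule.subset_span ⟨0, by simpa using hR, ?_⟩
  funext ξ; simp

lemma fspTrig_cos (ω v : E) (a : ℝ) {R : ℝ} (hR : |a * ⟪v, ω⟫| ≤ R) :
    (fun ξ => ((Real.cos (2 * Real.pi * a * ⟪v, ξ⟫) : ℝ) : ℂ) : E → ℂ) ∈ fspTrig ω R := by
  have h1 : (fun ξ => Complex.exp (2 * Real.pi * Complex.I * (⟪a • v, ξ⟫ : ℝ)) : E → ℂ) ∈ fspTrig ω R :=
    Submodule.subset_span ⟨a • v, by rwa [real_inner_smul_left], rfl⟩
  have h2 : (fun ξ => Complex.exp (2 * Real.pi * Complex.I * (⟪-(a • v), ξ⟫ : ℝ)) : E → ℂ) ∈ fspTrig ω R :=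
    Submodule.subset_span ⟨-(a • v), by rwa [inner_neg_left, real_inner_smul_left, abs_neg], rfl⟩
  have h3 := (fspTrig ω R).smul_mem (1 / 2 : ℂ) ((fspTrig ω R).add_mem h1 h2)
  convert h3 using 1
  funext ξ
  simp only [Pi.smul_apply, Pi.add_apply, smul_eq_mul, Complex.ofReal_cos, Complex.cos, inner_neg_left,
    real_inner_smul_left]
  push_cast
  ring_nf

lemma fspTrig_prod {ι : Type*} (u : Finset ι) (ω : E) (v : ι → E) (a : ℝ) :
    (fun ξ => ((∏ i ∈ u, Real.cos (2 * Real.pi * a * ⟪v i, ξ⟫) : ℝ) : ℂ) : E → ℂ) ∈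
      fspTrig ω (∑ i ∈ u, |a * ⟪v i, ω⟫|) := by
  classical
  induction u using Finset.induction_on with
  | empty => simpa using fspTrig_one ω le_rfl
  | insert i u hi ih =>
    have := fspTrig_mul (fspTrig_cos ω (v i) a le_rfl) ih
    rw [Finset.sum_insert hi]
    convert this using 1
    funext ξ
    simp [Finset.prod_insert hi]

lemma fspTrig_cheb {ω : E} {R : ℝ} (hR : 0 ≤ R) {c : E → ℝ} (hc1 : ∀ ξ, |c ξ| ≤ 1)
    (hc : (fun ξ => (c ξ : ℂ)) ∈ fspTrig ω R) (k : ℕ) :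
    (fun ξ => ((Real.cos (k * Real.arccos (c ξ)) : ℝ) : ℂ)) ∈ fspTrig ω (k * R) := by
  induction k using Nat.twoStepInduction with
  | zero => simpa using fspTrig_one ω le_rfl
  | one =>
    simp only [Nat.cast_one, one_mul]
    convert hc using 3 with ξ
    exact Real.cos_arccos (abs_le.1 (hc1 ξ)).1 (abs_le.1 (hc1 ξ)).2
  | more k ih1 ih2 =>
    have h1 := (fspTrig ω _).smul_mem (2 : ℂ) (fspTrig_mul hc ih2)
    have h2 := fspTrig_mono (R' := R + ((k + 1 : ℕ) : ℝ) * R) (by push_cast; nlinarith) ih1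
    have h3 := (fspTrig ω _).sub_mem h1 h2
    have e : R + ((k + 1 : ℕ) : ℝ) * R = ((k + 2 : ℕ) : ℝ) * R := by push_cast; ring
    rw [e] at h3
    convert h3 using 1
    funext ξ
    simp only [Pi.smul_apply, Pi.sub_apply, Pi.mul_apply, smul_eq_mul]
    rw [← Complex.ofReal_mul, ← Complex.ofReal_ofNat, ← Complex.ofReal_mul, ← Complex.ofReal_sub]
    congr 1
    have hc2 := Real.cos_arccos (abs_le.1 (hc1 ξ)).1 (abs_le.1 (hc1 ξ)).2
    set θ := Real.arccos (c ξ)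
    rw [← hc2]
    push_cast
    have e1 : ((k : ℝ) + 2) * θ = (k + 1) * θ + θ := by ring
    have e2 : (k : ℝ) * θ = (k + 1) * θ - θ := by ring
    rw [e1, e2, Real.cos_add, Real.cos_sub]; ring

end trig

lemma fsp_wave {n : ℕ} (hn : 1 ≤ n) (x₀ : EuclideanSpace ℝ (Fin n)) (s : ℝ)
    (f : SchwartzMap (EuclideanSpace ℝ (Fin n)) ℂ) (hs : 0 < s)
    (hf : ∀ y : EuclideanSpace ℝ (Fin n), s < ‖y - x₀‖ → f y = 0)
    (x : EuclideanSpace ℝ (Fin n)) (t : ℝ) (hx : s + |t| < ‖x - x₀‖) :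
    ∫ ξ : EuclideanSpace ℝ (Fin n),
        Complex.cos ((2 * Real.pi * ‖ξ‖ : ℝ) * (t : ℂ)) * (𝓕 (⇑f) ξ *
          Complex.exp (2 * Real.pi * Complex.I * (⟪x, ξ⟫ : ℝ))) = 0 := by
  have hx0 : 0 < ‖x - x₀‖ := by have := abs_nonneg t; linarith
  set ω : EuclideanSpace ℝ (Fin n) := ‖x - x₀‖⁻¹ • (x - x₀) with hω
  have hω1 : ‖ω‖ = 1 := by
    rw [hω, norm_smul, norm_inv, norm_norm, inv_mul_cancel₀ hx0.ne']
  have hxω : ⟪x - x₀, ω⟫ = ‖x - x₀‖ := by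
    rw [hω, real_inner_smul_right, real_inner_self_eq_norm_sq]; field_simp
  have hFi : Integrable (𝓕 (⇑f)) := by
    have := (𝓕 f).integrable (μ := volume)
    rwa [SchwartzMap.fourier_coe] at this
  have hinv : 𝓕⁻ (𝓕 (⇑f)) = ⇑f := f.continuous.fourierInv_fourier_eq f.integrable hFi
  set h : EuclideanSpace ℝ (Fin n) → ℂ := fun ξ => 𝓕 (⇑f) ξ *
          Complex.exp (2 * Real.pi * Complex.I * (⟪x, ξ⟫ : ℝ)) with hh
  have hnorm : ∀ ξ τ : EuclideanSpace ℝ (Fin n),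
      ‖Complex.exp (2 * Real.pi * Complex.I * (⟪τ, ξ⟫ : ℝ))‖ = 1 := by
    intro ξ τ
    have : (2 * Real.pi * Complex.I * (⟪τ, ξ⟫ : ℝ) : ℂ)
      = ((2 * Real.pi * ⟪τ, ξ⟫ : ℝ) : ℂ) * Complex.I := by push_cast; ring
    rw [this, Complex.norm_exp_ofReal_mul_I]
  have hhi : Integrable h := by
    refine hFi.mul_bdd (c := 1) (Continuous.aestronglyMeasurable (by fun_prop)) ?_
    exact Eventually.of_forall fun ξ => (hnorm ξ x).le
  -- vanishing for trigonometric polynomials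
  have key : ∀ g ∈ fspTrig ω |t|, Integrable (fun ξ => g ξ * h ξ) ∧ ∫ ξ, g ξ * h ξ = 0 := by
    intro g hg
    induction hg using Submodule.span_induction with
    | mem g hg =>
      obtain ⟨τ, hτ, rfl⟩ := hg
      refine ⟨?_, ?_⟩
      · refine hhi.bdd_mul (c := 1) (Continuous.aestronglyMeasurable (by fun_prop)) ?_
        exact Eventually.of_forall fun ξ => (hnorm ξ τ).le
      · have h0 : f (x + τ) = 0 := by
          apply hf
          have h1 : ⟪x + τ - x₀, ω⟫ = ‖x - x₀‖ + ⟪τ, ω⟫ := by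
            rw [show x + τ - x₀ = (x - x₀) + τ by abel, inner_add_left, hxω]
          have h2 := real_inner_le_norm (x + τ - x₀) ω
          rw [hω1, mul_one, h1] at h2
          have := (abs_le.1 hτ).1
          linarith
        rw [← hinv, Real.fourierInv_eq'] at h0
        rw [← h0]
        congr 1
        funext ξ
        rw [hh, smul_eq_mul, inner_add_right, real_inner_comm x ξ, real_inner_comm τ ξ]
        have e : ((2 * Real.pi * (⟪x, ξ⟫ + ⟪τ, ξ⟫) : ℝ) : ℂ) * Complex.I
          = 2 * Real.pi * Complex.I * (⟪τ, ξ⟫ : ℝ) + 2 * Real.pi * Complex.I * (⟪x, ξ⟫ : ℝ) := by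
          push_cast; ring
        simp only [real_inner_comm] at e ⊢
        rw [e, Complex.exp_add]; ring
    | zero => simp
    | add g g' _ _ ih ih' =>
      simp only [Pi.add_apply, add_mul]
      exact ⟨ih.1.add ih'.1, by rw [integral_add ih.1 ih'.1, ih.2, ih'.2, add_zero]⟩
    | smul a g _ ih =>
      simp only [Pi.smul_apply, smul_eq_mul, mul_assoc]
      exact ⟨ih.1.const_mul a, by rw [integral_const_mul, ih.2, mul_zero]⟩
  -- an orthonormal basis containing `ω`
  let i₀ : Fin n := ⟨0, hn⟩
  obtain ⟨b, hb⟩ := Orthonormal.exists_orthonormalBasis_extension_of_card_eq (𝕜 := ℝ)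
    (E := EuclideanSpace ℝ (Fin n)) (ι := Fin n) (by simp) (v := fun _ => ω) (s := {i₀}) (by
      rw [orthonormal_iff_ite]
      rintro ⟨i, hi⟩ ⟨j, hj⟩
      rw [Set.mem_singleton_iff] at hi hj
      subst hi hj
      simp [hω1])
  have hb0 : b i₀ = ω := hb i₀ rfl
  have hsum : ∀ a : ℝ, ∑ i, |a * ⟪b i, ω⟫| = |a| := by
    intro a
    rw [← hb0, Finset.sum_eq_single i₀]
    · simp
    · intro j _ hj
      rw [b.inner_eq_ite, if_neg hj]; simp
    · simp
  set c : ℕ → EuclideanSpace ℝ (Fin n) → ℝ := fun N ξ =>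
    ∏ i, Real.cos (2 * Real.pi * (t / N) * ⟪b i, ξ⟫) with hc
  have hc1 : ∀ N ξ, |c N ξ| ≤ 1 := by
    intro N ξ
    rw [hc, Finset.abs_prod]
    exact Finset.prod_le_one (fun _ _ => abs_nonneg _) (fun _ _ => Real.abs_cos_le_one _)
  have hmem : ∀ N : ℕ, (fun ξ => ((Real.cos (N * Real.arccos (c N ξ)) : ℝ) : ℂ)) ∈ fspTrig ω |t| := by
    intro N
    have h1 := fspTrig_prod Finset.univ ω b (t / N)
    rw [hsum] at h1
    refine fspTrig_mono ?_ (fspTrig_cheb (abs_nonneg _) (hc1 N) h1 N)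
    rcases Nat.eq_zero_or_pos N with rfl | hN
    · simp
    · have : (0 : ℝ) < N := by exact_mod_cast hN
      rw [abs_div, abs_of_pos this]
      exact le_of_eq (by field_simp)
  have hlim : ∀ ξ, Tendsto (fun N : ℕ => ((Real.cos (N * Real.arccos (c N ξ)) : ℝ) : ℂ)) atTop
      (𝓝 (Complex.cos ((2 * Real.pi * ‖ξ‖ : ℝ) * (t : ℂ)))) := by
    intro ξ
    have h1 := fsp_prod Finset.univ (fun i => 2 * Real.pi * t * ⟪b i, ξ⟫)
    have e : ∑ i, (2 * Real.pi * t * ⟪b i, ξ⟫) ^ 2 = (2 * Real.pi * ‖ξ‖ * |t|) ^ 2 := by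
      simp_rw [mul_pow _ (inner ℝ _ _)]
      rw [← Finset.mul_sum, b.sum_sq_inner_right, mul_pow _ |t|, sq_abs]; ring
    rw [e] at h1
    have h2 := fsp_arccos (c := fun N => c N ξ) (fun N => hc1 N ξ) (by positivity) (h1.congr fun N => by
      rw [hc]
      congr 2
      refine Finset.prod_congr rfl fun i _ => ?_
      congr 1; ring)
    have h3 := (Real.continuous_cos.tendsto _).comp h2
    have e2 : Real.cos (2 * Real.pi * ‖ξ‖ * |t|) = Real.cos (2 * Real.pi * ‖ξ‖ * t) := by
      rcases abs_choice t with h | h <;> rw [h]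
      rw [mul_neg, Real.cos_neg]
    rw [e2] at h3
    have h4 := (Complex.continuous_ofReal.tendsto _).comp h3
    rw [Complex.ofReal_cos, Complex.ofReal_mul] at h4
    exact h4
  have hD : Tendsto (fun N : ℕ => ∫ ξ, ((Real.cos (N * Real.arccos (c N ξ)) : ℝ) : ℂ) * h ξ) atTop
      (𝓝 (∫ ξ, Complex.cos ((2 * Real.pi * ‖ξ‖ : ℝ) * (t : ℂ)) * h ξ)) := by
    refine tendsto_integral_of_dominated_convergence (fun ξ => ‖h ξ‖)
      (fun N => (key _ (hmem N)).1.aestronglyMeasurable) hhi.norm ?_ ?_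
    · intro N
      refine Eventually.of_forall fun ξ => ?_
      rw [norm_mul, Complex.norm_real, Real.norm_eq_abs]
      exact mul_le_of_le_one_left (norm_nonneg _) (Real.abs_cos_le_one _)
    · exact Eventually.of_forall fun ξ => (hlim ξ).mul_const _
  refine tendsto_nhds_unique hD ?_
  simp_rw [fun N => (key _ (hmem N)).2]
  exact tendsto_const_nhds


theorem finite_speed_of_propagation_multiplier (n : ℕ) (hn : 1 ≤ n) (r : ℝ) (hr : 0 < r)
    (G : ℝ → ℂ) (hG : IntegrableOn G (Set.Icc (-r) r))
    (F : ℝ → ℂ)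
    (hF : ∀ l : ℝ, F l = ∫ t in Set.Icc (-r) r, G t * Complex.cos ((l : ℂ) * (t : ℂ)))
    (x₀ : EuclideanSpace ℝ (Fin n)) (s : ℝ) (hs : 0 < s)
    (f : SchwartzMap (EuclideanSpace ℝ (Fin n)) ℂ)
    (hf : ∀ y : EuclideanSpace ℝ (Fin n), s < ‖y - x₀‖ → f y = 0)
    (x : EuclideanSpace ℝ (Fin n)) (hx : s + r < ‖x - x₀‖) :
    ∫ ξ : EuclideanSpace ℝ (Fin n),
        F (2 * Real.pi * ‖ξ‖) * 𝓕 (⇑f) ξ *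
          Complex.exp (2 * Real.pi * Complex.I * (⟪x, ξ⟫ : ℝ)) = 0 := by
  have hFi : Integrable (𝓕 (⇑f)) := by
    have := (𝓕 f).integrable (μ := volume)
    rwa [SchwartzMap.fourier_coe] at this
  set h : EuclideanSpace ℝ (Fin n) → ℂ := fun ξ => 𝓕 (⇑f) ξ *
          Complex.exp (2 * Real.pi * Complex.I * (⟪x, ξ⟫ : ℝ)) with hh
  have hhi : Integrable h := by
    refine hFi.mul_bdd (c := 1) (Continuous.aestronglyMeasurable (by fun_prop)) ?_
    refine Eventually.of_forall fun ξ => le_of_eq ?_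
    have : (2 * Real.pi * Complex.I * (⟪x, ξ⟫ : ℝ) : ℂ)
      = ((2 * Real.pi * ⟪x, ξ⟫ : ℝ) : ℂ) * Complex.I := by push_cast; ring
    rw [this, Complex.norm_exp_ofReal_mul_I]
  have e1 : ∀ ξ : EuclideanSpace ℝ (Fin n), F (2 * Real.pi * ‖ξ‖) * 𝓕 (⇑f) ξ *
          Complex.exp (2 * Real.pi * Complex.I * (⟪x, ξ⟫ : ℝ)) =
      ∫ t in Set.Icc (-r) r, Complex.cos ((2 * Real.pi * ‖ξ‖ : ℝ) * (t : ℂ)) * (h ξ * G t) := by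
    intro ξ
    rw [mul_assoc, hF, ← integral_mul_const]
    refine integral_congr_ae (Eventually.of_forall fun t => ?_)
    simp only [hh]; ring
  simp_rw [e1]
  rw [integral_integral_swap]
  · refine setIntegral_eq_zero_of_forall_eq_zero fun t ht => ?_
    have htr : |t| ≤ r := abs_le.2 ht
    have h0 := fsp_wave hn x₀ s f hs hf x t (by linarith)
    simp_rw [← mul_assoc]
    rw [integral_mul_const]
    simp_rw [← mul_assoc] at h0
    simp_rw [hh, ← mul_assoc]
    rw [h0, zero_mul]
  · refine (hhi.mul_prod hG).bdd_mul (c := 1) (Continuous.aestronglyMeasurable (by fun_prop)) ?_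
    refine Eventually.of_forall fun p => ?_
    rw [← Complex.ofReal_mul, ← Complex.ofReal_cos, Complex.norm_real, Real.norm_eq_abs]
    exact Real.abs_cos_le_one _
end
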